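/- Let R and R′ be Legendrian equivalent rectangular diagrams, and let α be a rectangular path whose ends lie on edges of R. Write R = β ∪ γ ∪ δ, where β and γ are the two rectangular paths into which the ends of α divide the connected component of R containing those edges, and δ is the union of the remaining components. Then there exists a rectangular path α′ whose ends lie on edges of R′ and a decomposition R′ = β′ ∪ γ′ ∪ δ′ such that the rectangular Θ-diagrams (α, β, γ, δ) and (α′, β′, γ′, δ′) are Legendrian equivalent. -/

import Mathlib

noncomputable section
open scoped Classical

/-- A point of the plane. -/
abbrev Pt : Type := ℝ × ℝ

/-- A rectangular diagram: a finite set of points in the plane such that every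
vertical or horizontal straight line contains either no points or exactly two points of it. -/
def IsDiagram (R : Finset Pt) : Prop :=
  ∀ p ∈ R, (R.filter (fun q => q.1 = p.1)).card = 2 ∧
    (R.filter (fun q => q.2 = p.2)).card = 2

/-- The complexity of a rectangular diagram: the number of its vertical edges. -/
def complexity (R : Finset Pt) : ℕ := (R.image Prod.fst).card

/-- Moving the vertical line `x0` to position `x1` (all other points unchanged). -/
def vmap (x0 x1 : ℝ) : Pt → Pt := fun p => if p.1 = x0 then (x1, p.2) else p

/-- Moving the horizontal line `y0` to position `y1`. -/
def hmap (y0 y1 : ℝ) : Pt → Pt := fun p => if p.2 = y0 then (p.1, y1) else p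

/-- Exchanging the vertical lines `x1` and `x2`. -/
def swapv (x1 x2 : ℝ) : Pt → Pt := fun p =>
  if p.1 = x1 then (x2, p.2) else if p.1 = x2 then (x1, p.2) else p

/-- Exchanging the horizontal lines `y1` and `y2`. -/
def swaph (y1 y2 : ℝ) : Pt → Pt := fun p =>
  if p.2 = y1 then (p.1, y2) else if p.2 = y2 then (p.1, y1) else p

/-- `f` realizes a cyclic permutation on the finite set `R`:  an extreme (left/right/top/bottom)
edge is moved to the opposite side of the diagram. -/
def CyclicData (R : Finset Pt) (f : Pt → Pt) : Prop :=
  (∃ x0 x1 : ℝ, (∃ p ∈ R, p.1 = x0) ∧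
     (((∀ p ∈ R, x0 ≤ p.1) ∧ ∀ p ∈ R, p.1 ≠ x0 → p.1 < x1) ∨
      ((∀ p ∈ R, p.1 ≤ x0) ∧ ∀ p ∈ R, p.1 ≠ x0 → x1 < p.1)) ∧
     f = vmap x0 x1) ∨
  (∃ y0 y1 : ℝ, (∃ p ∈ R, p.2 = y0) ∧
     (((∀ p ∈ R, y0 ≤ p.2) ∧ ∀ p ∈ R, p.2 ≠ y0 → p.2 < y1) ∨
      ((∀ p ∈ R, p.2 ≤ y0) ∧ ∀ p ∈ R, p.2 ≠ y0 → y1 < p.2)) ∧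
     f = hmap y0 y1)

/-- The pairs of second coordinates of the points of `R` on the vertical lines `x1`, `x2`
do not interleave. -/
def NoInterleaveV (R : Finset Pt) (x1 x2 : ℝ) : Prop :=
  ∀ p ∈ R, ∀ p' ∈ R, ∀ q ∈ R, ∀ q' ∈ R,
    p.1 = x1 → p'.1 = x1 → q.1 = x2 → q'.1 = x2 →
    ¬ ((p.2 < q.2 ∧ q.2 < p'.2 ∧ p'.2 < q'.2) ∨
       (q.2 < p.2 ∧ p.2 < q'.2 ∧ q'.2 < p'.2))

/-- The pairs of first coordinates of the points of `R` on the horizontal lines `y1`, `y2`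
do not interleave. -/
def NoInterleaveH (R : Finset Pt) (y1 y2 : ℝ) : Prop :=
  ∀ p ∈ R, ∀ p' ∈ R, ∀ q ∈ R, ∀ q' ∈ R,
    p.2 = y1 → p'.2 = y1 → q.2 = y2 → q'.2 = y2 →
    ¬ ((p.1 < q.1 ∧ q.1 < p'.1 ∧ p'.1 < q'.1) ∨
       (q.1 < p.1 ∧ p.1 < q'.1 ∧ q'.1 < p'.1))

/-- `f` realizes a commutation on `R`: two neighboring parallel edges, whose pairs of endpoints
projected to the common axis are disjoint and do not interleave, are exchanged. -/
def CommData (R : Finset Pt) (f : Pt → Pt) : Prop :=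
  (∃ x1 x2 : ℝ, x1 ≠ x2 ∧ (∃ p ∈ R, p.1 = x1) ∧ (∃ p ∈ R, p.1 = x2) ∧
     (∀ p ∈ R, ¬ (min x1 x2 < p.1 ∧ p.1 < max x1 x2)) ∧
     (∀ p ∈ R, ∀ q ∈ R, p.1 = x1 → q.1 = x2 → p.2 ≠ q.2) ∧
     NoInterleaveV R x1 x2 ∧ f = swapv x1 x2) ∨
  (∃ y1 y2 : ℝ, y1 ≠ y2 ∧ (∃ p ∈ R, p.2 = y1) ∧ (∃ p ∈ R, p.2 = y2) ∧
     (∀ p ∈ R, ¬ (min y1 y2 < p.2 ∧ p.2 < max y1 y2)) ∧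
     (∀ p ∈ R, ∀ q ∈ R, p.2 = y1 → q.2 = y2 → p.1 ≠ q.1) ∧
     NoInterleaveH R y1 y2 ∧ f = swaph y1 y2)

/-- A cyclic permutation move of rectangular diagrams. -/
def CyclicMove (R R' : Finset Pt) : Prop :=
  IsDiagram R ∧ IsDiagram R' ∧ ∃ f, CyclicData R f ∧ R' = R.image f

/-- A commutation move of rectangular diagrams. -/
def CommMove (R R' : Finset Pt) : Prop :=
  IsDiagram R ∧ IsDiagram R' ∧ ∃ f, CommData R f ∧ R' = R.image f

/-- The type of a stabilization/destabilization. -/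
inductive StabType
  | I : StabType
  | II : StabType
deriving DecidableEq

/-- Result of replacing the vertex `(x, y)` by the three other vertices of the small square
with corners `(x, y)`, `(x', y)`, `(x, y')`, `(x', y')`. -/
def stabSet (x y x' y' : ℝ) (C : Finset Pt) : Finset Pt :=
  insert ((x', y) : Pt) (insert ((x, y') : Pt) (insert ((x', y') : Pt) (C.erase (x, y))))

/-- The data of a stabilization of `R` at the vertex `(x, y)`, yielding `R'`:  the vertex is
replaced by the three other corners of a small square (`x'`, `y'` are fresh coordinates,
and no coordinate of `R` lies strictly between `x, x'` nor between `y, y'`). -/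
def StabData (x y x' y' : ℝ) (R R' : Finset Pt) : Prop :=
  (x, y) ∈ R ∧ x ≠ x' ∧ y ≠ y' ∧
  (∀ p ∈ R, p.1 ≠ x') ∧ (∀ p ∈ R, p.2 ≠ y') ∧
  (∀ p ∈ R, ¬ (min x x' < p.1 ∧ p.1 < max x x')) ∧
  (∀ p ∈ R, ¬ (min y y' < p.2 ∧ p.2 < max y y')) ∧
  R' = stabSet x y x' y' R

/-- A stabilization of type `t` occurring at the vertex `v` of `R`.  The type is I when the two
new short edges point from their common vertex downward-and-leftward or upward-and-rightward. -/
def StabMoveAt (t : StabType) (v : Pt) (R R' : Finset Pt) : Prop :=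
  IsDiagram R ∧ IsDiagram R' ∧
  ∃ x' y' : ℝ, StabData v.1 v.2 x' y' R R' ∧
    (t = StabType.I ↔ 0 < (v.1 - x') * (v.2 - y'))

/-- A stabilization of type `t`. -/
def StabMove (t : StabType) (R R' : Finset Pt) : Prop :=
  ∃ v : Pt, StabMoveAt t v R R'

/-- A complexity-preserving elementary move: a cyclic permutation or a commutation. -/
def ExchangeMove (R R' : Finset Pt) : Prop := CyclicMove R R' ∨ CommMove R R'

/-- An elementary move of rectangular diagrams: a cyclic permutation, a commutation,
a stabilization or a destabilization. -/
def ElemMove (R R' : Finset Pt) : Prop :=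
  CyclicMove R R' ∨ CommMove R R' ∨ ∃ t, StabMove t R R' ∨ StabMove t R' R

/-- An elementary move involving no stabilization or destabilization of type other than `t`. -/
def LegMove (t : StabType) (R R' : Finset Pt) : Prop :=
  CyclicMove R R' ∨ CommMove R R' ∨ StabMove t R R' ∨ StabMove t R' R

/-- Legendrian equivalence: connected by a finite sequence of elementary moves containing
no type II stabilizations or destabilizations. -/
def LegEquiv : Finset Pt → Finset Pt → Prop :=
  Relation.ReflTransGen (LegMove StabType.I)

/-- Connected by a finite sequence of elementary moves containing
no type I stabilizations or destabilizations. -/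
def MirrorEquiv : Finset Pt → Finset Pt → Prop :=
  Relation.ReflTransGen (LegMove StabType.II)

/-- An elementary simplification of type `t` : a finite sequence of cyclic permutations and
commutations followed by one destabilization of type `t`. -/
def ElemSimp (t : StabType) (R R' : Finset Pt) : Prop :=
  ∃ S, Relation.ReflTransGen ExchangeMove R S ∧ StabMove t R' S
/-- A rectangular diagram of a knot: a nonempty rectangular diagram none of whose nonempty
proper subsets is a rectangular diagram (i.e. it consists of a single closed broken line). -/
def IsKnotDiagram (R : Finset Pt) : Prop :=
  IsDiagram R ∧ R.Nonempty ∧ ∀ S ⊆ R, IsDiagram S → S.Nonempty → S = R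

/-- A connected component of a rectangular diagram `R`: a subset of `R` that is itself a
rectangular diagram of a knot. -/
def IsComponent (R K : Finset Pt) : Prop := K ⊆ R ∧ IsKnotDiagram K

/-- A rectangular path: a finite planar point set that becomes a rectangular diagram of a knot
after adding exactly one point, or exactly two points lying on one vertical or horizontal line;
a single point is also a rectangular path. -/
def IsPath (P : Finset Pt) : Prop :=
  (∃ p : Pt, P = {p}) ∨
  (∃ q : Pt, q ∉ P ∧ IsKnotDiagram (insert q P)) ∨
  (∃ q r : Pt, q ≠ r ∧ q ∉ P ∧ r ∉ P ∧ (q.1 = r.1 ∨ q.2 = r.2) ∧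
     IsKnotDiagram (insert q (insert r P)))

/-- The ends of a rectangular path: the (vertical — `true`, or horizontal — `false`) straight
lines containing exactly one vertex of the path. -/
def Ends (P : Finset Pt) : Set (Bool × ℝ) :=
  {l | (l.1 = true ∧ (P.filter (fun p => p.1 = l.2)).card = 1) ∨
       (l.1 = false ∧ (P.filter (fun p => p.2 = l.2)).card = 1)}
/-- A rectangular Θ-diagram: three rectangular paths `a`, `b`, `c` with common pairs of ends
and a rectangular diagram `d`. -/
structure Theta where
  a : Finset Pt
  b : Finset Pt
  c : Finset Pt
  d : Finset Pt

/-- The set of all vertices of a Θ-diagram. -/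
def Theta.U (T : Theta) : Finset Pt := T.a ∪ T.b ∪ T.c ∪ T.d

/-- General position of two vertex sets: distinct vertices may share a (vertical or
horizontal) line only if the line belongs to `E` (the ends). -/
def CrossGP (A C : Finset Pt) (E : Set (Bool × ℝ)) : Prop :=
  ∀ p ∈ A, ∀ q ∈ C,
    (p.1 = q.1 → (true, p.1) ∈ E) ∧ (p.2 = q.2 → (false, p.2) ∈ E)

/-- Validity of a rectangular Θ-diagram: `a`, `b`, `c` are rectangular paths sharing both of
their ends, `d` is a rectangular diagram, and all are in general position (no two vertices on
a common line except as forced by the construction, i.e. on the two common end lines). -/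
def ThetaOK (T : Theta) : Prop :=
  IsPath T.a ∧ IsPath T.b ∧ IsPath T.c ∧ IsDiagram T.d ∧
  Ends T.a = Ends T.b ∧ Ends T.a = Ends T.c ∧
  Disjoint T.a T.b ∧ Disjoint T.a T.c ∧ Disjoint T.b T.c ∧
  Disjoint T.a T.d ∧ Disjoint T.b T.d ∧ Disjoint T.c T.d ∧
  CrossGP T.a T.b (Ends T.a) ∧ CrossGP T.a T.c (Ends T.a) ∧ CrossGP T.b T.c (Ends T.a) ∧
  CrossGP T.a T.d ∅ ∧ CrossGP T.b T.d ∅ ∧ CrossGP T.c T.d ∅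

/-- Applying a planar map to all constituents of a Θ-diagram. -/
def mapTheta (f : Pt → Pt) (T : Theta) : Theta :=
  ⟨T.a.image f, T.b.image f, T.c.image f, T.d.image f⟩

/-- A cyclic permutation of a rectangular Θ-diagram (an extreme edge, or an extreme common
end of the three paths, is moved to the opposite side). -/
def ThCyclic (T T' : Theta) : Prop :=
  ThetaOK T ∧ ThetaOK T' ∧ ∃ f, CyclicData T.U f ∧ T' = mapTheta f T

/-- A commutation of a rectangular Θ-diagram (two neighboring parallel edges, or an edge and
a common end, or the two common ends, are exchanged, provided no endpoint pairs interleave). -/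
def ThComm (T T' : Theta) : Prop :=
  ThetaOK T ∧ ThetaOK T' ∧ ∃ f, CommData T.U f ∧ T' = mapTheta f T

/-- A type I stabilization of a Θ-diagram at any vertex (including endpoints of the paths). -/
def ThStabI (T T' : Theta) : Prop :=
  ThetaOK T ∧ ThetaOK T' ∧
  ∃ x y x' y' : ℝ, (x, y) ∈ T.U ∧ x ≠ x' ∧ y ≠ y' ∧
    (∀ p ∈ T.U, p.1 ≠ x') ∧ (∀ p ∈ T.U, p.2 ≠ y') ∧
    (∀ p ∈ T.U, ¬ (min x x' < p.1 ∧ p.1 < max x x')) ∧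
    (∀ p ∈ T.U, ¬ (min y y' < p.2 ∧ p.2 < max y y')) ∧
    0 < (x - x') * (y - y') ∧
    (((x, y) ∈ T.a ∧ T' = ⟨stabSet x y x' y' T.a, T.b, T.c, T.d⟩) ∨
     ((x, y) ∈ T.b ∧ T' = ⟨T.a, stabSet x y x' y' T.b, T.c, T.d⟩) ∨
     ((x, y) ∈ T.c ∧ T' = ⟨T.a, T.b, stabSet x y x' y' T.c, T.d⟩) ∨
     ((x, y) ∈ T.d ∧ T' = ⟨T.a, T.b, T.c, stabSet x y x' y' T.d⟩))

/-- Shift of a point upward by `ε`. -/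
def ptUp (ε : ℝ) (P : Pt) : Pt := (P.1, P.2 + ε)

/-- Shift of a point downward by `ε`. -/
def ptDn (ε : ℝ) (P : Pt) : Pt := (P.1, P.2 - ε)

/-- The path of the Θ-diagram `T` containing the point `P`. -/
def pathOf (T : Theta) (P : Pt) : Finset Pt :=
  if P ∈ T.a then T.a else if P ∈ T.b then T.b else T.c

/-- Replacement of the endpoint `P1`, `P2` or `P3` of a path by the prescribed set. -/
def updPath (C : Finset Pt) (P1 P2 P3 : Pt) (r1 r2 r3 : Finset Pt) : Finset Pt :=
  if P1 ∈ C then (C.erase P1) ∪ r1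
  else if P2 ∈ C then (C.erase P2) ∪ r2
  else (C.erase P3) ∪ r3

/-- An end shift at a horizontal common end of the three paths of a Θ-diagram: one of the three
endpoints `P1`, `P2`, `P3` (listed from left to right) on the common horizontal end line is
deleted, and two new vertices close to the remaining ones are added instead, in one of the six
combinatorially allowed ways. -/
def ThEndShiftH (T T' : Theta) : Prop :=
  ThetaOK T ∧ ThetaOK T' ∧
  ∃ (y0 : ℝ) (P1 P2 P3 : Pt) (ε : ℝ), 0 < ε ∧
    (∀ p ∈ T.U, ∀ q ∈ T.U, p.2 ≠ q.2 → ε < |p.2 - q.2|) ∧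
    P1.2 = y0 ∧ P2.2 = y0 ∧ P3.2 = y0 ∧ P1.1 < P2.1 ∧ P2.1 < P3.1 ∧
    (T.a ∪ T.b ∪ T.c).filter (fun p => p.2 = y0) = {P1, P2, P3} ∧
    T'.d = T.d ∧
    ∃ r1 r2 r3 : Finset Pt,
      ((r1 = {ptUp ε P1, ptUp ε P2} ∧ r2 = ∅ ∧ r3 = {P2, P3} ∧ pathOf T P2 ≠ {P2}) ∨
       (r1 = {ptDn ε P1, ptDn ε P3} ∧ r2 = {P2, P3} ∧ r3 = ∅ ∧ pathOf T P3 ≠ {P3}) ∨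
       (r1 = {P1, P3} ∧ r2 = {ptUp ε P2, ptUp ε P3} ∧ r3 = ∅ ∧ pathOf T P3 ≠ {P3}) ∨
       (r1 = ∅ ∧ r2 = {ptDn ε P2, ptDn ε P1} ∧ r3 = {P1, P3} ∧ pathOf T P1 ≠ {P1}) ∨
       (r1 = ∅ ∧ r2 = {P1, P2} ∧ r3 = {ptUp ε P3, ptUp ε P1} ∧ pathOf T P1 ≠ {P1}) ∨
       (r1 = {P1, P2} ∧ r2 = ∅ ∧ r3 = {ptDn ε P3, ptDn ε P2} ∧ pathOf T P2 ≠ {P2})) ∧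
      T'.a = updPath T.a P1 P2 P3 r1 r2 r3 ∧
      T'.b = updPath T.b P1 P2 P3 r1 r2 r3 ∧
      T'.c = updPath T.c P1 P2 P3 r1 r2 r3

/-- Transposition (mirror image in a diagonal) of a Θ-diagram. -/
def Theta.tr (T : Theta) : Theta := mapTheta (fun p => (p.2, p.1)) T

/-- An end shift (at a horizontal or at a vertical common end). -/
def ThEndShift (T T' : Theta) : Prop :=
  ThEndShiftH T T' ∨ ThEndShiftH T.tr T'.tr

/-- A permitted move of rectangular Θ-diagrams: a cyclic permutation, a commutation,
a type I stabilization or destabilization, or an end shift. -/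
def ThMove (T T' : Theta) : Prop :=
  ThCyclic T T' ∨ ThComm T T' ∨ ThStabI T T' ∨ ThStabI T' T ∨ ThEndShift T T'

/-- Legendrian equivalence of rectangular Θ-diagrams: connected by a finite sequence of
permitted moves. -/
def ThetaEquiv : Theta → Theta → Prop := Relation.ReflTransGen ThMove

def co (d : Bool) (p : Pt) : ℝ := if d = true then p.1 else p.2

@[simp] theorem co_true (p : Pt) : co true p = p.1 := rfl
@[simp] theorem co_false (p : Pt) : co false p = p.2 := rfl

def cnt (P : Finset Pt) (d : Bool) (t : ℝ) : ℕ := (P.filter (fun p => co d p = t)).card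

theorem pt_ext {p q : Pt} (h : ∀ d, co d p = co d q) : p = q :=
  Prod.ext (h true) (h false)

theorem pt_ext' {p q : Pt} (d : Bool) (h : co d p = co d q) (h' : co (!d) p = co (!d) q) : p = q := by
  apply pt_ext
  intro d'
  cases d <;> cases d' <;> simp_all

def mkp (d : Bool) (t u : ℝ) : Pt := if d = true then (t, u) else (u, t)

@[simp] theorem co_mkp (d : Bool) (t u : ℝ) : co d (mkp d t u) = t := by
  cases d <;> simp [co, mkp]
@[simp] theorem co_mkp' (d : Bool) (t u : ℝ) : co (!d) (mkp d t u) = u := by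
  cases d <;> simp [co, mkp]

theorem isDiagram_iff {P : Finset Pt} : IsDiagram P ↔ ∀ p ∈ P, ∀ d, cnt P d (co d p) = 2 := by
  unfold IsDiagram cnt
  constructor
  · intro h p hp d
    cases d
    · exact (h p hp).2
    · exact (h p hp).1
  · intro h p hp
    exact ⟨h p hp true, h p hp false⟩

theorem mem_Ends {P : Finset Pt} {d : Bool} {t : ℝ} : (d, t) ∈ Ends P ↔ cnt P d t = 1 := by
  unfold Ends cnt
  cases d <;> simp <;> exact Iff.rfl

theorem cnt_pos {P : Finset Pt} {d : Bool} {t : ℝ} : 0 < cnt P d t ↔ ∃ p ∈ P, co d p = t := by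
  unfold cnt
  rw [Finset.card_pos]
  constructor
  · rintro ⟨p, hp⟩
    exact ⟨p, by simpa using hp⟩
  · rintro ⟨p, hp, h⟩
    exact ⟨p, by simp [hp, h]⟩

theorem cnt_insert {P : Finset Pt} {q : Pt} (hq : q ∉ P) (d : Bool) (t : ℝ) :
    cnt (insert q P) d t = cnt P d t + if co d q = t then 1 else 0 := by
  unfold cnt
  rw [Finset.filter_insert]
  split_ifs with h
  · rw [Finset.card_insert_of_notMem]
    simp [hq]
  · rfl

theorem cnt_erase {P : Finset Pt} {q : Pt} (hq : q ∈ P) (d : Bool) (t : ℝ) :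
    cnt P d t = cnt (P.erase q) d t + if co d q = t then 1 else 0 := by
  conv_lhs => rw [← Finset.insert_erase hq]
  exact cnt_insert (by simp) d t

theorem cnt_sdiff {K S : Finset Pt} (h : S ⊆ K) (d : Bool) (t : ℝ) :
    cnt K d t = cnt (K \ S) d t + cnt S d t := by
  unfold cnt
  rw [← Finset.card_union_of_disjoint, ← Finset.filter_union, Finset.sdiff_union_of_subset h]
  exact Finset.disjoint_filter_filter Finset.sdiff_disjoint

theorem cnt_mono {K S : Finset Pt} (h : S ⊆ K) (d : Bool) (t : ℝ) : cnt S d t ≤ cnt K d t :=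
  Finset.card_le_card (Finset.filter_subset_filter _ h)

@[simp] theorem cnt_empty (d : Bool) (t : ℝ) : cnt ∅ d t = 0 := rfl

theorem diag_cnt {P : Finset Pt} : IsDiagram P ↔ ∀ d t, cnt P d t = 0 ∨ cnt P d t = 2 := by
  rw [isDiagram_iff]
  constructor
  · intro h d t
    rcases Nat.eq_zero_or_pos (cnt P d t) with h0 | h0
    · exact Or.inl h0
    · obtain ⟨p, hp, rfl⟩ := cnt_pos.1 h0
      exact Or.inr (h p hp d)
  · intro h p hp d
    rcases h d (co d p) with h0 | h0
    · exact absurd h0 (Nat.pos_iff_ne_zero.1 (cnt_pos.2 ⟨p, hp, rfl⟩))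
    · exact h0

def Good (P : Finset Pt) (E : Set (Bool × ℝ)) : Prop :=
  ∀ d t, cnt P d t ≤ 2 ∧ (cnt P d t = 1 ↔ (d, t) ∈ E)

def NoSub (P : Finset Pt) : Prop := ∀ S ⊆ P, IsDiagram S → S = ∅

theorem good_ends {P E} (h : Good P E) : Ends P = E := by
  ext ⟨d, t⟩
  rw [mem_Ends, (h d t).2]

theorem good_empty {P} : Good P ∅ ↔ IsDiagram P := by
  rw [diag_cnt]
  unfold Good
  constructor
  · intro h d t
    have := h d t
    simp at this
    omega
  · intro h d t
    have := h d t
    simp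
    omega

theorem diag_sdiff {K S : Finset Pt} (h : S ⊆ K) (hK : IsDiagram K) (hS : IsDiagram S) :
    IsDiagram (K \ S) := by
  rw [diag_cnt] at *
  intro d t
  have h1 := hK d t
  have h2 := hS d t
  have h3 := cnt_sdiff h d t
  omega

theorem isPath_of {P : Finset Pt} (h : ∃ e1 e2, e1 ≠ e2 ∧ Good P {e1, e2} ∧ NoSub P) :
    IsPath P := by
  obtain ⟨⟨d1, t1⟩, ⟨d2, t2⟩, hne, hg, hn⟩ := h
  by_cases hd : d1 = d2
  · subst hd
    have ht : t1 ≠ t2 := by rintro rfl; exact hne rfl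
    obtain ⟨u, hu⟩ := Infinite.exists_notMem_finset (P.image (co (!d1)))
    simp only [Finset.mem_image, not_exists, not_and] at hu
    right; right
    set q := mkp d1 t1 u with hq
    set r := mkp d1 t2 u with hr
    have q1 : co d1 q = t1 := by simp [hq]
    have q2 : co (!d1) q = u := by simp [hq]
    have r1 : co d1 r = t2 := by simp [hr]
    have r2 : co (!d1) r = u := by simp [hr]
    have hqr : q ≠ r := by intro h; rw [h] at q1; exact ht (q1.symm.trans r1)
    have hqP : q ∉ P := fun h => hu q h q2
    have hrP : r ∉ P := fun h => hu r h r2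
    have hc : ∀ d t, cnt (insert q (insert r P)) d t = cnt P d t + (if co d r = t then 1 else 0)
        + (if co d q = t then 1 else 0) := by
      intro d t
      rw [cnt_insert (by simp [hqr, hqP]), cnt_insert hrP]
    have hu0 : cnt P (!d1) u = 0 := by
      by_contra h
      obtain ⟨p, hp, h⟩ := cnt_pos.1 (Nat.pos_of_ne_zero h)
      exact hu p hp h
    have hK : IsDiagram (insert q (insert r P)) := by
      rw [diag_cnt]
      intro d t
      rw [hc]
      have := hg d t
      simp only [Set.mem_insert_iff, Set.mem_singleton_iff, Prod.mk.injEq] at this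
      by_cases hd : d = d1
      · subst hd
        rw [q1, r1]
        by_cases h1 : t1 = t <;> by_cases h2 : t2 = t
        · exact absurd (h1.trans h2.symm) ht
        · simp [h1, h2, Ne.symm h2] at this ⊢; omega
        · simp [h1, h2, Ne.symm h1] at this ⊢; omega
        · simp [h1, h2, Ne.symm h1, Ne.symm h2] at this ⊢; omega
      · have hd' : d = !d1 := by cases d <;> cases d1 <;> simp_all
        subst hd'
        rw [q2, r2]
        by_cases h1 : u = t
        · subst h1
          simp [hu0]
        · simp [h1] at this ⊢; omega
    refine ⟨q, r, hqr, hqP, hrP, ?_, hK, by simp, ?_⟩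
    · cases d1
      · left; exact q2.trans r2.symm
      · right; exact q2.trans r2.symm
    · have key : ∀ S ⊆ insert q (insert r P), IsDiagram S → (q ∈ S ↔ r ∈ S) := by
        intro S hS hdS
        have e : ∀ p ∈ S, co (!d1) p = u → p = q ∨ p = r := by
          intro p hp hpu
          have := hS hp
          simp only [Finset.mem_insert] at this
          rcases this with h | h | h
          · exact Or.inl h
          · exact Or.inr h
          · exact absurd hpu (hu p h)
        have hc2 : ∀ p ∈ S, co (!d1) p = u → q ∈ S ∧ r ∈ S := by
          intro p hp hpu
          have h2 := isDiagram_iff.1 hdS p hp (!d1)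
          rw [hpu] at h2
          have hsub : S.filter (fun p => co (!d1) p = u) ⊆ {q, r} := by
            intro p hp
            simp only [Finset.mem_filter] at hp
            simpa using e p hp.1 hp.2
          have heq := Finset.eq_of_subset_of_card_le hsub (by
            rw [Finset.card_pair hqr]; exact h2.ge)
          have hq' : q ∈ S.filter (fun p => co (!d1) p = u) := by rw [heq]; simp
          have hr' : r ∈ S.filter (fun p => co (!d1) p = u) := by rw [heq]; simp
          exact ⟨(Finset.mem_filter.1 hq').1, (Finset.mem_filter.1 hr').1⟩
        exact ⟨fun h => (hc2 q h q2).2, fun h => (hc2 r h r2).1⟩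
      intro S hS hdS hne
      by_cases hqS : q ∈ S
      · have hrS := (key S hS hdS).1 hqS
        have : (insert q (insert r P)) \ S = ∅ := by
          apply hn _ _ (diag_sdiff hS hK hdS)
          intro p hp
          simp only [Finset.mem_sdiff, Finset.mem_insert] at hp
          rcases hp with ⟨rfl | rfl | h, h2⟩
          · exact absurd hqS h2
          · exact absurd hrS h2
          · exact h
        exact Finset.Subset.antisymm hS (Finset.sdiff_eq_empty_iff_subset.1 this)
      · have hrS : r ∉ S := fun h => hqS ((key S hS hdS).2 h)
        exfalso
        apply hne.ne_empty
        apply hn _ _ hdS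
        intro p hp
        have := hS hp
        simp only [Finset.mem_insert] at this
        rcases this with rfl | rfl | h
        · exact absurd hp hqS
        · exact absurd hp hrS
        · exact h
  · have hd' : d2 = !d1 := by cases d1 <;> cases d2 <;> simp_all
    subst hd'
    set q := mkp d1 t1 t2 with hq
    have q1 : co d1 q = t1 := by simp [hq]
    have q2 : co (!d1) q = t2 := by simp [hq]
    have hE : ∀ d t, (d, t) ∈ ({(d1, t1), (!d1, t2)} : Set (Bool × ℝ)) ↔ co d q = t := by
      intro d t
      simp only [Set.mem_insert_iff, Set.mem_singleton_iff, Prod.mk.injEq]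
      by_cases h : d = d1
      · subst h; rw [q1]; simp [eq_comm]
      · have : d = !d1 := by cases d <;> cases d1 <;> simp_all
        subst this; rw [q2]; simp [eq_comm]
    by_cases hqP : q ∈ P
    · left
      refine ⟨q, ?_⟩
      have : P.erase q = ∅ := by
        apply hn _ (Finset.erase_subset _ _)
        rw [diag_cnt]
        intro d t
        have h1 := cnt_erase hqP d t
        have h2 := hg d t
        rw [hE] at h2
        by_cases h : co d q = t <;> simp [h] at h1 h2 <;> omega
      rw [← Finset.insert_erase hqP, this]
      rfl
    · right; left
      have hK : IsDiagram (insert q P) := by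
        rw [diag_cnt]
        intro d t
        have h1 := cnt_insert hqP d t
        have h2 := hg d t
        rw [hE] at h2
        by_cases h : co d q = t <;> simp [h] at h1 h2 <;> omega
      refine ⟨q, hqP, hK, by simp, ?_⟩
      intro S hS hdS hne
      by_cases hqS : q ∈ S
      · have : (insert q P) \ S = ∅ := by
          apply hn _ _ (diag_sdiff hS hK hdS)
          intro p hp
          simp only [Finset.mem_sdiff, Finset.mem_insert] at hp
          rcases hp with ⟨rfl | h, h2⟩
          · exact absurd hqS h2
          · exact h
        exact Finset.Subset.antisymm hS (Finset.sdiff_eq_empty_iff_subset.1 this)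
      · exfalso
        apply hne.ne_empty
        apply hn _ _ hdS
        intro p hp
        have := hS hp
        simp only [Finset.mem_insert] at this
        rcases this with rfl | h
        · exact absurd hp hqS
        · exact h

theorem isPath_to {P : Finset Pt} (h : IsPath P) :
    ∃ e1 e2, e1 ≠ e2 ∧ Good P {e1, e2} ∧ NoSub P := by
  have knot : ∀ (K : Finset Pt) (q : Pt), q ∈ K → q ∉ P → P ⊆ K → IsKnotDiagram K → NoSub P := by
    intro K q hq hqP hPK hK S hS hdS
    by_contra hne
    have := hK.2.2 S (hS.trans hPK) hdS (Finset.nonempty_iff_ne_empty.2 hne)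
    rw [← this] at hq
    exact hqP (hS hq)
  rcases h with ⟨p, rfl⟩ | ⟨q, hq, hK⟩ | ⟨q, r, hqr, hq, hr, hl, hK⟩
  · refine ⟨(true, p.1), (false, p.2), by simp, ?_, ?_⟩
    · intro d t
      have : cnt {p} d t = if co d p = t then 1 else 0 := by
        have := cnt_insert (P := ∅) (q := p) (by simp) d t
        simpa using this
      rw [this]
      cases d
      · by_cases h : p.2 = t
        · simp [h]
        · simp [h, Ne.symm h]
      · by_cases h : p.1 = t
        · simp [h]
        · simp [h, Ne.symm h]
    · intro S hS hdS
      rcases Finset.subset_singleton_iff.1 hS with h | h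
      · exact h
      · subst h
        have := isDiagram_iff.1 hdS p (by simp) true
        have h2 : cnt {p} true (co true p) ≤ 1 := by
          unfold cnt
          exact (Finset.card_filter_le _ _).trans (by simp)
        omega
  · refine ⟨(true, q.1), (false, q.2), by simp, ?_, knot _ q (by simp) hq (by simp) hK⟩
    intro d t
    have h1 := diag_cnt.1 hK.1 d t
    rw [cnt_insert hq] at h1
    cases d <;> simp only [co_true, co_false, Set.mem_insert_iff, Set.mem_singleton_iff, Prod.mk.injEq] at h1 ⊢
    · by_cases h : q.2 = t
      · simp [h] at h1 ⊢; omega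
      · simp [h, Ne.symm h] at h1 ⊢; omega
    · by_cases h : q.1 = t
      · simp [h] at h1 ⊢; omega
      · simp [h, Ne.symm h] at h1 ⊢; omega
  · have hns := knot _ q (by simp) hq (fun p hp => by simp [hp]) hK
    have h0 : ∀ d t, cnt P d t + (if co d r = t then 1 else 0) + (if co d q = t then 1 else 0) = 0 ∨
      cnt P d t + (if co d r = t then 1 else 0) + (if co d q = t then 1 else 0) = 2 := by
      intro d t
      have h1 := diag_cnt.1 hK.1 d t
      rwa [cnt_insert (by simp [hqr, hq]), cnt_insert hr] at h1
    have gen : ∃ d0, co d0 q = co d0 r := by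
      rcases hl with h | h
      · exact ⟨true, h⟩
      · exact ⟨false, h⟩
    obtain ⟨d0, hd0⟩ := gen
    have hne : co (!d0) q ≠ co (!d0) r := fun h => hqr (pt_ext' d0 hd0 h)
    refine ⟨(!d0, co (!d0) q), (!d0, co (!d0) r), by simpa using hne, ?_, hns⟩
    intro d t
    have h1 := h0 d t
    simp only [Set.mem_insert_iff, Set.mem_singleton_iff, Prod.mk.injEq]
    by_cases hd : d = d0
    · subst hd
      rw [hd0] at h1
      by_cases h : co d r = t <;> simp [h] at h1 ⊢ <;> omega
    · have : d = !d0 := by cases d <;> cases d0 <;> simp_all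
      subst this
      by_cases h : co (!d0) r = t
      · have h' : co (!d0) q ≠ t := fun h2 => hne (h2.trans h.symm)
        simp [h, h', Ne.symm h'] at h1 ⊢; omega
      · by_cases h' : co (!d0) q = t
        · simp [h, h', Ne.symm h] at h1 ⊢; omega
        · simp [h, h', Ne.symm h, Ne.symm h'] at h1 ⊢; omega


def Theta.pt (T : Theta) : Fin 4 → Finset Pt := ![T.a, T.b, T.c, T.d]

@[simp] theorem Theta.pt0 (T : Theta) : T.pt 0 = T.a := rfl
@[simp] theorem Theta.pt1 (T : Theta) : T.pt 1 = T.b := rfl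
@[simp] theorem Theta.pt2 (T : Theta) : T.pt 2 = T.c := rfl
@[simp] theorem Theta.pt3 (T : Theta) : T.pt 3 = T.d := rfl

def EE (E : Set (Bool × ℝ)) (i : Fin 4) : Set (Bool × ℝ) := if i = 3 then ∅ else E

theorem Theta.ext' {T T' : Theta} (h : ∀ i, T.pt i = T'.pt i) : T = T' := by
  cases T; cases T'
  have h0 := h 0
  have h1 := h 1
  have h2 := h 2
  have h3 := h 3
  simp at h0 h1 h2 h3
  subst h0 h1 h2 h3
  rfl

theorem Theta.mem_U {T : Theta} {p : Pt} : p ∈ T.U ↔ ∃ i, p ∈ T.pt i := by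
  unfold Theta.U
  simp only [Finset.mem_union]
  constructor
  · rintro (((h | h) | h) | h)
    · exact ⟨0, h⟩
    · exact ⟨1, h⟩
    · exact ⟨2, h⟩
    · exact ⟨3, h⟩
  · rintro ⟨i, h⟩
    fin_cases i <;> simp at h <;> tauto

structure OK2 (T : Theta) (E : Set (Bool × ℝ)) : Prop where
  ends : ∃ e1 e2, e1 ≠ e2 ∧ E = {e1, e2}
  good : ∀ i, Good (T.pt i) (EE E i)
  nosub : ∀ i, i ≠ 3 → NoSub (T.pt i)
  disj : ∀ i j, i ≠ j → ∀ p ∈ T.pt i, p ∉ T.pt j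
  cross : ∀ i j, i ≠ j → ∀ p ∈ T.pt i, ∀ q ∈ T.pt j, ∀ d, co d p = co d q →
    (d, co d p) ∈ E ∧ i ≠ 3 ∧ j ≠ 3

theorem crossGP_iff {A C : Finset Pt} {E : Set (Bool × ℝ)} : CrossGP A C E ↔
    ∀ p ∈ A, ∀ q ∈ C, ∀ d, co d p = co d q → (d, co d p) ∈ E := by
  unfold CrossGP
  constructor
  · intro h p hp q hq d
    cases d
    · exact (h p hp q hq).2
    · exact (h p hp q hq).1
  · intro h p hp q hq
    exact ⟨h p hp q hq true, h p hp q hq false⟩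

theorem crossGP_symm {A C : Finset Pt} {E : Set (Bool × ℝ)} (h : CrossGP A C E) : CrossGP C A E := by
  rw [crossGP_iff] at *
  intro p hp q hq d hd
  rw [hd]
  exact h q hq p hp d hd.symm

theorem ok2_of {T : Theta} (h : ThetaOK T) : OK2 T (Ends T.a) := by
  obtain ⟨pa, pb, pc, dd, eab, eac, dab, dac, dbc, dad, dbd, dcd, cab, cac, cbc, cad, cbd, ccd⟩ := h
  obtain ⟨a1, a2, ha, ga, na⟩ := isPath_to pa
  obtain ⟨b1, b2, hb, gb, nb⟩ := isPath_to pb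
  obtain ⟨c1, c2, hc, gc, nc⟩ := isPath_to pc
  have ea := good_ends ga
  have eb := good_ends gb
  have ec := good_ends gc
  rw [← ea] at ga
  rw [← eb, ← eab] at gb
  rw [← ec, ← eac] at gc
  have e3 : ∀ p q : Pt, ∀ A C, CrossGP A C ∅ → p ∈ A → q ∈ C → ∀ d, co d p ≠ co d q := by
    intro p q A C h hp hq d hd
    exact crossGP_iff.1 h p hp q hq d hd
  refine ⟨⟨a1, a2, ha, ea⟩, ?_, ?_, ?_, ?_⟩
  · intro i
    fin_cases i <;> simp [EE]
    · exact ga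
    · exact gb
    · exact gc
    · exact good_empty.2 dd
  · intro i hi
    fin_cases i
    · exact na
    · exact nb
    · exact nc
    · exact absurd rfl hi
  · intro i j hij p hp hq
    rw [Finset.disjoint_left] at *
    fin_cases i <;> fin_cases j <;> simp at hp hq hij
    · exact dab hp hq
    · exact dac hp hq
    · exact dad hp hq
    · exact dab hq hp
    · exact dbc hp hq
    · exact dbd hp hq
    · exact dac hq hp
    · exact dbc hq hp
    · exact dcd hp hq
    · exact dad hq hp
    · exact dbd hq hp
    · exact dcd hq hp
  · intro i j hij p hp q hq d hd
    fin_cases i <;> fin_cases j <;> simp at hp hq hij <;> simp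
    · exact crossGP_iff.1 cab p hp q hq d hd
    · exact crossGP_iff.1 cac p hp q hq d hd
    · exact e3 p q _ _ cad hp hq d hd
    · exact crossGP_iff.1 (crossGP_symm cab) p hp q hq d hd
    · exact crossGP_iff.1 cbc p hp q hq d hd
    · exact e3 p q _ _ cbd hp hq d hd
    · exact crossGP_iff.1 (crossGP_symm cac) p hp q hq d hd
    · exact crossGP_iff.1 (crossGP_symm cbc) p hp q hq d hd
    · exact e3 p q _ _ ccd hp hq d hd
    · exact e3 p q _ _ (crossGP_symm cad) hp hq d hd
    · exact e3 p q _ _ (crossGP_symm cbd) hp hq d hd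
    · exact e3 p q _ _ (crossGP_symm ccd) hp hq d hd

theorem OK2.ends_a {T E} (h : OK2 T E) : Ends T.a = E := good_ends (h.good 0)

theorem OK2.ok {T E} (h : OK2 T E) : ThetaOK T := by
  obtain ⟨e1, e2, hne, he⟩ := h.ends
  have hp : ∀ i, i ≠ 3 → IsPath (T.pt i) := by
    intro i hi
    refine isPath_of ⟨e1, e2, hne, ?_, h.nosub i hi⟩
    have := h.good i
    rwa [EE, if_neg hi, he] at this
  have hE : ∀ i, i ≠ 3 → Ends (T.pt i) = E := by
    intro i hi
    have := h.good i
    rw [EE, if_neg hi] at this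
    exact good_ends this
  have hd : ∀ i j, i ≠ j → Disjoint (T.pt i) (T.pt j) := by
    intro i j hij
    rw [Finset.disjoint_left]
    exact h.disj i j hij
  have hc : ∀ i j, i ≠ j → CrossGP (T.pt i) (T.pt j) (Ends T.a) := by
    intro i j hij
    rw [crossGP_iff, h.ends_a]
    intro p hp q hq d hd
    exact (h.cross i j hij p hp q hq d hd).1
  have hc3 : ∀ i, i ≠ 3 → CrossGP (T.pt i) (T.pt 3) ∅ := by
    intro i hij
    rw [crossGP_iff]
    intro p hp q hq d hd
    exact ((h.cross i 3 hij p hp q hq d hd).2.2 rfl).elim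
  exact ⟨hp 0 (by decide), hp 1 (by decide), hp 2 (by decide), good_empty.1 (h.good 3),
    (hE 0 (by decide)).trans (hE 1 (by decide)).symm, (hE 0 (by decide)).trans (hE 2 (by decide)).symm,
    hd 0 1 (by decide), hd 0 2 (by decide), hd 1 2 (by decide),
    hd 0 3 (by decide), hd 1 3 (by decide), hd 2 3 (by decide),
    hc 0 1 (by decide), hc 0 2 (by decide), hc 1 2 (by decide),
    hc3 0 (by decide), hc3 1 (by decide), hc3 2 (by decide)⟩

theorem ok_iff {T} : ThetaOK T ↔ ∃ E, OK2 T E := ⟨fun h => ⟨_, ok2_of h⟩, fun ⟨_, h⟩ => h.ok⟩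

/-- coordinatewise map -/
def cm (F : Bool → ℝ → ℝ) (p : Pt) : Pt := (F true p.1, F false p.2)

@[simp] theorem co_cm (F : Bool → ℝ → ℝ) (d : Bool) (p : Pt) : co d (cm F p) = F d (co d p) := by
  cases d <;> rfl

def InjC (F : Bool → ℝ → ℝ) (U : Finset Pt) : Prop :=
  ∀ p ∈ U, ∀ q ∈ U, ∀ d, F d (co d p) = F d (co d q) → co d p = co d q

theorem InjC.mono {F U V} (h : InjC F U) (hV : V ⊆ U) : InjC F V :=
  fun p hp q hq d hd => h p (hV hp) q (hV hq) d hd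

theorem InjC.inj {F U} (h : InjC F U) {p q : Pt} (hp : p ∈ U) (hq : q ∈ U) (e : cm F p = cm F q) : p = q := by
  apply pt_ext
  intro d
  apply h p hp q hq d
  rw [← co_cm F d p, ← co_cm F d q, e]

theorem cnt_image {F P} (h : InjC F P) {p : Pt} (hp : p ∈ P) (d : Bool) :
    cnt (P.image (cm F)) d (F d (co d p)) = cnt P d (co d p) := by
  unfold cnt
  rw [Finset.filter_image, Finset.card_image_of_injOn]
  · congr 1
    ext q
    simp only [Finset.mem_filter, co_cm, and_congr_right_iff]
    intro hq
    exact ⟨fun e => h q hq p hp d e, fun e => by rw [e]⟩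
  · intro q hq r hr e
    simp at hq hr
    exact h.inj hq.1 hr.1 e

def lm (F : Bool → ℝ → ℝ) (l : Bool × ℝ) : Bool × ℝ := (l.1, F l.1 l.2)

theorem good_image {F P E} (h : InjC F P) (hg : Good P E) : Good (P.image (cm F)) (lm F '' E) := by
  intro d t
  rcases Nat.eq_zero_or_pos (cnt (P.image (cm F)) d t) with h0 | h0
  · rw [h0]
    simp only [zero_le, true_and, zero_ne_one, false_iff]
    rintro ⟨⟨d', t'⟩, hl, e⟩
    simp only [lm, Prod.mk.injEq] at e
    obtain ⟨rfl, rfl⟩ := e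
    have := (hg d' t').2.2 hl
    obtain ⟨p, hp, rfl⟩ := cnt_pos.1 (by omega : 0 < cnt P d' t')
    rw [cnt_image h hp] at h0
    omega
  · obtain ⟨q, hq, rfl⟩ := cnt_pos.1 h0
    obtain ⟨p, hp, rfl⟩ := Finset.mem_image.1 hq
    rw [co_cm, cnt_image h hp]
    refine ⟨(hg _ _).1, ?_⟩
    rw [(hg _ _).2]
    constructor
    · intro hl
      exact ⟨_, hl, rfl⟩
    · rintro ⟨⟨d', t'⟩, hl, e⟩
      simp only [lm, Prod.mk.injEq] at e
      obtain ⟨rfl, e⟩ := e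
      have := (hg d' t').2.2 hl
      obtain ⟨r, hr, rfl⟩ := cnt_pos.1 (by omega : 0 < cnt P d' t')
      rwa [h r hr p hp d' e] at hl

theorem nosub_image {F P} (h : InjC F P) (hn : NoSub P) : NoSub (P.image (cm F)) := by
  intro S hS hdS
  have hS' : S = (P.filter (fun p => cm F p ∈ S)).image (cm F) := by
    ext q
    simp only [Finset.mem_image, Finset.mem_filter]
    constructor
    · intro hq
      obtain ⟨p, hp, rfl⟩ := Finset.mem_image.1 (hS hq)
      exact ⟨p, ⟨hp, hq⟩, rfl⟩
    · rintro ⟨p, ⟨_, hp⟩, rfl⟩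
      exact hp
  have h1 : P.filter (fun p => cm F p ∈ S) = ∅ := by
    apply hn _ (Finset.filter_subset _ _)
    rw [isDiagram_iff]
    intro p hp d
    rw [← cnt_image (h.mono (Finset.filter_subset _ _)) hp, ← hS', ← co_cm F d p]
    exact isDiagram_iff.1 hdS _ (Finset.mem_filter.1 hp).2 d
  rw [hS', h1]
  rfl

theorem mapTheta_pt (f : Pt → Pt) (T : Theta) (i : Fin 4) : (mapTheta f T).pt i = (T.pt i).image f := by
  fin_cases i <;> rfl

theorem pt_sub_U (T : Theta) (i : Fin 4) : T.pt i ⊆ T.U := fun p hp => Theta.mem_U.2 ⟨i, hp⟩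

theorem mapTheta_U (f : Pt → Pt) (T : Theta) : (mapTheta f T).U = T.U.image f := by
  unfold Theta.U mapTheta
  simp [Finset.image_union]

theorem mapTheta_congr {f g : Pt → Pt} {T : Theta} (h : ∀ p ∈ T.U, f p = g p) :
    mapTheta f T = mapTheta g T := by
  apply Theta.ext'
  intro i
  rw [mapTheta_pt, mapTheta_pt]
  exact Finset.image_congr (fun p hp => h p (pt_sub_U T i hp))

theorem mapTheta_comp (f g : Pt → Pt) (T : Theta) :
    mapTheta f (mapTheta g T) = mapTheta (f ∘ g) T := by
  apply Theta.ext'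
  intro i
  simp only [mapTheta_pt, Finset.image_image]

theorem mapTheta_id' {f : Pt → Pt} {T : Theta} (h : ∀ p ∈ T.U, f p = p) : mapTheta f T = T := by
  rw [mapTheta_congr (g := id) h]
  apply Theta.ext'
  intro i
  rw [mapTheta_pt, Finset.image_id]

theorem OK2.image {T E F} (h : OK2 T E) (hF : InjC F T.U) : OK2 (mapTheta (cm F) T) (lm F '' E) := by
  have inj : ∀ p ∈ T.U, ∀ q ∈ T.U, cm F p = cm F q → p = q := fun p hp q hq e => hF.inj hp hq e
  refine ⟨?_, ?_, ?_, ?_, ?_⟩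
  · obtain ⟨e1, e2, hne, he⟩ := h.ends
    refine ⟨lm F e1, lm F e2, ?_, by rw [he, Set.image_pair]⟩
    intro e
    have m1 : e1 ∈ E := by rw [he]; simp
    have m2 : e2 ∈ E := by rw [he]; simp
    obtain ⟨d1, t1⟩ := e1
    obtain ⟨d2, t2⟩ := e2
    simp only [lm, Prod.mk.injEq] at e
    obtain ⟨rfl, e⟩ := e
    have c1 := ((h.good 0) d1 t1).2.2 (by simpa [EE] using m1)
    have c2 := ((h.good 0) d1 t2).2.2 (by simpa [EE] using m2)
    obtain ⟨p, hp, rfl⟩ := cnt_pos.1 (c1.symm ▸ Nat.one_pos)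
    obtain ⟨q, hq, rfl⟩ := cnt_pos.1 (c2.symm ▸ Nat.one_pos)
    exact hne (by rw [hF p (pt_sub_U T 0 hp) q (pt_sub_U T 0 hq) d1 e])
  · intro i
    have := good_image (hF.mono (pt_sub_U T i)) (h.good i)
    rw [mapTheta_pt]
    convert this using 1
    unfold EE
    split_ifs <;> simp
  · intro i hi
    rw [mapTheta_pt]
    exact nosub_image (hF.mono (pt_sub_U T i)) (h.nosub i hi)
  · intro i j hij p hp hq
    rw [mapTheta_pt] at hp hq
    obtain ⟨p, hp', rfl⟩ := Finset.mem_image.1 hp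
    obtain ⟨q, hq', e⟩ := Finset.mem_image.1 hq
    have := inj _ (pt_sub_U T _ hq') _ (pt_sub_U T _ hp') e
    subst this
    exact h.disj i j hij _ hp' hq'
  · intro i j hij p hp q hq d hd
    rw [mapTheta_pt] at hp hq
    obtain ⟨p, hp', rfl⟩ := Finset.mem_image.1 hp
    obtain ⟨q, hq', rfl⟩ := Finset.mem_image.1 hq
    clear hp hq
    have hp := hp'
    have hq := hq'
    rw [co_cm, co_cm] at hd
    have := h.cross i j hij p hp q hq d (hF _ (pt_sub_U T _ hp) _ (pt_sub_U T _ hq) d hd)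
    refine ⟨?_, this.2⟩
    rw [co_cm]
    exact ⟨_, this.1, rfl⟩

theorem ok_image {T F} (h : ThetaOK T) (hF : InjC F T.U) : ThetaOK (mapTheta (cm F) T) :=
  ((ok2_of h).image hF).ok

/- stabilization -/

def Fresh (x' y' : ℝ) (P : Finset Pt) : Prop := (∀ p ∈ P, p.1 ≠ x') ∧ ∀ p ∈ P, p.2 ≠ y'

theorem cnt_zero {P : Finset Pt} {d t} (h : ∀ p ∈ P, co d p ≠ t) : cnt P d t = 0 := by
  by_contra h0
  obtain ⟨p, hp, e⟩ := cnt_pos.1 (Nat.pos_of_ne_zero h0)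
  exact h p hp e

theorem cnt_stab {x y x' y' : ℝ} {P : Finset Pt} (hp : (x, y) ∈ P) (hf : Fresh x' y' P) (d t) :
    cnt (stabSet x y x' y' P) d t =
      if (d = true ∧ t = x') ∨ (d = false ∧ t = y') then 2 else cnt P d t := by
  have hx : x ≠ x' := hf.1 _ hp
  have hy : y ≠ y' := hf.2 _ hp
  have n1 : ((x', y') : Pt) ∉ P.erase (x, y) := fun h => hf.1 _ (Finset.mem_of_mem_erase h) rfl
  have n2 : ((x, y') : Pt) ∉ insert ((x', y') : Pt) (P.erase (x, y)) := by
    intro h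
    rcases Finset.mem_insert.1 h with h | h
    · exact hx (Prod.ext_iff.1 h).1
    · exact hf.2 _ (Finset.mem_of_mem_erase h) rfl
  have n3 : ((x', y) : Pt) ∉ insert ((x, y') : Pt) (insert ((x', y') : Pt) (P.erase (x, y))) := by
    intro h
    rcases Finset.mem_insert.1 h with h | h
    · exact hy (Prod.ext_iff.1 h).2
    rcases Finset.mem_insert.1 h with h | h
    · exact hy (Prod.ext_iff.1 h).2
    · exact hf.1 _ (Finset.mem_of_mem_erase h) rfl
  unfold stabSet
  rw [cnt_insert n3, cnt_insert n2, cnt_insert n1]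
  have h1 := cnt_erase hp d t
  cases d
  · simp only [co_false, Bool.false_eq_true, false_and, true_and, false_or] at h1 ⊢
    by_cases e : t = y'
    · subst e
      have := cnt_zero (P := P) (d := false) (t := t) (fun p hp => hf.2 p hp)
      simp [hy]
      omega
    · by_cases e2 : y = t <;> simp [e, Ne.symm e, e2] at h1 ⊢ <;> omega
  · simp only [co_true, Bool.true_eq_false, false_and, true_and, or_false] at h1 ⊢
    by_cases e : t = x'
    · subst e
      have := cnt_zero (P := P) (d := true) (t := t) (fun p hp => hf.1 p hp)
      simp [hx]
      omega
    · by_cases e2 : x = t <;> simp [e, Ne.symm e, e2] at h1 ⊢ <;> omega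

theorem good_stab {x y x' y' : ℝ} {P : Finset Pt} {E} (hp : (x, y) ∈ P) (hf : Fresh x' y' P) :
    Good (stabSet x y x' y' P) E ↔ Good P E := by
  have z1 := cnt_zero (P := P) (d := false) (t := y') (fun p hp => hf.2 p hp)
  have z2 := cnt_zero (P := P) (d := true) (t := x') (fun p hp => hf.1 p hp)
  unfold Good
  refine forall_congr' fun d => forall_congr' fun t => ?_
  rw [cnt_stab hp hf]
  split_ifs with h
  · rcases h with ⟨rfl, rfl⟩ | ⟨rfl, rfl⟩
    · rw [z2]; simp
    · rw [z1]; simp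
  · rfl

theorem diag_stab {x y x' y' : ℝ} {P : Finset Pt} (hp : (x, y) ∈ P) (hf : Fresh x' y' P) :
    IsDiagram (stabSet x y x' y' P) ↔ IsDiagram P := by
  rw [← good_empty, ← good_empty, good_stab hp hf]

theorem mem_stab {x y x' y' : ℝ} {P : Finset Pt} {p : Pt} : p ∈ stabSet x y x' y' P ↔
    p = (x', y) ∨ p = (x, y') ∨ p = (x', y') ∨ (p ≠ (x, y) ∧ p ∈ P) := by
  unfold stabSet
  simp

theorem Fresh.mono {x' y' P Q} (h : Fresh x' y' P) (hQ : Q ⊆ P) : Fresh x' y' Q :=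
  ⟨fun p hp => h.1 p (hQ hp), fun p hp => h.2 p (hQ hp)⟩

theorem diag_other {S : Finset Pt} (h : IsDiagram S) {p q : Pt} {d : Bool} (hp : p ∈ S)
    (hr : ∀ r ∈ S, co d r = co d p → r = p ∨ r = q) : q ∈ S := by
  by_contra hq
  have h2 := isDiagram_iff.1 h p hp d
  have : S.filter (fun r => co d r = co d p) ⊆ {p} := by
    intro r h
    simp only [Finset.mem_filter] at h
    rcases hr r h.1 h.2 with rfl | rfl
    · simp
    · exact absurd h.1 hq
  have := Finset.card_le_card this
  unfold cnt at h2
  simp at this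
  omega

theorem nosub_stab {x y x' y' : ℝ} {P : Finset Pt} (hp : (x, y) ∈ P) (hf : Fresh x' y' P) :
    NoSub (stabSet x y x' y' P) ↔ NoSub P := by
  have hx : x ≠ x' := hf.1 _ hp
  have hy : y ≠ y' := hf.2 _ hp
  constructor
  · intro h S hS hdS
    by_cases hm : (x, y) ∈ S
    · have h1 := h (stabSet x y x' y' S) (by
        intro p hp
        rw [mem_stab] at *
        rcases hp with h | h | h | ⟨h, h'⟩
        · exact Or.inl h
        · exact Or.inr (Or.inl h)
        · exact Or.inr (Or.inr (Or.inl h))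
        · exact Or.inr (Or.inr (Or.inr ⟨h, hS h'⟩))) ((diag_stab hm (hf.mono hS)).2 hdS)
      have : ((x', y) : Pt) ∈ stabSet x y x' y' S := mem_stab.2 (Or.inl rfl)
      rw [h1] at this
      simp at this
    · apply h S _ hdS
      intro p hp
      rw [mem_stab]
      exact Or.inr (Or.inr (Or.inr ⟨fun e => hm (e ▸ hp), hS hp⟩))
  · intro h S hS hdS
    have lx : ∀ r ∈ S, r.1 = x' → r = (x', y) ∨ r = (x', y') := by
      intro r hr e
      rcases mem_stab.1 (hS hr) with h | h | h | ⟨h, h'⟩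
      · exact Or.inl h
      · rw [h] at e; exact absurd e hx
      · exact Or.inr h
      · exact absurd e (hf.1 _ h')
    have ly : ∀ r ∈ S, r.2 = y' → r = (x, y') ∨ r = (x', y') := by
      intro r hr e
      rcases mem_stab.1 (hS hr) with h | h | h | ⟨h, h'⟩
      · rw [h] at e; exact absurd e hy
      · exact Or.inl h
      · exact Or.inr h
      · exact absurd e (hf.2 _ h')
    by_cases hm : (x', y') ∈ S
    · exfalso
      have m1 : (x', y) ∈ S := diag_other hdS (d := true) hm (fun r hr e => (lx r hr e).symm)
      have m2 : (x, y') ∈ S := diag_other hdS (d := false) hm (fun r hr e => (ly r hr e).symm)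
      set S0 : Finset Pt := insert (x, y) (S.filter (fun p => p.1 ≠ x' ∧ p.2 ≠ y')) with hS0
      have hsub : S0 ⊆ P := by
        intro p h
        rw [hS0, Finset.mem_insert, Finset.mem_filter] at h
        rcases h with rfl | ⟨h, h1, h2⟩
        · exact hp
        · rcases mem_stab.1 (hS h) with rfl | rfl | rfl | ⟨h, h'⟩
          · exact absurd rfl h1
          · exact absurd rfl h2
          · exact absurd rfl h1
          · exact h'
      have heq : stabSet x y x' y' S0 = S := by
        ext p
        rw [mem_stab, hS0, Finset.mem_insert, Finset.mem_filter]
        constructor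
        · rintro (rfl | rfl | rfl | ⟨h, h' | h'⟩)
          · exact m1
          · exact m2
          · exact hm
          · exact absurd h' h
          · exact h'.1
        · intro h
          by_cases e1 : p.1 = x'
          · rcases lx p h e1 with h | h <;> simp [h]
          · by_cases e2 : p.2 = y'
            · rcases ly p h e2 with h | h <;> simp [h]
            · right; right; right
              refine ⟨?_, Or.inr ⟨h, e1, e2⟩⟩
              rcases mem_stab.1 (hS h) with rfl | rfl | rfl | ⟨h, h'⟩
              · exact absurd rfl e1
              · exact absurd rfl e2
              · exact absurd rfl e1
              · exact h
      have hmem : (x, y) ∈ S0 := by simp [hS0]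
      have := h S0 hsub ((diag_stab hmem (hf.mono hsub)).1 (heq ▸ hdS))
      rw [this] at hmem
      simp at hmem
    · apply h S _ hdS
      intro p hpS
      rcases mem_stab.1 (hS hpS) with rfl | rfl | rfl | ⟨h, h'⟩
      · exact absurd (diag_other hdS (d := true) hpS (fun r hr e => (lx r hr e))) hm
      · exact absurd (diag_other hdS (d := false) hpS (fun r hr e => (ly r hr e))) hm
      · exact absurd hpS hm
      · exact h'

def Upd (T T' : Theta) (i : Fin 4) (x y x' y' : ℝ) : Prop :=
  (x, y) ∈ T.pt i ∧ T'.pt i = stabSet x y x' y' (T.pt i) ∧ ∀ j, j ≠ i → T'.pt j = T.pt j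

theorem OK2.stab {T T' E i x y x' y'} (h : OK2 T E) (hu : Upd T T' i x y x' y')
    (hf : Fresh x' y' T.U) : OK2 T' E := by
  obtain ⟨hp, hi, hj⟩ := hu
  have hfi : ∀ i, Fresh x' y' (T.pt i) := fun i => hf.mono (pt_sub_U T i)
  have hd : ∀ j, j ≠ i → ∀ p ∈ T'.pt i, ∀ q ∈ T'.pt j, p ≠ q ∧ ∀ d, co d p = co d q →
      (d, co d p) ∈ E ∧ i ≠ 3 ∧ j ≠ 3 := by
    intro j hji p hpp q hq
    rw [hi, mem_stab] at hpp
    rw [hj j hji] at hq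
    have c := h.cross i j hji.symm _ hp q hq
    have f1 := (hfi j).1 q hq
    have f2 := (hfi j).2 q hq
    rcases hpp with rfl | rfl | rfl | ⟨h1, h2⟩
    · refine ⟨by rintro rfl; exact f1 rfl, ?_⟩
      rintro (_ | _) e
      · exact c false e
      · exact absurd e.symm f1
    · refine ⟨by rintro rfl; exact f2 rfl, ?_⟩
      rintro (_ | _) e
      · exact absurd e.symm f2
      · exact c true e
    · refine ⟨by rintro rfl; exact f2 rfl, ?_⟩
      rintro (_ | _) e
      · exact absurd e.symm f2
      · exact absurd e.symm f1
    · refine ⟨by rintro rfl; exact h.disj i j hji.symm p h2 hq, ?_⟩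
      exact h.cross i j hji.symm p h2 q hq
  refine ⟨h.ends, ?_, ?_, ?_, ?_⟩
  · intro j
    by_cases e : j = i
    · subst e; rw [hi, good_stab hp (hfi j)]; exact h.good j
    · rw [hj j e]; exact h.good j
  · intro j h3
    by_cases e : j = i
    · subst e; rw [hi, nosub_stab hp (hfi j)]; exact h.nosub j h3
    · rw [hj j e]; exact h.nosub j h3
  · intro j k hjk p hpp hq
    by_cases e : j = i
    · subst e; exact (hd k hjk.symm p hpp p hq).1 rfl
    · by_cases e' : k = i
      · subst e'; exact (hd j hjk p hq p hpp).1 rfl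
      · rw [hj j e] at hpp; rw [hj k e'] at hq; exact h.disj j k hjk p hpp hq
  · intro j k hjk p hpp q hq d hdd
    by_cases e : j = i
    · subst e; exact (hd k hjk.symm p hpp q hq).2 d hdd
    · by_cases e' : k = i
      · subst e'
        have := (hd j hjk q hq p hpp).2 d hdd.symm
        rw [hdd]
        exact ⟨this.1, this.2.2, this.2.1⟩
      · rw [hj j e] at hpp; rw [hj k e'] at hq; exact h.cross j k hjk p hpp q hq d hdd

theorem OK2.unstab {T T' E i x y x' y'} (h : OK2 T' E) (hu : Upd T T' i x y x' y')
    (hf : Fresh x' y' T.U) (hxy : ∀ j, j ≠ i → (x, y) ∉ T.pt j) : OK2 T E := by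
  obtain ⟨hp, hi, hj⟩ := hu
  have hfi : ∀ i, Fresh x' y' (T.pt i) := fun i => hf.mono (pt_sub_U T i)
  have hd : ∀ j, j ≠ i → ∀ p ∈ T.pt i, ∀ q ∈ T.pt j, p ≠ q ∧ ∀ d, co d p = co d q →
      (d, co d p) ∈ E ∧ i ≠ 3 ∧ j ≠ 3 := by
    intro j hji p hpp q hq
    have hq' := hq
    rw [← hj j hji] at hq'
    by_cases e : p = (x, y)
    · subst e
      refine ⟨by rintro rfl; exact hxy j hji hq, ?_⟩
      have m1 : (x', y) ∈ T'.pt i := by rw [hi, mem_stab]; simp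
      have m2 : (x, y') ∈ T'.pt i := by rw [hi, mem_stab]; simp
      rintro (_ | _) e
      · exact h.cross i j hji.symm _ m1 q hq' false e
      · exact h.cross i j hji.symm _ m2 q hq' true e
    · have m : p ∈ T'.pt i := by rw [hi, mem_stab]; simp [e, hpp]
      exact ⟨by rintro rfl; exact h.disj i j hji.symm p m hq', h.cross i j hji.symm p m q hq'⟩
  refine ⟨h.ends, ?_, ?_, ?_, ?_⟩
  · intro j
    by_cases e : j = i
    · subst e; rw [← good_stab hp (hfi j), ← hi]; exact h.good j
    · rw [← hj j e]; exact h.good j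
  · intro j h3
    by_cases e : j = i
    · subst e; rw [← nosub_stab hp (hfi j), ← hi]; exact h.nosub j h3
    · rw [← hj j e]; exact h.nosub j h3
  · intro j k hjk p hpp hq
    by_cases e : j = i
    · subst e; exact (hd k hjk.symm p hpp p hq).1 rfl
    · by_cases e' : k = i
      · subst e'; exact (hd j hjk p hq p hpp).1 rfl
      · rw [← hj j e] at hpp; rw [← hj k e'] at hq; exact h.disj j k hjk p hpp hq
  · intro j k hjk p hpp q hq d hdd
    by_cases e : j = i
    · subst e; exact (hd k hjk.symm p hpp q hq).2 d hdd
    · by_cases e' : k = i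
      · subst e'
        have := (hd j hjk q hq p hpp).2 d hdd.symm
        rw [hdd]
        exact ⟨this.1, this.2.2, this.2.1⟩
      · rw [← hj j e] at hpp; rw [← hj k e'] at hq; exact h.cross j k hjk p hpp q hq d hdd


theorem rtgLift {r s : Theta → Theta → Prop} (f : Theta → Theta)
    (hf : ∀ a b, r a b → s (f a) (f b)) {a b} (h : Relation.ReflTransGen r a b) :
    Relation.ReflTransGen s (f a) (f b) := by
  induction h with
  | refl => exact .refl
  | tail _ h ih => exact ih.tail (hf _ _ h)

def M0 (T T' : Theta) : Prop := ThCyclic T T' ∨ ThComm T T' ∨ ThStabI T T' ∨ ThStabI T' T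

def Eq0 : Theta → Theta → Prop := Relation.ReflTransGen M0

theorem M0.mv {T T'} (hab : M0 T T') : ThMove T T' := by
  rcases hab with h | h | h | h
  · exact Or.inl h
  · exact Or.inr (Or.inl h)
  · exact Or.inr (Or.inr (Or.inl h))
  · exact Or.inr (Or.inr (Or.inr (Or.inl h)))

theorem Eq0.equiv {T T'} (h : Eq0 T T') : ThetaEquiv T T' :=
  rtgLift id (fun _ _ h => h.mv) h

theorem M0.ok {T T'} (h : M0 T T') : ThetaOK T' := by
  rcases h with h | h | h | h
  · exact h.2.1
  · exact h.2.1
  · exact h.2.1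
  · exact h.1

theorem Eq0.ok {T T'} (h : Eq0 T T') (h0 : ThetaOK T) : ThetaOK T' := by
  induction h with
  | refl => exact h0
  | tail _ h _ => exact h.ok

/- transposition -/
def tau (p : Pt) : Pt := (p.2, p.1)

@[simp] theorem tau_1 (p : Pt) : (tau p).1 = p.2 := rfl
@[simp] theorem tau_2 (p : Pt) : (tau p).2 = p.1 := rfl
@[simp] theorem tau_tau (p : Pt) : tau (tau p) = p := rfl

theorem tr_def (T : Theta) : T.tr = mapTheta tau T := rfl

theorem tr_tr (T : Theta) : T.tr.tr = T := by
  rw [tr_def, tr_def, mapTheta_comp]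
  exact mapTheta_id' (fun p _ => rfl)

theorem co_tau (d : Bool) (p : Pt) : co d (tau p) = co (!d) p := by
  cases d <;> rfl

theorem tau_inj : Function.Injective tau := fun p q h => by
  rw [← tau_tau p, h, tau_tau]

theorem cnt_tau (P : Finset Pt) (d t) : cnt (P.image tau) d t = cnt P (!d) t := by
  unfold cnt
  rw [Finset.filter_image, Finset.card_image_of_injective _ tau_inj]
  simp only [co_tau]

theorem image_tau_tau (P : Finset Pt) : (P.image tau).image tau = P := by
  rw [Finset.image_image]
  have : tau ∘ tau = id := rfl
  rw [this, Finset.image_id]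

theorem diag_tau {P : Finset Pt} (h : IsDiagram P) : IsDiagram (P.image tau) := by
  rw [diag_cnt] at *
  intro d t
  rw [cnt_tau]
  exact h _ _

def lt (l : Bool × ℝ) : Bool × ℝ := (!l.1, l.2)

theorem mem_lt {E : Set (Bool × ℝ)} {d t} : (d, t) ∈ lt '' E ↔ (!d, t) ∈ E := by
  constructor
  · rintro ⟨⟨d', t'⟩, h, e⟩
    simp only [lt, Prod.mk.injEq] at e
    obtain ⟨rfl, rfl⟩ := e
    simpa using h
  · intro h
    exact ⟨_, h, by simp [lt]⟩

theorem OK2.tr {T E} (h : OK2 T E) : OK2 T.tr (lt '' E) := by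
  rw [tr_def]
  refine ⟨?_, ?_, ?_, ?_, ?_⟩
  · obtain ⟨e1, e2, hne, he⟩ := h.ends
    refine ⟨lt e1, lt e2, ?_, by rw [he, Set.image_pair]⟩
    intro e
    apply hne
    simp only [lt, Prod.mk.injEq] at e
    exact Prod.ext (by simpa using e.1) e.2
  · intro i d t
    have := h.good i (!d) t
    rw [mapTheta_pt, cnt_tau]
    refine ⟨this.1, ?_⟩
    rw [this.2]
    unfold EE
    split_ifs
    · simp
    · exact mem_lt.symm
  · intro i hi S hS hdS
    rw [mapTheta_pt] at hS
    have : S.image tau = ∅ := by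
      apply h.nosub i hi _ _ (diag_tau hdS)
      have := Finset.image_subset_image (f := tau) hS
      rwa [image_tau_tau] at this
    simpa using this
  · intro i j hij p hp hq
    rw [mapTheta_pt] at hp hq
    obtain ⟨p, hp', rfl⟩ := Finset.mem_image.1 hp
    obtain ⟨q, hq', e⟩ := Finset.mem_image.1 hq
    have := tau_inj e
    subst this
    exact h.disj i j hij _ hp' hq'
  · intro i j hij p hp q hq d hd
    rw [mapTheta_pt] at hp hq
    obtain ⟨p, hp', rfl⟩ := Finset.mem_image.1 hp
    obtain ⟨q, hq', rfl⟩ := Finset.mem_image.1 hq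
    rw [co_tau, co_tau] at hd
    have := h.cross i j hij p hp' q hq' _ hd
    refine ⟨?_, this.2⟩
    rw [co_tau, mem_lt]
    exact this.1

theorem ok_tr {T} (h : ThetaOK T) : ThetaOK T.tr := (ok2_of h).tr.ok

def rho (p : Pt) : Pt := (-p.1, -p.2)
@[simp] theorem rho_1 (p : Pt) : (rho p).1 = -p.1 := rfl
@[simp] theorem rho_2 (p : Pt) : (rho p).2 = -p.2 := rfl
@[simp] theorem rho_rho (p : Pt) : rho (rho p) = p := by simp [rho]

theorem rho_inj : Function.Injective rho := fun p q h => by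
  rw [← rho_rho p, h, rho_rho]

theorem rho_cm : rho = cm (fun _ t => -t) := rfl

theorem map_rho_rho (T : Theta) : mapTheta rho (mapTheta rho T) = T := by
  rw [mapTheta_comp]
  exact mapTheta_id' (fun p _ => rho_rho p)

theorem ok_rho {T} (h : ThetaOK T) : ThetaOK (mapTheta rho T) := by
  rw [rho_cm]
  apply ok_image h
  intro p _ q _ d e
  exact neg_injective e

theorem cyc_transfer {σ : Pt → Pt} (hσ : ∀ T, ThetaOK T → ThetaOK (mapTheta σ T))
    (hd : ∀ U f, CyclicData U f → ∃ g, CyclicData (U.image σ) g ∧ ∀ p ∈ U, g (σ p) = σ (f p))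
    {T T'} (h : ThCyclic T T') : ThCyclic (mapTheta σ T) (mapTheta σ T') := by
  obtain ⟨h1, h2, f, hf, rfl⟩ := h
  obtain ⟨g, hg, e⟩ := hd _ _ hf
  refine ⟨hσ _ h1, hσ _ h2, g, by rwa [mapTheta_U], ?_⟩
  rw [mapTheta_comp, mapTheta_comp]
  exact mapTheta_congr (fun p hp => (e p hp).symm)

theorem comm_transfer {σ : Pt → Pt} (hσ : ∀ T, ThetaOK T → ThetaOK (mapTheta σ T))
    (hd : ∀ U f, CommData U f → ∃ g, CommData (U.image σ) g ∧ ∀ p ∈ U, g (σ p) = σ (f p))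
    {T T'} (h : ThComm T T') : ThComm (mapTheta σ T) (mapTheta σ T') := by
  obtain ⟨h1, h2, f, hf, rfl⟩ := h
  obtain ⟨g, hg, e⟩ := hd _ _ hf
  refine ⟨hσ _ h1, hσ _ h2, g, by rwa [mapTheta_U], ?_⟩
  rw [mapTheta_comp, mapTheta_comp]
  exact mapTheta_congr (fun p hp => (e p hp).symm)

theorem cyc_tau (U : Finset Pt) (f) (h : CyclicData U f) :
    ∃ g, CyclicData (U.image tau) g ∧ ∀ p ∈ U, g (tau p) = tau (f p) := by
  rcases h with ⟨x0, x1, ⟨p0, hp0, e0⟩, h, rfl⟩ | ⟨x0, x1, ⟨p0, hp0, e0⟩, h, rfl⟩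
  · refine ⟨hmap x0 x1, Or.inr ⟨x0, x1, ⟨tau p0, Finset.mem_image_of_mem _ hp0, e0⟩, ?_, rfl⟩, ?_⟩
    · simpa only [Finset.forall_mem_image, tau_2] using h
    · intro p _
      unfold hmap vmap
      by_cases h1 : p.1 = x0 <;> simp [h1, tau]
  · refine ⟨vmap x0 x1, Or.inl ⟨x0, x1, ⟨tau p0, Finset.mem_image_of_mem _ hp0, e0⟩, ?_, rfl⟩, ?_⟩
    · simpa only [Finset.forall_mem_image, tau_1] using h
    · intro p _
      unfold hmap vmap
      by_cases h1 : p.2 = x0 <;> simp [h1, tau]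

theorem comm_tau (U : Finset Pt) (f) (h : CommData U f) :
    ∃ g, CommData (U.image tau) g ∧ ∀ p ∈ U, g (tau p) = tau (f p) := by
  rcases h with ⟨x1, x2, hne, ⟨p0, hp0, e0⟩, ⟨p1, hp1, e1⟩, h1, h2, h3, rfl⟩ |
    ⟨x1, x2, hne, ⟨p0, hp0, e0⟩, ⟨p1, hp1, e1⟩, h1, h2, h3, rfl⟩
  · refine ⟨swaph x1 x2, Or.inr ⟨x1, x2, hne, ⟨tau p0, Finset.mem_image_of_mem _ hp0, e0⟩,
      ⟨tau p1, Finset.mem_image_of_mem _ hp1, e1⟩, ?_, ?_, ?_, rfl⟩, ?_⟩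
    · simpa only [Finset.forall_mem_image, tau_2] using h1
    · simpa only [Finset.forall_mem_image, tau_2, tau_1] using h2
    · unfold NoInterleaveH
      unfold NoInterleaveV at h3
      simpa only [Finset.forall_mem_image, tau_2, tau_1] using h3
    · intro p _
      unfold swaph swapv
      by_cases h1 : p.1 = x1 <;> by_cases h2 : p.1 = x2 <;> simp [h1, h2, hne, hne.symm, tau]
  · refine ⟨swapv x1 x2, Or.inl ⟨x1, x2, hne, ⟨tau p0, Finset.mem_image_of_mem _ hp0, e0⟩,
      ⟨tau p1, Finset.mem_image_of_mem _ hp1, e1⟩, ?_, ?_, ?_, rfl⟩, ?_⟩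
    · simpa only [Finset.forall_mem_image, tau_1] using h1
    · simpa only [Finset.forall_mem_image, tau_2, tau_1] using h2
    · unfold NoInterleaveV
      unfold NoInterleaveH at h3
      simpa only [Finset.forall_mem_image, tau_2, tau_1] using h3
    · intro p _
      unfold swaph swapv
      by_cases h1 : p.2 = x1 <;> by_cases h2 : p.2 = x2 <;> simp [h1, h2, hne, hne.symm, tau]

theorem upd_SD {T T' : Theta} {i x y x' y'} (h : Upd T T' i x y x' y') :
    (((x, y) ∈ T.a ∧ T' = ⟨stabSet x y x' y' T.a, T.b, T.c, T.d⟩) ∨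
     ((x, y) ∈ T.b ∧ T' = ⟨T.a, stabSet x y x' y' T.b, T.c, T.d⟩) ∨
     ((x, y) ∈ T.c ∧ T' = ⟨T.a, T.b, stabSet x y x' y' T.c, T.d⟩) ∨
     ((x, y) ∈ T.d ∧ T' = ⟨T.a, T.b, T.c, stabSet x y x' y' T.d⟩)) := by
  obtain ⟨h1, h2, h3⟩ := h
  cases T' with
  | mk a b c d =>
  have k0 := h3 0
  have k1 := h3 1
  have k2 := h3 2
  have k3 := h3 3
  fin_cases i
  · simp at h1 h2 k0 k1 k2 k3
    subst h2 k1 k2 k3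
    exact Or.inl ⟨h1, rfl⟩
  · simp at h1 h2 k0 k1 k2 k3
    subst h2 k0 k2 k3
    exact Or.inr (Or.inl ⟨h1, rfl⟩)
  · simp at h1 h2 k0 k1 k2 k3
    subst h2 k0 k1 k3
    exact Or.inr (Or.inr (Or.inl ⟨h1, rfl⟩))
  · simp at h1 h2 k0 k1 k2 k3
    subst h2 k0 k1 k2
    exact Or.inr (Or.inr (Or.inr ⟨h1, rfl⟩))

theorem SD_upd {T T' : Theta} {x y x' y'} (h :
    (((x, y) ∈ T.a ∧ T' = ⟨stabSet x y x' y' T.a, T.b, T.c, T.d⟩) ∨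
     ((x, y) ∈ T.b ∧ T' = ⟨T.a, stabSet x y x' y' T.b, T.c, T.d⟩) ∨
     ((x, y) ∈ T.c ∧ T' = ⟨T.a, T.b, stabSet x y x' y' T.c, T.d⟩) ∨
     ((x, y) ∈ T.d ∧ T' = ⟨T.a, T.b, T.c, stabSet x y x' y' T.d⟩))) :
    ∃ i, Upd T T' i x y x' y' := by
  rcases h with ⟨h, rfl⟩ | ⟨h, rfl⟩ | ⟨h, rfl⟩ | ⟨h, rfl⟩
  · exact ⟨0, h, rfl, fun j hj => by fin_cases j <;> first | rfl | exact absurd rfl hj⟩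
  · exact ⟨1, h, rfl, fun j hj => by fin_cases j <;> first | rfl | exact absurd rfl hj⟩
  · exact ⟨2, h, rfl, fun j hj => by fin_cases j <;> first | rfl | exact absurd rfl hj⟩
  · exact ⟨3, h, rfl, fun j hj => by fin_cases j <;> first | rfl | exact absurd rfl hj⟩

theorem stabI_iff {T T' : Theta} : ThStabI T T' ↔ ThetaOK T ∧ ThetaOK T' ∧
    ∃ x y x' y' i, Upd T T' i x y x' y' ∧ Fresh x' y' T.U ∧
    (∀ p ∈ T.U, ¬ (min x x' < p.1 ∧ p.1 < max x x')) ∧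
    (∀ p ∈ T.U, ¬ (min y y' < p.2 ∧ p.2 < max y y')) ∧
    0 < (x - x') * (y - y') := by
  unfold ThStabI
  constructor
  · rintro ⟨h1, h2, x, y, x', y', hm, hx, hy, f1, f2, b1, b2, hI, hs⟩
    obtain ⟨i, hi⟩ := SD_upd hs
    exact ⟨h1, h2, x, y, x', y', i, hi, ⟨f1, f2⟩, b1, b2, hI⟩
  · rintro ⟨h1, h2, x, y, x', y', i, hu, ⟨f1, f2⟩, b1, b2, hI⟩
    have hm := pt_sub_U T i hu.1
    exact ⟨h1, h2, x, y, x', y', hm, f1 _ hm, f2 _ hm, f1, f2, b1, b2, hI, upd_SD hu⟩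

theorem stab_tau {T T'} (h : ThStabI T T') : ThStabI T.tr T'.tr := by
  rw [stabI_iff] at *
  obtain ⟨h1, h2, x, y, x', y', i, ⟨u1, u2, u3⟩, ⟨f1, f2⟩, b1, b2, hI⟩ := h
  rw [tr_def, tr_def]
  refine ⟨ok_tr h1, ok_tr h2, y, x, y', x', i, ⟨?_, ?_, ?_⟩, ?_, ?_, ?_, by linarith⟩
  · rw [mapTheta_pt]; exact Finset.mem_image_of_mem tau u1
  · rw [mapTheta_pt, mapTheta_pt, u2]
    ext p
    have e : ∀ P : Finset Pt, p ∈ P.image tau ↔ tau p ∈ P := by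
      intro P
      rw [Finset.mem_image]
      exact ⟨fun ⟨q, hq, e⟩ => by rw [← e]; exact hq, fun h => ⟨_, h, rfl⟩⟩
    rw [e, mem_stab, mem_stab, e]
    have e2 : ∀ a b : ℝ, tau p = (a, b) ↔ p = (b, a) := by
      intro a b
      simp [tau, Prod.ext_iff, and_comm]
    simp only [e2, ne_eq]
    tauto
  · intro j hj
    rw [mapTheta_pt, mapTheta_pt, u3 j hj]
  · rw [mapTheta_U]
    exact ⟨Finset.forall_mem_image.2 f2, Finset.forall_mem_image.2 f1⟩
  · rw [mapTheta_U]; exact Finset.forall_mem_image.2 b2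
  · rw [mapTheta_U]; exact Finset.forall_mem_image.2 b1

theorem M0.tr {T T'} (h : M0 T T') : M0 T.tr T'.tr := by
  rcases h with h | h | h | h
  · exact Or.inl (cyc_transfer (fun _ => ok_tr) cyc_tau h)
  · exact Or.inr (Or.inl (comm_transfer (fun _ => ok_tr) comm_tau h))
  · exact Or.inr (Or.inr (Or.inl (stab_tau h)))
  · exact Or.inr (Or.inr (Or.inr (stab_tau h)))

theorem Eq0.tr {T T'} (h : Eq0 T T') : Eq0 T.tr T'.tr :=
  rtgLift Theta.tr (fun _ _ h => h.tr) h

theorem ThMove.tr {T T'} (h : ThMove T T') : ThMove T.tr T'.tr := by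
  rcases h with h | h | h | h | h
  · exact Or.inl (cyc_transfer (fun _ => ok_tr) cyc_tau h)
  · exact Or.inr (Or.inl (comm_transfer (fun _ => ok_tr) comm_tau h))
  · exact Or.inr (Or.inr (Or.inl (stab_tau h)))
  · exact Or.inr (Or.inr (Or.inr (Or.inl (stab_tau h))))
  · refine Or.inr (Or.inr (Or.inr (Or.inr ?_)))
    rcases h with h | h
    · right; rwa [tr_tr, tr_tr]
    · left; exact h

theorem ThetaEquiv.tr {T T'} (h : ThetaEquiv T T') : ThetaEquiv T.tr T'.tr :=
  rtgLift Theta.tr (fun _ _ h => ThMove.tr h) h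

/- point reflection -/
theorem cyc_rho (U : Finset Pt) (f) (h : CyclicData U f) :
    ∃ g, CyclicData (U.image rho) g ∧ ∀ p ∈ U, g (rho p) = rho (f p) := by
  rcases h with ⟨x0, x1, ⟨p0, hp0, e0⟩, h, rfl⟩ | ⟨x0, x1, ⟨p0, hp0, e0⟩, h, rfl⟩
  · refine ⟨vmap (-x0) (-x1), Or.inl ⟨-x0, -x1, ⟨rho p0, Finset.mem_image_of_mem _ hp0, by simp [e0]⟩, ?_, rfl⟩, ?_⟩
    · simp only [Finset.forall_mem_image, rho_1, neg_le_neg_iff, neg_lt_neg_iff, ne_eq, neg_inj]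
      exact h.symm
    · intro p _
      unfold vmap
      by_cases h1 : p.1 = x0 <;> simp [h1, rho]
  · refine ⟨hmap (-x0) (-x1), Or.inr ⟨-x0, -x1, ⟨rho p0, Finset.mem_image_of_mem _ hp0, by simp [e0]⟩, ?_, rfl⟩, ?_⟩
    · simp only [Finset.forall_mem_image, rho_2, neg_le_neg_iff, neg_lt_neg_iff, ne_eq, neg_inj]
      exact h.symm
    · intro p _
      unfold hmap
      by_cases h1 : p.2 = x0 <;> simp [h1, rho]

theorem comm_rho (U : Finset Pt) (f) (h : CommData U f) :
    ∃ g, CommData (U.image rho) g ∧ ∀ p ∈ U, g (rho p) = rho (f p) := by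
  rcases h with ⟨x1, x2, hne, ⟨p0, hp0, e0⟩, ⟨p1, hp1, e1⟩, h1, h2, h3, rfl⟩ |
    ⟨x1, x2, hne, ⟨p0, hp0, e0⟩, ⟨p1, hp1, e1⟩, h1, h2, h3, rfl⟩
  · refine ⟨swapv (-x1) (-x2), Or.inl ⟨-x1, -x2, by simpa using hne, ⟨rho p0, Finset.mem_image_of_mem _ hp0, by simp [e0]⟩,
      ⟨rho p1, Finset.mem_image_of_mem _ hp1, by simp [e1]⟩, ?_, ?_, ?_, rfl⟩, ?_⟩
    · simp only [Finset.forall_mem_image, rho_1, min_neg_neg, max_neg_neg, neg_lt_neg_iff]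
      exact fun p hp h => h1 p hp ⟨h.2, h.1⟩
    · simp only [Finset.forall_mem_image, rho_1, rho_2, neg_inj, ne_eq]
      exact h2
    · unfold NoInterleaveV at h3 ⊢
      simp only [Finset.forall_mem_image, rho_1, rho_2, neg_inj, neg_lt_neg_iff]
      intro p hp p' hp' q hq q' hq' a1 a2 a3 a4 h
      apply h3 p' hp' p hp q' hq' q hq a2 a1 a4 a3
      tauto
    · intro p _
      unfold swapv
      by_cases h1 : p.1 = x1 <;> by_cases h2 : p.1 = x2 <;> simp [h1, h2, hne, hne.symm, rho]
  · refine ⟨swaph (-x1) (-x2), Or.inr ⟨-x1, -x2, by simpa using hne, ⟨rho p0, Finset.mem_image_of_mem _ hp0, by simp [e0]⟩,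
      ⟨rho p1, Finset.mem_image_of_mem _ hp1, by simp [e1]⟩, ?_, ?_, ?_, rfl⟩, ?_⟩
    · simp only [Finset.forall_mem_image, rho_2, min_neg_neg, max_neg_neg, neg_lt_neg_iff]
      exact fun p hp h => h1 p hp ⟨h.2, h.1⟩
    · simp only [Finset.forall_mem_image, rho_1, rho_2, neg_inj, ne_eq]
      exact h2
    · unfold NoInterleaveH at h3 ⊢
      simp only [Finset.forall_mem_image, rho_1, rho_2, neg_inj, neg_lt_neg_iff]
      intro p hp p' hp' q hq q' hq' a1 a2 a3 a4 h
      apply h3 p' hp' p hp q' hq' q hq a2 a1 a4 a3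
      tauto
    · intro p _
      unfold swaph
      by_cases h1 : p.2 = x1 <;> by_cases h2 : p.2 = x2 <;> simp [h1, h2, hne, hne.symm, rho]

theorem stab_rho {T T'} (h : ThStabI T T') : ThStabI (mapTheta rho T) (mapTheta rho T') := by
  rw [stabI_iff] at *
  obtain ⟨h1, h2, x, y, x', y', i, ⟨u1, u2, u3⟩, ⟨f1, f2⟩, b1, b2, hI⟩ := h
  refine ⟨ok_rho h1, ok_rho h2, -x, -y, -x', -y', i, ⟨?_, ?_, ?_⟩, ?_, ?_, ?_, by linarith⟩
  · rw [mapTheta_pt]; exact Finset.mem_image_of_mem rho u1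
  · rw [mapTheta_pt, mapTheta_pt, u2]
    ext p
    have e : ∀ P : Finset Pt, p ∈ P.image rho ↔ rho p ∈ P := by
      intro P
      rw [Finset.mem_image]
      exact ⟨fun ⟨q, hq, e⟩ => by rw [← e, rho_rho]; exact hq, fun h => ⟨_, h, rho_rho p⟩⟩
    rw [e, mem_stab, mem_stab, e]
    have e2 : ∀ a b : ℝ, rho p = (a, b) ↔ p = (-a, -b) := by
      intro a b
      simp [rho, Prod.ext_iff, neg_eq_iff_eq_neg]
    simp only [e2, ne_eq]
  · intro j hj
    rw [mapTheta_pt, mapTheta_pt, u3 j hj]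
  · rw [mapTheta_U]
    unfold Fresh
    simp only [Finset.forall_mem_image, rho_1, rho_2, ne_eq, neg_inj]
    exact ⟨f1, f2⟩
  · rw [mapTheta_U]
    simp only [Finset.forall_mem_image, rho_1, min_neg_neg, max_neg_neg, neg_lt_neg_iff]
    exact fun p hp h => b1 p hp ⟨h.2, h.1⟩
  · rw [mapTheta_U]
    simp only [Finset.forall_mem_image, rho_2, min_neg_neg, max_neg_neg, neg_lt_neg_iff]
    exact fun p hp h => b2 p hp ⟨h.2, h.1⟩

theorem Eq0.rho {T T'} (h : Eq0 T T') : Eq0 (mapTheta rho T) (mapTheta rho T') :=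
  rtgLift (mapTheta _root_.rho) (fun _ _ h => by
    rcases h with h | h | h | h
    · exact Or.inl (cyc_transfer (fun _ => ok_rho) cyc_rho h)
    · exact Or.inr (Or.inl (comm_transfer (fun _ => ok_rho) comm_rho h))
    · exact Or.inr (Or.inr (Or.inl (stab_rho h)))
    · exact Or.inr (Or.inr (Or.inr (stab_rho h)))) h


def hx (φ : ℝ → ℝ) (p : Pt) : Pt := (φ p.1, p.2)
@[simp] theorem hx_1 (φ p) : (hx φ p).1 = φ p.1 := rfl
@[simp] theorem hx_2 (φ p) : (hx φ p).2 = p.2 := rfl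

theorem hx_cm (φ : ℝ → ℝ) : hx φ = cm (fun d => if d then φ else id) := by
  funext p; simp [hx, cm]

theorem ok_hx {T : Theta} (h : ThetaOK T) {φ : ℝ → ℝ}
    (hφ : ∀ p ∈ T.U, ∀ q ∈ T.U, φ p.1 = φ q.1 → p.1 = q.1) : ThetaOK (mapTheta (hx φ) T) := by
  rw [hx_cm]
  apply ok_image h
  intro p hp q hq d e
  cases d
  · simpa using e
  · exact hφ p hp q hq (by simpa using e)

theorem vmap_hx (x0 x1 : ℝ) : vmap x0 x1 = hx (fun s => if s = x0 then x1 else s) := by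
  funext p
  by_cases h : p.1 = x0 <;> simp [vmap, hx, h]

theorem swapv_hx (x1 x2 : ℝ) :
    swapv x1 x2 = hx (fun s => if s = x1 then x2 else if s = x2 then x1 else s) := by
  funext p
  by_cases h : p.1 = x1 <;> by_cases h2 : p.1 = x2 <;> 
    simp only [swapv, hx, h, h2, if_true, if_false] <;> split_ifs <;> rfl

theorem rot (n : ℕ) : ∀ (T : Theta) (x0 : ℝ) (χ : ℝ → ℝ), (T.U.filter (fun p => p.1 ≤ x0)).card = n →
    ThetaOK T → (∀ p ∈ T.U, p.1 ≤ x0 → x0 < χ p.1) →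
    (∀ p ∈ T.U, ∀ q ∈ T.U, p.1 ≤ x0 → q.1 < χ p.1) →
    (∀ p ∈ T.U, ∀ q ∈ T.U, p.1 ≤ x0 → q.1 ≤ x0 → p.1 < q.1 → χ p.1 < χ q.1) →
    Eq0 T (mapTheta (hx (fun s => if s ≤ x0 then χ s else s)) T) := by
  induction n using Nat.strong_induction_on with
  | _ n ih =>
  intro T x0 χ hn hT h0 h1 h2
  by_cases hne : (T.U.filter (fun p => p.1 ≤ x0)).Nonempty
  · obtain ⟨p0, hp0, hmin⟩ := Finset.exists_min_image _ (fun p => p.1) hne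
    rw [Finset.mem_filter] at hp0
    have hmin' : ∀ p ∈ T.U, p0.1 ≤ p.1 := by
      intro p hp
      by_cases hpx : p.1 ≤ x0
      · exact hmin p (Finset.mem_filter.2 ⟨hp, hpx⟩)
      · linarith [hp0.2]
    set v := p0.1 with hv
    set T1 := mapTheta (vmap v (χ v)) T with hT1
    have hU : T1.U = T.U.image (vmap v (χ v)) := mapTheta_U _ _
    have ok1 : ThetaOK T1 := by
      rw [hT1, vmap_hx]
      apply ok_hx hT
      intro p hp q hq e
      have a1 := h1 p0 hp0.1 p hp hp0.2
      have a2 := h1 p0 hp0.1 q hq hp0.2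
      split_ifs at e with c1 c2 c2
      · rw [c1, c2]
      · rw [← e] at a2; exact absurd a2 (lt_irrefl _)
      · rw [e] at a1; exact absurd a1 (lt_irrefl _)
      · exact e
    have step : Eq0 T T1 := by
      refine .single (Or.inl ⟨hT, ok1, _, Or.inl ⟨v, χ v, ⟨p0, hp0.1, rfl⟩, Or.inl ⟨hmin', ?_⟩, rfl⟩, rfl⟩)
      intro p hp _
      exact h1 p0 hp0.1 p hp hp0.2
    have key : ∀ p ∈ T1.U, (p.1 = χ v) ∨ (p ∈ T.U ∧ p.1 ≠ v) := by
      rw [hU]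
      intro p hp
      obtain ⟨q, hq, rfl⟩ := Finset.mem_image.1 hp
      unfold vmap
      split_ifs with c
      · exact Or.inl rfl
      · exact Or.inr ⟨hq, c⟩
    have key' : ∀ p ∈ T1.U, p.1 ≤ x0 → (p ∈ T.U ∧ p.1 ≠ v) := by
      intro p hp hpx
      rcases key p hp with e | e
      · have := h0 p0 hp0.1 hp0.2
        rw [e] at hpx
        exact absurd hpx (not_le.2 this)
      · exact e
    have step2 := ih _ (by
        rw [← hn]
        apply Finset.card_lt_card (t := T.U.filter (fun p => p.1 ≤ x0)) (s := T1.U.filter (fun p => p.1 ≤ x0))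
        rw [Finset.ssubset_iff_of_subset]
        · refine ⟨p0, Finset.mem_filter.2 hp0, ?_⟩
          intro h
          rw [Finset.mem_filter] at h
          exact (key' p0 h.1 h.2).2 rfl
        · intro p hp
          rw [Finset.mem_filter] at hp ⊢
          exact ⟨(key' p hp.1 hp.2).1, hp.2⟩) T1 x0 χ rfl ok1 
        (fun p hp hpx => h0 p (key' p hp hpx).1 hpx) 
        (by
          intro p hp q hq hpx
          have kp := key' p hp hpx
          rcases key q hq with e | e
          · rw [e]
            exact h2 p0 hp0.1 p kp.1 hp0.2 hpx (lt_of_le_of_ne (hmin' p kp.1) (Ne.symm kp.2))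
          · exact h1 p kp.1 q e.1 hpx)
        (fun p hp q hq hpx hqx => h2 p (key' p hp hpx).1 q (key' q hq hqx).1 hpx hqx)
    have : mapTheta (hx (fun s => if s ≤ x0 then χ s else s)) T1 =
        mapTheta (hx (fun s => if s ≤ x0 then χ s else s)) T := by
      rw [hT1, mapTheta_comp]
      apply mapTheta_congr
      intro p hp
      simp only [Function.comp, vmap]
      split_ifs with c
      · have : ¬ χ v ≤ x0 := not_le.2 (h0 p0 hp0.1 hp0.2)
        simp only [hx, this, if_false, c, hp0.2, if_true]
      · rfl
    rw [this] at step2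
    exact step.trans step2
  · rw [mapTheta_id']
    · exact .refl
    · intro p hp
      have : ¬ p.1 ≤ x0 := fun h => hne ⟨p, Finset.mem_filter.2 ⟨hp, h⟩⟩
      simp [hx, this]

theorem rotL (T : Theta) (x0 : ℝ) (χ : ℝ → ℝ)
    (hT : ThetaOK T) (h0 : ∀ p ∈ T.U, x0 ≤ p.1 → χ p.1 < x0)
    (h1 : ∀ p ∈ T.U, ∀ q ∈ T.U, x0 ≤ p.1 → χ p.1 < q.1)
    (h2 : ∀ p ∈ T.U, ∀ q ∈ T.U, x0 ≤ p.1 → x0 ≤ q.1 → p.1 < q.1 → χ p.1 < χ q.1) :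
    Eq0 T (mapTheta (hx (fun s => if x0 ≤ s then χ s else s)) T) := by
  have := rot _ (mapTheta rho T) (-x0) (fun s => - χ (-s)) rfl (ok_rho hT)
    (by rw [mapTheta_U, Finset.forall_mem_image]
        intro p hp h
        simp only [rho_1, neg_neg] at h ⊢
        have := h0 p hp (by linarith)
        linarith)
    (by rw [mapTheta_U]
        simp only [Finset.forall_mem_image, rho_1, neg_neg]
        intro p hp q hq h
        have := h1 p hp q hq (by linarith)
        linarith)
    (by rw [mapTheta_U]
        simp only [Finset.forall_mem_image, rho_1, neg_neg]
        intro p hp q hq h h' h''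
        have := h2 q hq p hp (by linarith) (by linarith) (by linarith)
        linarith)
  have := this.rho
  rw [map_rho_rho, mapTheta_comp, mapTheta_comp] at this
  convert this using 1
  apply mapTheta_congr
  intro p hp
  simp only [Function.comp, rho, hx, neg_neg, neg_le_neg_iff]
  by_cases h : x0 ≤ p.1 <;> simp [h]

theorem exB (U : Finset Pt) (φ : ℝ → ℝ) : ∃ M : ℝ, ∀ p ∈ U, |φ p.1| < M := by
  obtain ⟨M, hM⟩ := (U.image (fun p => |φ p.1|)).exists_le
  exact ⟨M + 1, fun p hp => by have := hM _ (Finset.mem_image_of_mem _ hp); linarith⟩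

theorem iso {T : Theta} (hT : ThetaOK T) {φ : ℝ → ℝ}
    (hφ : ∀ p ∈ T.U, ∀ q ∈ T.U, p.1 < q.1 → φ p.1 < φ q.1) :
    Eq0 T (mapTheta (hx φ) T) := by
  obtain ⟨M, hM⟩ := exB T.U φ
  obtain ⟨N, hN⟩ := exB T.U id
  set L := |M| + |N| + |N| + 1 with hL
  have b1 := le_abs_self M
  have b2 := le_abs_self N
  have b3 := abs_nonneg M
  have b4 := abs_nonneg N
  have bb : ∀ p ∈ T.U, p.1 < N ∧ -N < p.1 ∧ φ p.1 < M ∧ -M < φ p.1 := by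
    intro p hp
    have h1 := abs_lt.1 (hM p hp)
    have h2 := abs_lt.1 (hN p hp)
    simp only [id] at h2
    exact ⟨h2.2, h2.1, h1.2, h1.1⟩
  have s1 := rot _ T N (fun s => s + L) rfl hT
    (fun p hp _ => by have := bb p hp; linarith)
    (fun p hp q hq _ => by have := bb p hp; have := bb q hq; linarith)
    (fun p hp q hq _ _ h => by linarith)
  have e1 : mapTheta (hx (fun s => if s ≤ N then s + L else s)) T = mapTheta (hx (fun s => s + L)) T := by
    apply mapTheta_congr
    intro p hp
    have := (bb p hp).1.le
    simp [hx, this]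
  rw [e1] at s1
  have s2 := rotL (mapTheta (hx (fun s => s + L)) T) (|M| + |N|) (fun s => φ (s - L)) (s1.ok hT)
    (by rw [mapTheta_U]
        simp only [Finset.forall_mem_image, hx_1, add_sub_cancel_right]
        intro p hp _
        have := bb p hp; linarith)
    (by rw [mapTheta_U]
        simp only [Finset.forall_mem_image, hx_1, add_sub_cancel_right]
        intro p hp q hq _
        have := bb p hp; have := bb q hq; linarith)
    (by rw [mapTheta_U]
        simp only [Finset.forall_mem_image, hx_1, add_sub_cancel_right]
        intro p hp q hq _ _ h
        exact hφ p hp q hq (by linarith))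
  rw [mapTheta_comp] at s2
  have e2 : mapTheta (hx (fun s => if |M| + |N| ≤ s then φ (s - L) else s) ∘ hx (fun s => s + L)) T
     = mapTheta (hx φ) T := by
    apply mapTheta_congr
    intro p hp
    have : |M| + |N| ≤ p.1 + L := by have := bb p hp; linarith
    simp [hx, this]
  rw [e2] at s2
  exact s1.trans s2


theorem ext_mono (S F : Finset ℝ) (φ : ℝ → ℝ) (h : ∀ s ∈ S, ∀ t ∈ S, s < t → φ s < φ t) :
    ∃ ψ : ℝ → ℝ, (∀ s ∈ S ∪ F, ∀ t ∈ S ∪ F, s < t → ψ s < ψ t) ∧ ∀ s ∈ S, ψ s = φ s := by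
  induction F using Finset.induction_on with
  | empty => exact ⟨φ, by simpa using h, fun _ _ => rfl⟩
  | insert x F hx ih =>
    obtain ⟨ψ, h1, h2⟩ := ih
    by_cases hxS : x ∈ S ∪ F
    · refine ⟨ψ, ?_, h2⟩
      rw [Finset.union_insert, Finset.insert_eq_of_mem hxS]
      exact h1
    · obtain ⟨m, hm1, hm2⟩ := Order.exists_between_finsets (((S ∪ F).filter (· < x)).image ψ)
        (((S ∪ F).filter (x < ·)).image ψ) (by
          intro a ha b hb
          obtain ⟨a, ha', rfl⟩ := Finset.mem_image.1 ha
          obtain ⟨b, hb', rfl⟩ := Finset.mem_image.1 hb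
          rw [Finset.mem_filter] at ha' hb'
          exact h1 a ha'.1 b hb'.1 (ha'.2.trans hb'.2))
      refine ⟨Function.update ψ x m, ?_, ?_⟩
      · rw [Finset.union_insert]
        intro s hs t ht hst
        rw [Finset.mem_insert] at hs ht
        by_cases e1 : s = x
        · subst e1
          have ht' : t ∈ S ∪ F := ht.resolve_left hst.ne'
          rw [Function.update_self, Function.update_of_ne hst.ne']
          exact hm2 _ (Finset.mem_image_of_mem _ (Finset.mem_filter.2 ⟨ht', hst⟩))
        · by_cases e2 : t = x
          · subst e2
            have hs' : s ∈ S ∪ F := hs.resolve_left e1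
            rw [Function.update_self, Function.update_of_ne e1]
            exact hm1 _ (Finset.mem_image_of_mem _ (Finset.mem_filter.2 ⟨hs', hst⟩))
          · rw [Function.update_of_ne e1, Function.update_of_ne e2]
            exact h1 s (hs.resolve_left e1) t (ht.resolve_left e2) hst
      · intro s hs
        rw [Function.update_of_ne, h2 s hs]
        rintro rfl
        exact hxS (Finset.mem_union_left _ hs)

theorem isoR {T : Theta} (hT : ThetaOK T) (P : Finset Pt) {φ : ℝ → ℝ}
    (hφ : ∀ p ∈ P, ∀ q ∈ P, p.1 < q.1 → φ p.1 < φ q.1) :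
    ∃ ψ, Eq0 T (mapTheta (hx ψ) T) ∧ ∀ p ∈ P, ψ p.1 = φ p.1 := by
  obtain ⟨ψ, h1, h2⟩ := ext_mono (P.image Prod.fst) (T.U.image Prod.fst) φ (by
    simp only [Finset.forall_mem_image]
    exact fun p hp q hq => hφ p hp q hq)
  refine ⟨ψ, iso hT ?_, fun p hp => h2 _ (Finset.mem_image_of_mem _ hp)⟩
  intro p hp q hq
  exact h1 _ (Finset.mem_union_right _ (Finset.mem_image_of_mem _ hp)) _
    (Finset.mem_union_right _ (Finset.mem_image_of_mem _ hq))

def hy (φ : ℝ → ℝ) (p : Pt) : Pt := (p.1, φ p.2)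

theorem map_hy (φ : ℝ → ℝ) (T : Theta) : (mapTheta (hx φ) T.tr).tr = mapTheta (hy φ) T := by
  rw [tr_def, tr_def, mapTheta_comp, mapTheta_comp]
  rfl

theorem tr_U (T : Theta) : T.tr.U = T.U.image tau := mapTheta_U _ _

theorem isoR_h {T : Theta} (hT : ThetaOK T) (P : Finset Pt) {φ : ℝ → ℝ}
    (hφ : ∀ p ∈ P, ∀ q ∈ P, p.2 < q.2 → φ p.2 < φ q.2) :
    ∃ ψ, Eq0 T (mapTheta (hy ψ) T) ∧ ∀ p ∈ P, ψ p.2 = φ p.2 := by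
  obtain ⟨ψ, h1, h2⟩ := isoR (ok_tr hT) (P.image tau) (φ := φ) (by
    simp only [Finset.forall_mem_image, tau_1]
    exact fun p hp q hq => hφ p hp q hq)
  refine ⟨ψ, ?_, ?_⟩
  · have := h1.tr
    rwa [tr_tr, map_hy] at this
  · simpa only [Finset.forall_mem_image, tau_1] using h2

def Bw (s t v : ℝ) : Prop := (s < v ∧ v < t) ∨ (t < v ∧ v < s)

theorem bw_iff {s t v : ℝ} : (min s t < v ∧ v < max s t) ↔ Bw s t v := by
  unfold Bw
  rcases le_total s t with h | h
  · rw [min_eq_left h, max_eq_right h]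
    constructor
    · exact Or.inl
    · rintro (h' | h')
      · exact h'
      · exact absurd (h'.1.trans h'.2) (not_lt.2 h)
  · rw [min_eq_right h, max_eq_left h]
    constructor
    · exact Or.inr
    · rintro (h' | h')
      · exact absurd (h'.1.trans h'.2) (not_lt.2 h)
      · exact h'

def NI (U : Finset Pt) (s u : ℝ) : Prop := ∀ y y' z z', (s, y) ∈ U → (s, y') ∈ U → (u, z) ∈ U →
  (u, z') ∈ U → y ≠ z ∧ ¬ (y < z ∧ z < y' ∧ y' < z') ∧ ¬ (z < y ∧ y < z' ∧ z' < y')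

theorem vm0 {T : Theta} (hT : ThetaOK T) {s t : ℝ} (hf : ∀ p ∈ T.U, p.1 ≠ t)
    (hb : ∀ p ∈ T.U, ¬ Bw s t p.1) : Eq0 T (mapTheta (vmap s t) T) := by
  rw [vmap_hx]
  apply iso hT
  intro p hp q hq h
  have a1 := hb p hp
  have a2 := hb q hq
  have a3 := hf p hp
  have a4 := hf q hq
  unfold Bw at a1 a2
  by_cases c1 : p.1 = s
  · have c2 : q.1 ≠ s := by rw [← c1]; exact h.ne'
    rw [if_pos c1, if_neg c2]
    by_contra hh
    exact a2 (Or.inl ⟨by linarith, lt_of_le_of_ne (not_lt.1 hh) a4⟩)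
  · rw [if_neg c1]
    by_cases c2 : q.1 = s
    · rw [if_pos c2]
      by_contra hh
      exact a1 (Or.inr ⟨lt_of_le_of_ne (not_lt.1 hh) (Ne.symm a3), by linarith⟩)
    · rwa [if_neg c2]

theorem mem_hx {φ : ℝ → ℝ} {P : Finset Pt} {a y : ℝ} :
    (a, y) ∈ P.image (hx φ) ↔ ∃ s, φ s = a ∧ (s, y) ∈ P := by
  rw [Finset.mem_image]
  constructor
  · rintro ⟨⟨s, z⟩, h, e⟩
    simp only [hx, Prod.mk.injEq] at e
    exact ⟨s, e.1, by rw [← e.2]; exact h⟩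
  · rintro ⟨s, rfl, h⟩
    exact ⟨_, h, rfl⟩

theorem mem_swapv {s u a y : ℝ} {P : Finset Pt} :
    (a, y) ∈ P.image (swapv s u) ↔ ((if a = s then u else if a = u then s else a), y) ∈ P := by
  rw [swapv_hx, mem_hx]
  constructor
  · rintro ⟨v, rfl, h⟩
    by_cases h1 : v = s
    · by_cases h2 : u = s
      · subst h1; subst h2; simpa using h
      · subst h1; simpa [h2] using h
    · by_cases h2 : v = u
      · subst h2; simpa [h1] using h
      · simpa [h1, h2] using h
  · intro h
    refine ⟨_, ?_, h⟩
    by_cases h1 : a = s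
    · by_cases h2 : u = s
      · subst h1; simp [h2]
      · subst h1; simp [h2]
    · by_cases h2 : a = u
      · subst h2; simp
      · simp [h1, h2]

theorem mem_vmap {s t a y : ℝ} {P : Finset Pt} (ht : ∀ p ∈ P, p.1 ≠ t) (hst : s ≠ t) :
    (a, y) ∈ P.image (vmap s t) ↔ (a = t ∧ (s, y) ∈ P) ∨ (a ≠ s ∧ (a, y) ∈ P) := by
  rw [vmap_hx, mem_hx]
  constructor
  · rintro ⟨v, rfl, h⟩
    by_cases h1 : v = s
    · subst h1; simp [h]
    · simp [h1, h]
  · rintro (⟨rfl, h⟩ | ⟨h1, h⟩)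
    · exact ⟨s, by simp, h⟩
    · exact ⟨a, by simp [h1], h⟩

theorem commV {T : Theta} (hT : ThetaOK T) {s u : ℝ} (hsu : s ≠ u) (hs : ∃ p ∈ T.U, p.1 = s)
    (hu : ∃ p ∈ T.U, p.1 = u) (hb : ∀ p ∈ T.U, ¬ Bw s u p.1) (hni : NI T.U s u) :
    Eq0 T (mapTheta (swapv s u) T) := by
  refine .single (Or.inr (Or.inl ⟨hT, ?_, _, Or.inl ⟨s, u, hsu, hs, hu, ?_, ?_, ?_, rfl⟩, rfl⟩))
  · rw [swapv_hx]
    apply ok_hx hT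
    intro p _ q _ e
    by_cases h1 : p.1 = s <;> by_cases h2 : p.1 = u <;> by_cases h3 : q.1 = s <;> by_cases h4 : q.1 = u <;>
      simp only [h1, h2, h3, h4, if_true, if_false] at e ⊢ <;> grind
  · intro p hp h
    exact hb p hp (bw_iff.1 h)
  · rintro ⟨_, y⟩ hp ⟨_, z⟩ hq rfl rfl
    exact (hni y y z z hp hp hq hq).1
  · rintro ⟨_, y⟩ hp ⟨_, y'⟩ hp' ⟨_, z⟩ hq ⟨_, z'⟩ hq' rfl e rfl e'
    simp only at e e'
    subst e e'
    have := (hni y y' z z' hp hp' hq hq').2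
    simp only
    tauto

theorem vm (n : ℕ) : ∀ (T : Theta) (s t : ℝ), (T.U.filter (fun p => Bw s t p.1)).card = n →
    ThetaOK T → s ≠ t → (∀ p ∈ T.U, p.1 ≠ t) → (∀ p ∈ T.U, Bw s t p.1 → NI T.U s p.1) →
    Eq0 T (mapTheta (vmap s t) T) := by
  induction n using Nat.strong_induction_on with
  | _ n ih =>
  intro T s t hn hT hst hf hni
  by_cases hs : ∃ p ∈ T.U, p.1 = s
  swap
  · rw [mapTheta_id']
    · exact .refl
    · intro p hp
      exact if_neg (fun h => hs ⟨p, hp, h⟩)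
  by_cases hne : (T.U.filter (fun p => Bw s t p.1)).Nonempty
  swap
  · apply vm0 hT hf
    intro p hp h
    exact hne ⟨p, Finset.mem_filter.2 ⟨hp, h⟩⟩
  obtain ⟨p0, hp0, hmin⟩ := Finset.exists_min_image _ (fun p => |p.1 - s|) hne
  rw [Finset.mem_filter] at hp0
  set u := p0.1 with hu
  have hb1 : ∀ p ∈ T.U, ¬ Bw s u p.1 := by
    intro p hp hb
    have h1 := hp0.2
    unfold Bw at h1 hb
    have h3 := hmin p (Finset.mem_filter.2 ⟨hp, by unfold Bw; grind⟩)
    rcases hb with hb | hb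
    · rw [abs_of_pos (by linarith), abs_of_pos (by linarith)] at h3
      linarith
    · rw [abs_of_neg (by linarith), abs_of_neg (by linarith)] at h3
      linarith
  have hbt := hp0.2
  have hsu : s ≠ u := by unfold Bw at hbt; grind
  have hut : u ≠ t := by unfold Bw at hbt; grind
  have step1 := commV hT hsu hs ⟨p0, hp0.1, rfl⟩ hb1 (hni p0 hp0.1 hp0.2)
  set T1 := mapTheta (swapv s u) T with hT1
  have hU1 : T1.U = T.U.image (swapv s u) := mapTheta_U _ _
  have ok1 := step1.ok hT
  have m1 : ∀ a y, (a, y) ∈ T1.U ↔ ((if a = s then u else if a = u then s else a), y) ∈ T.U := by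
    intro a y; rw [hU1, mem_swapv]
  have f1 : ∀ p ∈ T1.U, p.1 ≠ t := by
    rintro ⟨a, y⟩ hp e
    simp only at e
    subst e
    rw [m1, if_neg hst.symm, if_neg hut.symm] at hp
    exact hf _ hp rfl
  have sub1 : ∀ p ∈ T1.U, Bw u t p.1 → p ∈ T.U ∧ Bw s t p.1 ∧ p.1 ≠ u ∧ p.1 ≠ s := by
    rintro ⟨a, y⟩ hp hb
    have a1 : a ≠ s := by rintro rfl; unfold Bw at hbt hb; grind
    have a2 : a ≠ u := by rintro rfl; unfold Bw at hbt hb; grind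
    rw [m1, if_neg a1, if_neg a2] at hp
    exact ⟨hp, by unfold Bw at hbt hb ⊢; grind, a2, a1⟩
  have step2 := ih _ (by
    rw [← hn]
    apply Finset.card_lt_card (s := T1.U.filter (fun p => Bw u t p.1))
    rw [Finset.ssubset_iff_of_subset]
    · refine ⟨p0, Finset.mem_filter.2 hp0, fun h => ?_⟩
      rw [Finset.mem_filter] at h
      exact (sub1 p0 h.1 h.2).2.2.1 rfl
    · intro p hp
      rw [Finset.mem_filter] at hp ⊢
      have := sub1 p hp.1 hp.2
      exact ⟨this.1, this.2.1⟩) T1 u t rfl ok1 hut f1 (by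
        intro p hp hb
        obtain ⟨q1, q2, q3, q4⟩ := sub1 p hp hb
        have := hni p q1 q2
        intro y y' z z' h1 h2 h3 h4
        rw [m1, if_neg hsu.symm, if_pos rfl] at h1 h2
        rw [m1, if_neg q4, if_neg q3] at h3 h4
        exact this y y' z z' h1 h2 h3 h4)
  set T2 := mapTheta (vmap u t) T1 with hT2
  have hU2 : T2.U = T1.U.image (vmap u t) := mapTheta_U _ _
  have m2 : ∀ a y, (a, y) ∈ T2.U → (a = t) ∨ (a ≠ u ∧ (a, y) ∈ T1.U) := by
    intro a y h
    rw [hU2, mem_vmap f1 hut] at h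
    tauto
  have step3 := vm0 (T := T2) (step2.ok ok1) (s := s) (t := u) (by
    rintro ⟨a, y⟩ hp e
    simp only at e
    rcases m2 a y hp with h | h
    · exact hut (e ▸ h)
    · exact h.1 e) (by
    rintro ⟨a, y⟩ hp hb
    rcases m2 a y hp with h | ⟨h, h'⟩
    · subst h; unfold Bw at hb hbt; grind
    · have hs' : a ≠ s := by rintro rfl; unfold Bw at hb; grind
      rw [m1, if_neg hs', if_neg h] at h'
      exact hb1 _ h' hb)
  have e : mapTheta (vmap s u) T2 = mapTheta (vmap s t) T := by
    rw [hT2, hT1, mapTheta_comp, mapTheta_comp]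
    apply mapTheta_congr
    intro p hp
    have hpt := hf p hp
    simp only [Function.comp, vmap_hx, swapv_hx, hx]
    by_cases c1 : p.1 = s
    · simp [c1, hst.symm]
    · by_cases c2 : p.1 = u
      · simp [c2, hsu.symm, hsu]
      · simp [c1, c2]
  rw [e] at step3
  exact (step1.trans step2).trans step3


def NIh (U : Finset Pt) (s u : ℝ) : Prop := ∀ y y' z z', (y, s) ∈ U → (y', s) ∈ U → (z, u) ∈ U →
  (z', u) ∈ U → y ≠ z ∧ ¬ (y < z ∧ z < y' ∧ y' < z') ∧ ¬ (z < y ∧ y < z' ∧ z' < y')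

theorem mem_tau {P : Finset Pt} {a b : ℝ} : (a, b) ∈ P.image tau ↔ (b, a) ∈ P := by
  rw [Finset.mem_image]
  constructor
  · rintro ⟨q, hq, e⟩
    have : q = (b, a) := by rw [← tau_tau q, e]; rfl
    rwa [← this]
  · intro h
    exact ⟨_, h, rfl⟩

theorem hm {T : Theta} {s t : ℝ} (hT : ThetaOK T) (hst : s ≠ t) (hf : ∀ p ∈ T.U, p.2 ≠ t)
    (hni : ∀ p ∈ T.U, Bw s t p.2 → NIh T.U s p.2) : Eq0 T (mapTheta (hmap s t) T) := by
  have := vm _ T.tr s t rfl (ok_tr hT) hst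
    (by rw [tr_U]; exact Finset.forall_mem_image.2 hf)
    (by
      rw [tr_U]
      simp only [Finset.forall_mem_image, tau_1]
      intro p hp hb y y' z z'
      simp only [mem_tau]
      exact hni p hp hb y y' z z')
  have := this.tr
  rw [tr_tr, tr_def, tr_def, mapTheta_comp, mapTheta_comp] at this
  convert this using 1
  apply mapTheta_congr
  intro p _
  by_cases h : p.2 = s <;> simp [Function.comp, vmap, hmap, tau, h]

theorem exNear (F : Finset ℝ) {t s : ℝ} (h : t < s) :
    ∃ s', t < s' ∧ s' < s ∧ ∀ f ∈ F, ¬ (s' ≤ f ∧ f < s) := by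
  obtain ⟨m, h1, h2⟩ := Order.exists_between_finsets (insert t (F.filter (· < s))) {s} (by
    intro a ha b hb
    rw [Finset.mem_singleton] at hb
    subst hb
    rw [Finset.mem_insert, Finset.mem_filter] at ha
    rcases ha with rfl | ha
    · exact h
    · exact ha.2)
  refine ⟨m, h1 t (Finset.mem_insert_self _ _), h2 s (Finset.mem_singleton_self _), ?_⟩
  rintro f hf ⟨a, b⟩
  exact absurd (h1 f (Finset.mem_insert_of_mem (Finset.mem_filter.2 ⟨hf, b⟩))) (not_lt.2 a)

theorem exNearR (F : Finset ℝ) {t s : ℝ} (h : s < t) :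
    ∃ s', s < s' ∧ s' < t ∧ ∀ f ∈ F, ¬ (f ≤ s' ∧ s < f) := by
  obtain ⟨m, h1, h2, h3⟩ := exNear (F.image (fun x => -x)) (neg_lt_neg h)
  refine ⟨-m, by linarith, by linarith, fun f hf hh => ?_⟩
  exact h3 _ (Finset.mem_image_of_mem _ hf) ⟨by linarith, by linarith⟩

theorem upd_ex {T : Theta} {i x y} (x' y' : ℝ) (h : (x, y) ∈ T.pt i) : ∃ T', Upd T T' i x y x' y' := by
  fin_cases i
  · exact ⟨⟨stabSet x y x' y' T.a, T.b, T.c, T.d⟩, h, rfl, fun j hj => by fin_cases j <;> first | rfl | exact absurd rfl hj⟩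
  · exact ⟨⟨T.a, stabSet x y x' y' T.b, T.c, T.d⟩, h, rfl, fun j hj => by fin_cases j <;> first | rfl | exact absurd rfl hj⟩
  · exact ⟨⟨T.a, T.b, stabSet x y x' y' T.c, T.d⟩, h, rfl, fun j hj => by fin_cases j <;> first | rfl | exact absurd rfl hj⟩
  · exact ⟨⟨T.a, T.b, T.c, stabSet x y x' y' T.d⟩, h, rfl, fun j hj => by fin_cases j <;> first | rfl | exact absurd rfl hj⟩

theorem upd_uniq {T T1 T2 : Theta} {i x y x' y'} (h1 : Upd T T1 i x y x' y') (h2 : Upd T T2 i x y x' y') :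
    T1 = T2 := by
  apply Theta.ext'
  intro j
  by_cases hj : j = i
  · subst hj; rw [h1.2.1, h2.2.1]
  · rw [h1.2.2 j hj, h2.2.2 j hj]

theorem upd_U {T T1 : Theta} {i x y x' y'} (h : Upd T T1 i x y x' y') {p : Pt} (hp : p ∈ T1.U) :
    p = (x', y) ∨ p = (x, y') ∨ p = (x', y') ∨ p ∈ T.U := by
  obtain ⟨j, hj⟩ := Theta.mem_U.1 hp
  by_cases e : j = i
  · subst e
    rw [h.2.1, mem_stab] at hj
    rcases hj with h | h | h | h
    · tauto
    · tauto
    · tauto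
    · exact Or.inr (Or.inr (Or.inr (pt_sub_U _ _ h.2)))
  · rw [h.2.2 j e] at hj
    exact Or.inr (Or.inr (Or.inr (pt_sub_U _ _ hj)))

theorem stab_step {T T1 : Theta} {i x y x' y'} (hT : ThetaOK T) (hu : Upd T T1 i x y x' y')
    (hf : Fresh x' y' T.U) (hb : ∀ p ∈ T.U, ¬ Bw x x' p.1) (hb' : ∀ p ∈ T.U, ¬ Bw y y' p.2)
    (hI : 0 < (x - x') * (y - y')) : ThStabI T T1 :=
  stabI_iff.2 ⟨hT, ((ok2_of hT).stab hu hf).ok, x, y, x', y', i, hu, hf,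
    fun p hp h => hb p hp (bw_iff.1 h), fun p hp h => hb' p hp (bw_iff.1 h), hI⟩

theorem upd_hmap {T T1 : Theta} {i x y x' y' m} (hu : Upd T T1 i x y x' y')
    (hy : y ≠ y') (hf : ∀ p ∈ T.U, p.2 ≠ y') : Upd T (mapTheta (hmap y' m) T1) i x y x' m := by
  refine ⟨hu.1, ?_, ?_⟩
  · rw [mapTheta_pt, hu.2.1]
    unfold stabSet
    have : ((T.pt i).erase (x, y)).image (hmap y' m) = (T.pt i).erase (x, y) := by
      rw [Finset.image_congr (g := id), Finset.image_id]
      intro p hp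
      exact if_neg (hf p (pt_sub_U _ _ (Finset.mem_of_mem_erase hp)))
    simp only [Finset.image_insert, this]
    simp [hmap, hy]
  · intro j hj
    rw [mapTheta_pt, hu.2.2 j hj, Finset.image_congr (g := id), Finset.image_id]
    intro p hp
    exact if_neg (hf p (pt_sub_U _ _ hp))

theorem upd_vmap {T T1 : Theta} {i x y x' y' m} (hu : Upd T T1 i x y x' y')
    (hx : x ≠ x') (hf : ∀ p ∈ T.U, p.1 ≠ x') : Upd T (mapTheta (vmap x' m) T1) i x y m y' := by
  refine ⟨hu.1, ?_, ?_⟩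
  · rw [mapTheta_pt, hu.2.1]
    unfold stabSet
    have : ((T.pt i).erase (x, y)).image (vmap x' m) = (T.pt i).erase (x, y) := by
      rw [Finset.image_congr (g := id), Finset.image_id]
      intro p hp
      exact if_neg (hf p (pt_sub_U _ _ (Finset.mem_of_mem_erase hp)))
    simp only [Finset.image_insert, this]
    simp [vmap, hx]
  · intro j hj
    rw [mapTheta_pt, hu.2.2 j hj, Finset.image_congr (g := id), Finset.image_id]
    intro p hp
    exact if_neg (hf p (pt_sub_U _ _ hp))

theorem gs {T T' : Theta} {i s c t m} (hT : ThetaOK T) (hts : t < s) (hmc : m < c)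
    (hf : Fresh t m T.U)
    (hr : ∀ p ∈ T.U, t ≤ p.1 → p.1 ≤ s → m ≤ p.2 → p.2 ≤ c → p = (s, c))
    (hu : Upd T T' i s c t m) : Eq0 T T' := by
  obtain ⟨s', s1, s2, s3⟩ := exNear (T.U.image Prod.fst) hts
  obtain ⟨c', c1, c2, c3⟩ := exNear (T.U.image Prod.snd) hmc
  replace s3 : ∀ p ∈ T.U, ¬ (s' ≤ p.1 ∧ p.1 < s) :=
    fun p hp => s3 _ (Finset.mem_image_of_mem _ hp)
  replace c3 : ∀ p ∈ T.U, ¬ (c' ≤ p.2 ∧ p.2 < c) :=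
    fun p hp => c3 _ (Finset.mem_image_of_mem _ hp)
  have fs : ∀ p ∈ T.U, p.1 ≠ s' := fun p hp e => s3 p hp ⟨e.ge, e ▸ s2⟩
  have fc : ∀ p ∈ T.U, p.2 ≠ c' := fun p hp e => c3 p hp ⟨e.ge, e ▸ c2⟩
  obtain ⟨T1, u1⟩ := upd_ex s' c' hu.1
  have st1 : Eq0 T T1 := .single (Or.inr (Or.inr (Or.inl (stab_step hT u1 ⟨fs, fc⟩
    (fun p hp h => s3 p hp (by rcases h with h | h <;> constructor <;> linarith))
    (fun p hp h => c3 p hp (by rcases h with h | h <;> constructor <;> linarith))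
    (mul_pos (by linarith) (by linarith))))))
  have ok1 := st1.ok hT
  -- rows
  have st2 : Eq0 T1 (mapTheta (hmap c' m) T1) := by
    apply hm ok1 c1.ne'
    · intro p hp e
      rcases upd_U u1 hp with h | h | h | h
      · rw [h] at e; simp only at e; linarith
      · rw [h] at e; simp only at e; linarith
      · rw [h] at e; simp only at e; linarith
      · exact hf.2 p h e
    · intro p hp hb
      have lev : ∀ z, (z, c') ∈ T1.U → z = s ∨ z = s' := by
        intro z hz
        rcases upd_U u1 hz with h | h | h | h
        · simp only [Prod.mk.injEq] at h; exact Or.inr h.1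
        · simp only [Prod.mk.injEq] at h; exact Or.inl h.1
        · simp only [Prod.mk.injEq] at h; exact Or.inr h.1
        · exact absurd rfl (fc _ h)
      have hb' : m < p.2 ∧ p.2 < c' := by rcases hb with h | h <;> constructor <;> linarith
      have out : ∀ z, (z, p.2) ∈ T1.U → z < s' ∨ s < z := by
        intro z hz
        rcases upd_U u1 hz with h | h | h | h
        · simp only [Prod.mk.injEq] at h; linarith
        · simp only [Prod.mk.injEq] at h; linarith
        · simp only [Prod.mk.injEq] at h; linarith
        · by_contra hh
          push Not at hh
          have := hr _ h (by simp only; linarith) hh.2 hb'.1.le (by simp only; linarith)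
          simp only [Prod.mk.injEq] at this
          linarith
      intro y y' z z' h1 h2 h3 h4
      have := lev y h1
      have := lev y' h2
      have := out z h3
      have := out z' h4
      grind
  have u2 : Upd T (mapTheta (hmap c' m) T1) i s c s' m := upd_hmap u1 c2.ne' fc
  set T2 := mapTheta (hmap c' m) T1
  have ok2 := st2.ok ok1
  have st3 : Eq0 T2 (mapTheta (vmap s' t) T2) := by
    apply vm _ _ _ _ rfl ok2 s1.ne'
    · intro p hp e
      rcases upd_U u2 hp with h | h | h | h
      · rw [h] at e; simp only at e; linarith
      · rw [h] at e; simp only at e; linarith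
      · rw [h] at e; simp only at e; linarith
      · exact hf.1 p h e
    · intro p hp hb
      have lev : ∀ z, (s', z) ∈ T2.U → z = c ∨ z = m := by
        intro z hz
        rcases upd_U u2 hz with h | h | h | h
        · simp only [Prod.mk.injEq] at h; exact Or.inl h.2
        · simp only [Prod.mk.injEq] at h; exact Or.inr h.2
        · simp only [Prod.mk.injEq] at h; exact Or.inr h.2
        · exact absurd rfl (fs _ h)
      have hb' : t < p.1 ∧ p.1 < s' := by rcases hb with h | h <;> constructor <;> linarith
      have out : ∀ z, (p.1, z) ∈ T2.U → z < m ∨ c < z := by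
        intro z hz
        rcases upd_U u2 hz with h | h | h | h
        · simp only [Prod.mk.injEq] at h; linarith
        · simp only [Prod.mk.injEq] at h; linarith
        · simp only [Prod.mk.injEq] at h; linarith
        · by_contra hh
          push Not at hh
          have := hr _ h hb'.1.le (by simp only; linarith) hh.1 hh.2
          simp only [Prod.mk.injEq] at this
          linarith
      intro y y' z z' h1 h2 h3 h4
      have := lev y h1
      have := lev y' h2
      have := out z h3
      have := out z' h4
      grind
  have u3 : Upd T (mapTheta (vmap s' t) T2) i s c t m := upd_vmap u2 s2.ne' fs
  rw [upd_uniq hu u3]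
  exact (st1.trans st2).trans st3


def RR (T : Theta) : Finset Pt := T.b ∪ T.c ∪ T.d

theorem mem_RR {T : Theta} {p : Pt} : p ∈ RR T ↔ ∃ j, j ≠ 0 ∧ p ∈ T.pt j := by
  unfold RR
  simp only [Finset.mem_union]
  constructor
  · rintro ((h | h) | h)
    · exact ⟨1, by decide, h⟩
    · exact ⟨2, by decide, h⟩
    · exact ⟨3, by decide, h⟩
  · rintro ⟨j, hj, h⟩
    fin_cases j
    · exact absurd rfl hj
    · exact Or.inl (Or.inl h)
    · exact Or.inl (Or.inr h)
    · exact Or.inr h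

theorem U_RR {T : Theta} {p : Pt} : p ∈ T.U ↔ p ∈ T.a ∨ p ∈ RR T := by
  unfold Theta.U RR
  simp only [Finset.mem_union]
  tauto

def Same (T T' : Theta) : Prop := T'.b = T.b ∧ T'.c = T.c ∧ T'.d = T.d

theorem Same.RR {T T'} (h : Same T T') : RR T' = RR T := by
  unfold _root_.RR
  rw [h.1, h.2.1, h.2.2]

theorem Same.trans {T T' T''} (h : Same T T') (h' : Same T' T'') : Same T T'' :=
  ⟨h'.1.trans h.1, h'.2.1.trans h.2.1, h'.2.2.trans h.2.2⟩

theorem ok2_same {T T' E} (h : OK2 T E) (h' : ThetaOK T') (hs : Same T T') : OK2 T' E := by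
  have := ok2_of h'
  have e : Ends T'.a = E := by
    have e1 : Ends (T'.pt 1) = Ends T'.a := good_ends (this.good 1)
    have e2 : Ends (T.pt 1) = E := good_ends (h.good 1)
    rw [← e1, ← e2]
    show Ends T'.b = Ends T.b
    rw [hs.1]
  rwa [e] at this

/-- An `a`-vertex and an `R`-vertex on a common line force it to be an end. -/
theorem OK2.aR {T E} (h : OK2 T E) {p q : Pt} (hp : p ∈ T.a) (hq : q ∈ RR T) {d} (e : co d p = co d q) :
    (d, co d p) ∈ E := by
  obtain ⟨j, hj, hq⟩ := mem_RR.1 hq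
  exact (h.cross 0 j (Ne.symm hj) p hp q hq d e).1

structure SH (T : Theta) (E : Set (Bool × ℝ)) (x1 x2 c2 d2 : ℝ) : Prop where
  ok : OK2 T E
  lt : x1 < x2
  e1 : (true, x1) ∉ E
  e2 : (true, x2) ∉ E
  r1 : ∃ p ∈ RR T, p.1 = x1
  r2 : ∃ p ∈ RR T, p.1 = x2
  hR : ∀ p ∈ RR T, ¬ (x1 < p.1 ∧ p.1 < x2)
  cd : c2 < d2
  l2 : ∀ p ∈ RR T, p.1 = x2 → p.2 = c2 ∨ p.2 = d2
  l1 : ∀ p ∈ RR T, p.1 = x1 → ¬ (c2 ≤ p.2 ∧ p.2 < d2)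
  l3 : (x1, d2) ∈ RR T → (false, d2) ∉ E

theorem SH.same {T T' E x1 x2 c2 d2} (h : SH T E x1 x2 c2 d2) (h' : ThetaOK T') (hs : Same T T') :
    SH T' E x1 x2 c2 d2 := by
  obtain ⟨a1, a2, a3, a4, a5, a6, a7, a8, a9, a10, a11⟩ := h
  refine ⟨ok2_same a1 h' hs, a2, a3, a4, ?_, ?_, ?_, a8, ?_, ?_, ?_⟩
  all_goals (rw [hs.RR]; assumption)

theorem SH.na1 {T E x1 x2 c2 d2} (h : SH T E x1 x2 c2 d2) : ∀ p ∈ T.a, p.1 ≠ x1 := by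
  intro p hp e
  obtain ⟨q, hq, e'⟩ := h.r1
  have := h.ok.aR hp hq (d := true) (e.trans e'.symm)
  rw [co_true, e] at this
  exact h.e1 this

theorem SH.na2 {T E x1 x2 c2 d2} (h : SH T E x1 x2 c2 d2) : ∀ p ∈ T.a, p.1 ≠ x2 := by
  intro p hp e
  obtain ⟨q, hq, e'⟩ := h.r2
  have := h.ok.aR hp hq (d := true) (e.trans e'.symm)
  rw [co_true, e] at this
  exact h.e2 this

theorem stage1 (n : ℕ) : ∀ (T : Theta) (E : Set (Bool × ℝ)) (x1 x2 c2 d2 : ℝ), SH T E x1 x2 c2 d2 →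
    (T.a.filter (fun p => (x1 < p.1 ∧ p.1 < x2) ∧ (c2 ≤ p.2 ∧ p.2 ≤ d2))).card = n →
    ∃ T', Eq0 T T' ∧ Same T T' ∧ ∀ p ∈ T'.a, x1 < p.1 → p.1 < x2 → ¬ (c2 ≤ p.2 ∧ p.2 ≤ d2) := by
  induction n using Nat.strong_induction_on with
  | _ n ih =>
  intro T E x1 x2 c2 d2 h hn
  by_cases hne : (T.a.filter (fun p => (x1 < p.1 ∧ p.1 < x2) ∧ (c2 ≤ p.2 ∧ p.2 ≤ d2))).Nonempty
  swap
  · refine ⟨T, .refl, ⟨rfl, rfl, rfl⟩, fun p hp h1 h2 h3 => ?_⟩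
    exact hne ⟨p, Finset.mem_filter.2 ⟨hp, ⟨h1, h2⟩, h3⟩⟩
  obtain ⟨p0, hp0, hmin0⟩ := Finset.exists_min_image _ (fun p => p.1) hne
  have hne1 : ((T.a.filter (fun p => (x1 < p.1 ∧ p.1 < x2) ∧ (c2 ≤ p.2 ∧ p.2 ≤ d2))).filter
    (fun p => p.1 = p0.1)).Nonempty := ⟨p0, Finset.mem_filter.2 ⟨hp0, rfl⟩⟩
  obtain ⟨⟨s, c⟩, hp1, hmin1⟩ := Finset.exists_min_image _ (fun p => p.2) hne1
  rw [Finset.mem_filter, Finset.mem_filter] at hp1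
  obtain ⟨⟨hpa, ⟨hs1, hs2⟩, hc1, hc2⟩, e0⟩ := hp1
  simp only at hs1 hs2 hc1 hc2 e0
  have hmin : ∀ q ∈ T.a, x1 < q.1 → q.1 ≤ s → c2 ≤ q.2 → q.2 ≤ c → q = (s, c) := by
    intro q hq k1 k2 k3 k4
    have hqm : q ∈ T.a.filter (fun p => (x1 < p.1 ∧ p.1 < x2) ∧ (c2 ≤ p.2 ∧ p.2 ≤ d2)) :=
      Finset.mem_filter.2 ⟨hq, ⟨k1, by linarith⟩, k3, by linarith⟩
    have j1 := hmin0 q hqm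
    have j2 : q.1 = p0.1 := by linarith
    have j3 := hmin1 q (Finset.mem_filter.2 ⟨hqm, j2⟩)
    simp only at j3
    exact Prod.ext (by simp only; linarith) (by simp only; linarith)
  obtain ⟨t, -, t1, t2⟩ := exNear (T.U.image Prod.fst) (sub_one_lt x1)
  obtain ⟨m, -, m1, m2⟩ := exNear (T.U.image Prod.snd) (sub_one_lt c2)
  replace t2 : ∀ p ∈ T.U, ¬ (t ≤ p.1 ∧ p.1 < x1) := fun p hp => t2 _ (Finset.mem_image_of_mem _ hp)
  replace m2 : ∀ p ∈ T.U, ¬ (m ≤ p.2 ∧ p.2 < c2) := fun p hp => m2 _ (Finset.mem_image_of_mem _ hp)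
  obtain ⟨T1, u1⟩ := upd_ex (T := T) (i := 0) t m hpa
  have st : Eq0 T T1 := by
    apply gs h.ok.ok (by linarith) (by linarith) _ _ u1
    · exact ⟨fun p hp e => t2 p hp ⟨e.ge, by linarith⟩, fun p hp e => m2 p hp ⟨e.ge, by linarith⟩⟩
    · intro q hq k1 k2 k3 k4
      have k1' : x1 ≤ q.1 := by
        by_contra hh
        exact t2 q hq ⟨k1, not_le.1 hh⟩
      have k3' : c2 ≤ q.2 := by
        by_contra hh
        exact m2 q hq ⟨k3, not_le.1 hh⟩
      rcases U_RR.1 hq with hqa | hqR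
      · exact hmin q hqa (lt_of_le_of_ne k1' (Ne.symm (h.na1 q hqa))) k2 k3' k4
      · exfalso
        have hq1 : q.1 = x1 := by
          by_contra hh
          exact h.hR q hqR ⟨lt_of_le_of_ne k1' (Ne.symm hh), by linarith⟩
        have hl := h.l1 q hqR hq1
        have hq2 : q.2 = d2 := by
          by_contra hh
          exact hl ⟨k3', lt_of_le_of_ne (by linarith) hh⟩
        have hcd : c = d2 := by linarith
        have hqe : q = (x1, d2) := Prod.ext hq1 hq2
        rw [hqe] at hqR
        have := h.ok.aR hpa hqR (d := false) hcd
        simp only [co_false] at this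
        rw [hcd] at this
        exact h.l3 hqR this
  have same : Same T T1 := ⟨u1.2.2 1 (by decide), u1.2.2 2 (by decide), u1.2.2 3 (by decide)⟩
  have sub : ∀ p ∈ T1.a, x1 < p.1 → c2 ≤ p.2 → p ∈ T.a ∧ p ≠ (s, c) := by
    intro p hp k1 k2
    have : p ∈ T1.pt 0 := hp
    rw [u1.2.1, mem_stab] at this
    rcases this with e | e | e | e
    · rw [e] at k1; simp only at k1; linarith
    · rw [e] at k2; simp only at k2; linarith
    · rw [e] at k1; simp only at k1; linarith
    · exact ⟨e.2, e.1⟩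
  obtain ⟨T2, g1, g2, g3⟩ := ih _ (by
    rw [← hn]
    apply Finset.card_lt_card (s := T1.a.filter (fun p => (x1 < p.1 ∧ p.1 < x2) ∧ (c2 ≤ p.2 ∧ p.2 ≤ d2)))
    rw [Finset.ssubset_iff_of_subset]
    · refine ⟨(s, c), Finset.mem_filter.2 ⟨hpa, ⟨hs1, hs2⟩, hc1, hc2⟩, fun hh => ?_⟩
      rw [Finset.mem_filter] at hh
      exact (sub _ hh.1 hh.2.1.1 hh.2.2.1).2 rfl
    · intro p hp
      rw [Finset.mem_filter] at hp ⊢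
      exact ⟨(sub _ hp.1 hp.2.1.1 hp.2.2.1).1, hp.2⟩) T1 E x1 x2 c2 d2 (h.same (st.ok h.ok.ok) same) rfl
  exact ⟨T2, st.trans g1, same.trans g2, g3⟩

theorem stage2 (n : ℕ) : ∀ (T : Theta) (E : Set (Bool × ℝ)) (x1 x2 c2 d2 : ℝ), SH T E x1 x2 c2 d2 →
    (∀ p ∈ T.a, x1 < p.1 → p.1 < x2 → ¬ (c2 ≤ p.2 ∧ p.2 ≤ d2)) →
    (T.a.filter (fun p => (x1 < p.1 ∧ p.1 < x2))).card = n →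
    ∃ T', Eq0 T T' ∧ Same T T' ∧ ∀ p ∈ T'.a, ¬ (x1 < p.1 ∧ p.1 < x2) := by
  induction n using Nat.strong_induction_on with
  | _ n ih =>
  intro T E x1 x2 c2 d2 h h0 hn
  by_cases hne : (T.a.filter (fun p => (x1 < p.1 ∧ p.1 < x2))).Nonempty
  swap
  · refine ⟨T, .refl, ⟨rfl, rfl, rfl⟩, fun p hp h1 => ?_⟩
    exact hne ⟨p, Finset.mem_filter.2 ⟨hp, h1⟩⟩
  obtain ⟨p0, hp0, hmax⟩ := Finset.exists_max_image _ (fun p => p.1) hne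
  rw [Finset.mem_filter] at hp0
  obtain ⟨hpa, hs1, hs2⟩ := hp0
  set s := p0.1 with hs
  obtain ⟨t, t1, -, t2⟩ := exNearR (T.U.image Prod.fst) (lt_add_one x2)
  replace t2 : ∀ p ∈ T.U, ¬ (p.1 ≤ t ∧ x2 < p.1) := fun p hp => t2 _ (Finset.mem_image_of_mem _ hp)
  have hst : s ≠ t := by linarith
  have ft : ∀ p ∈ T.U, p.1 ≠ t := fun p hp e => t2 p hp ⟨e.le, by linarith⟩
  have RnS : ∀ p ∈ RR T, p.1 ≠ s := fun p hp e => h.hR p hp ⟨by linarith, by linarith⟩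
  have st : Eq0 T (mapTheta (vmap s t) T) := by
    apply vm _ _ _ _ rfl h.ok.ok hst ft
    intro p hp hb
    have hb' : s < p.1 ∧ p.1 < t := by rcases hb with h | h <;> constructor <;> linarith
    have hpx : p.1 = x2 := by
      rcases lt_trichotomy p.1 x2 with hh | hh | hh
      · exfalso
        rcases U_RR.1 hp with k | k
        · have := hmax p (Finset.mem_filter.2 ⟨k, by linarith, hh⟩)
          linarith
        · exact h.hR p k ⟨by linarith, hh⟩
      · exact hh
      · exact absurd ⟨hb'.2.le, hh⟩ (t2 p hp)
    rw [hpx]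
    have l1 : ∀ y, (s, y) ∈ T.U → ¬ (c2 ≤ y ∧ y ≤ d2) := by
      intro y hy
      rcases U_RR.1 hy with k | k
      · exact h0 _ k hs1 hs2
      · exact absurd rfl (RnS (s, y) k)
    have l2 : ∀ y, (x2, y) ∈ T.U → y = c2 ∨ y = d2 := by
      intro y hy
      rcases U_RR.1 hy with k | k
      · exact absurd rfl (h.na2 _ k)
      · exact h.l2 _ k rfl
    intro y y' z z' k1 k2 k3 k4
    have := l1 y k1
    have := l1 y' k2
    have := l2 z k3
    have := l2 z' k4
    have := h.cd
    grind
  have keep : ∀ P : Finset Pt, P ⊆ RR T → P.image (vmap s t) = P := by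
    intro P hP
    rw [Finset.image_congr (g := id), Finset.image_id]
    intro p hp
    exact if_neg (RnS p (hP hp))
  set T1 := mapTheta (vmap s t) T with hT1
  have same : Same T T1 := by
    refine ⟨keep _ ?_, keep _ ?_, keep _ ?_⟩ <;> intro p hp <;> unfold RR <;> simp [hp]
  have sub : ∀ p ∈ T1.a, p.1 < x2 → p ∈ T.a ∧ p.1 ≠ s := by
    intro p hp hpx
    obtain ⟨q, hq, rfl⟩ := Finset.mem_image.1 (show p ∈ T.a.image (vmap s t) from hp)
    unfold vmap at hpx ⊢
    split_ifs at hpx ⊢ with k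
    · simp only at hpx; linarith
    · exact ⟨hq, k⟩
  obtain ⟨T2, g1, g2, g3⟩ := ih _ (by
    rw [← hn]
    apply Finset.card_lt_card (s := T1.a.filter (fun p => (x1 < p.1 ∧ p.1 < x2)))
    rw [Finset.ssubset_iff_of_subset]
    · refine ⟨p0, Finset.mem_filter.2 ⟨hpa, hs1, hs2⟩, fun hh => ?_⟩
      rw [Finset.mem_filter] at hh
      exact (sub _ hh.1 hh.2.2).2 rfl
    · intro p hp
      rw [Finset.mem_filter] at hp ⊢
      exact ⟨(sub _ hp.1 hp.2.2).1, hp.2⟩) T1 E x1 x2 c2 d2 (h.same (st.ok h.ok.ok) same)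
        (fun p hp k1 k2 => h0 p (sub p hp k2).1 k1 k2) rfl
  exact ⟨T2, st.trans g1, same.trans g2, g3⟩

theorem strip {T E x1 x2 c2 d2} (h : SH T E x1 x2 c2 d2) :
    ∃ T', Eq0 T T' ∧ Same T T' ∧ OK2 T' E ∧ ∀ p ∈ T'.U, ¬ Bw x1 x2 p.1 := by
  obtain ⟨T1, a1, a2, a3⟩ := stage1 _ T E x1 x2 c2 d2 h rfl
  have h1 := h.same (a1.ok h.ok.ok) a2
  obtain ⟨T2, b1, b2, b3⟩ := stage2 _ T1 E x1 x2 c2 d2 h1 a3 rfl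
  have h2 := h1.same (b1.ok h1.ok.ok) b2
  refine ⟨T2, a1.trans b1, a2.trans b2, h2.ok, ?_⟩
  intro p hp hb
  have hb' : x1 < p.1 ∧ p.1 < x2 := by
    have := h.lt
    rcases hb with h | h <;> constructor <;> linarith
  rcases U_RR.1 hp with k | k
  · exact b3 p k hb'
  · exact h2.hR p k hb'

theorem mem_lm_neg {E : Set (Bool × ℝ)} {d t} : (d, t) ∈ lm (fun _ t => -t) '' E ↔ (d, -t) ∈ E := by
  constructor
  · rintro ⟨⟨d', t'⟩, h, e⟩
    simp only [lm, Prod.mk.injEq] at e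
    obtain ⟨rfl, rfl⟩ := e
    simpa using h
  · intro h
    exact ⟨_, h, by simp [lm]⟩

theorem RR_map (f : Pt → Pt) (T : Theta) : RR (mapTheta f T) = (RR T).image f := by
  unfold RR mapTheta
  simp [Finset.image_union]

theorem mem_rho {P : Finset Pt} {a b : ℝ} : (a, b) ∈ P.image rho ↔ (-a, -b) ∈ P := by
  rw [Finset.mem_image]
  constructor
  · rintro ⟨q, hq, e⟩
    have : q = (-a, -b) := by rw [← rho_rho q, e]; rfl
    rwa [← this]
  · intro h
    exact ⟨_, h, by simp [rho]⟩

theorem Same.map {T T'} (f : Pt → Pt) (h : Same T T') : Same (mapTheta f T) (mapTheta f T') := by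
  obtain ⟨h1, h2, h3⟩ := h
  refine ⟨?_, ?_, ?_⟩ <;> simp only [mapTheta, h1, h2, h3]

theorem strip' {T E x1 x2 c1 d1} (ok : OK2 T E) (hlt : x1 < x2) (e1 : (true, x1) ∉ E)
    (e2 : (true, x2) ∉ E) (r1 : ∃ p ∈ RR T, p.1 = x1) (r2 : ∃ p ∈ RR T, p.1 = x2)
    (hR : ∀ p ∈ RR T, ¬ (x1 < p.1 ∧ p.1 < x2)) (cd : c1 < d1)
    (l1 : ∀ p ∈ RR T, p.1 = x1 → p.2 = c1 ∨ p.2 = d1)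
    (l2 : ∀ p ∈ RR T, p.1 = x2 → ¬ (c1 < p.2 ∧ p.2 ≤ d1))
    (l3 : (x2, c1) ∈ RR T → (false, c1) ∉ E) :
    ∃ T', Eq0 T T' ∧ Same T T' ∧ OK2 T' E ∧ ∀ p ∈ T'.U, ¬ Bw x1 x2 p.1 := by
  have ok0 : OK2 (mapTheta rho T) (lm (fun _ t => -t) '' E) := by
    rw [rho_cm]
    apply ok.image
    intro p _ q _ d e
    exact neg_injective e
  have H : SH (mapTheta rho T) (lm (fun _ t => -t) '' E) (-x2) (-x1) (-d1) (-c1) := by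
    refine ⟨ok0, by linarith, ?_, ?_, ?_, ?_, ?_, by linarith, ?_, ?_, ?_⟩
    · rw [mem_lm_neg, neg_neg]; exact e2
    · rw [mem_lm_neg, neg_neg]; exact e1
    · obtain ⟨p, hp, e⟩ := r2
      exact ⟨rho p, by rw [RR_map]; exact Finset.mem_image_of_mem _ hp, by simp [e]⟩
    · obtain ⟨p, hp, e⟩ := r1
      exact ⟨rho p, by rw [RR_map]; exact Finset.mem_image_of_mem _ hp, by simp [e]⟩
    · rw [RR_map]
      simp only [Finset.forall_mem_image, rho_1]
      intro p hp h
      exact hR p hp ⟨by linarith, by linarith⟩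
    · rw [RR_map]
      simp only [Finset.forall_mem_image, rho_1, rho_2, neg_inj]
      intro p hp h
      exact (l1 p hp h).symm
    · rw [RR_map]
      simp only [Finset.forall_mem_image, rho_1, rho_2, neg_inj]
      intro p hp h h'
      exact l2 p hp h ⟨by linarith, by linarith⟩
    · rw [RR_map, mem_rho, mem_lm_neg, neg_neg, neg_neg]
      exact l3
  obtain ⟨T1, k1, k2, k3, k4⟩ := strip H
  have s1 := k1.rho
  have s2 := k2.map rho
  rw [map_rho_rho] at s1 s2
  refine ⟨_, s1, s2, ok2_same ok (s1.ok ok.ok) s2, ?_⟩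
  rw [mapTheta_U]
  simp only [Finset.forall_mem_image, rho_1]
  intro p hp hb
  apply k4 p hp
  unfold Bw at hb ⊢
  rcases hb with h | h
  · left; constructor <;> linarith
  · right; constructor <;> linarith


theorem OK2.uniq {T E} (h : OK2 T E) {i : Fin 4} (hi : i ≠ 3) {d t} (hE : (d, t) ∈ E) :
    ∃ p ∈ T.pt i, co d p = t ∧ ∀ q ∈ T.pt i, co d q = t → q = p := by
  have h1 : cnt (T.pt i) d t = 1 := (h.good i d t).2.2 (by rwa [EE, if_neg hi])
  obtain ⟨p, hp⟩ := Finset.card_eq_one.1 h1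
  have hm : ∀ q, q ∈ (T.pt i).filter (fun p => co d p = t) ↔ q = p := by
    intro q; rw [hp, Finset.mem_singleton]
  have := (hm p).2 rfl
  rw [Finset.mem_filter] at this
  exact ⟨p, this.1, this.2, fun q hq e => (hm q).1 (Finset.mem_filter.2 ⟨hq, e⟩)⟩

def CC (T : Theta) (E : Set (Bool × ℝ)) (k l : Fin 4) : Prop :=
  ∀ p ∈ T.pt k, ∀ q ∈ T.pt l, p ≠ q ∧ ∀ d, co d p = co d q → (d, co d p) ∈ E ∧ k ≠ 3 ∧ l ≠ 3

theorem CC.symm {T E k l} (h : CC T E k l) : CC T E l k := fun p hp q hq =>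
  ⟨(h q hq p hp).1.symm, fun d e => by
    have := (h q hq p hp).2 d e.symm
    rw [e]; exact ⟨this.1, this.2.2, this.2.1⟩⟩

theorem ok2_mk {T E} (ends : ∃ e1 e2, e1 ≠ e2 ∧ E = {e1, e2}) (good : ∀ i, Good (T.pt i) (EE E i))
    (nosub : ∀ i, i ≠ 3 → NoSub (T.pt i)) (h01 : CC T E 0 1) (h02 : CC T E 0 2) (h03 : CC T E 0 3)
    (h12 : CC T E 1 2) (h13 : CC T E 1 3) (h23 : CC T E 2 3) : OK2 T E := by
  have all : ∀ k l, k ≠ l → CC T E k l := by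
    intro k l hkl
    fin_cases k <;> fin_cases l <;> first
      | exact absurd rfl hkl | exact h01 | exact h02 | exact h03 | exact h12 | exact h13 | exact h23
      | exact h01.symm | exact h02.symm | exact h03.symm | exact h12.symm | exact h13.symm | exact h23.symm
  exact ⟨ends, good, nosub, fun i j hij p hp hq => (all i j hij p hp p hq).1 rfl,
    fun i j hij p hp q hq => (all i j hij p hp q hq).2⟩

def E' (E : Set (Bool × ℝ)) (y0 x : ℝ) : Set (Bool × ℝ) := {l | l = (true, x) ∨ (l ∈ E ∧ l ≠ (false, y0))}

theorem diag_notmem {S : Finset Pt} {q : Pt} {d} (hd : IsDiagram S) (h : cnt S d (co d q) ≤ 1) : q ∉ S := by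
  intro hq
  have h1 : 0 < cnt S d (co d q) := cnt_pos.2 ⟨q, hq, rfl⟩
  rcases diag_cnt.1 hd d (co d q) with h2 | h2 <;> omega

theorem slide_ok {T E T' i j y0 y0' P Q} (h : OK2 T E) (hij : (i = 1 ∧ j = 2) ∨ (i = 2 ∧ j = 1))
    (hy : (false, y0) ∈ E) (hP : P ∈ T.a) (hP2 : P.2 = y0) (hQ : Q ∈ T.pt i) (hQ2 : Q.2 = y0)
    (hQE : (true, Q.1) ∉ E) (hf : ∀ p ∈ T.U, p.2 ≠ y0')
    (ha : T'.pt 0 = insert (Q.1, y0') (insert (P.1, y0') (T.a.erase P)))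
    (hi : T'.pt i = (T.pt i).erase Q) (hj : T'.pt j = insert Q (T.pt j)) (hd : T'.pt 3 = T.pt 3) :
    OK2 T' (E' E y0 Q.1) := by
  have i0 : (0 : Fin 4) ≠ i := by rcases hij with h | h <;> rw [h.1] <;> decide
  have j0 : (0 : Fin 4) ≠ j := by rcases hij with h | h <;> rw [h.2] <;> decide
  have i3 : i ≠ 3 := by rcases hij with h | h <;> rw [h.1] <;> decide
  have j3 : j ≠ 3 := by rcases hij with h | h <;> rw [h.2] <;> decide
  have ij : i ≠ j := by rcases hij with h | h <;> rw [h.1, h.2] <;> decide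
  have hP0 : P ∈ T.pt 0 := hP
  have PU := pt_sub_U T 0 hP0
  have QU := pt_sub_U T i hQ
  -- nobody else on the column of Q
  have col : ∀ k, k ≠ i → ∀ q ∈ T.pt k, q.1 ≠ Q.1 := by
    intro k hk q hq e
    have := (h.cross i k hk.symm Q hQ q hq true e.symm).1
    exact hQE this
  have uP : ∀ q ∈ T.pt 0, q.2 = y0 → q = P := by
    obtain ⟨p, -, -, h3⟩ := h.uniq (i := 0) (by decide) hy
    intro q hq e
    rw [h3 q hq e, h3 P hP0 hP2]
  have uQ : ∀ q ∈ T.pt i, q.2 = y0 → q = Q := by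
    obtain ⟨p, -, -, h3⟩ := h.uniq (i := i) i3 hy
    intro q hq e
    rw [h3 q hq e, h3 Q hQ hQ2]
  have Qj : Q ∉ T.pt j := h.disj i j ij Q hQ
  have PQ : P.1 ≠ Q.1 := col 0 i0 P hP0
  have yy : y0 ≠ y0' := by rw [← hP2]; exact hf P PU
  have A1n : (P.1, y0') ∉ T.a.erase P := fun hh =>
    hf _ (pt_sub_U T 0 (Finset.mem_of_mem_erase hh)) rfl
  have A2n : (Q.1, y0') ∉ insert (P.1, y0') (T.a.erase P) := by
    intro hh
    rcases Finset.mem_insert.1 hh with e | e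
    · simp only [Prod.mk.injEq] at e; exact PQ e.1.symm
    · exact hf _ (pt_sub_U T 0 (Finset.mem_of_mem_erase e)) rfl
  have cQj : cnt (T.pt j) true Q.1 = 0 := cnt_zero (col j ij.symm)
  have cQ0 : cnt (T.pt 0) true Q.1 = 0 := cnt_zero (col 0 i0)
  have cy0 : cnt (T.pt 0) false y0' = 0 := cnt_zero (fun p hp => hf p (pt_sub_U T 0 hp))
  have good0 : ∀ k, k ≠ 3 → Good (T.pt k) E := by
    intro k hk; have := h.good k; rwa [EE, if_neg hk] at this
  have yE : (false, y0') ∉ E := by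
    intro hh
    have := (good0 0 (by decide) false y0').2.2 hh
    omega
  have mE : ∀ d t, (d, t) ∈ E' E y0 Q.1 ↔ (d = true ∧ t = Q.1) ∨ ((d, t) ∈ E ∧ ¬ (d = false ∧ t = y0)) := by
    intro d t
    unfold E'
    simp only [Set.mem_ofPred_eq, Prod.mk.injEq, ne_eq]
  have ga : Good (T'.pt 0) (E' E y0 Q.1) := by
    intro d t
    rw [mE, ha, cnt_insert A2n, cnt_insert A1n]
    have k1 := cnt_erase hP0 d t
    have k2 := good0 0 (by decide) d t
    have k3 := (good0 0 (by decide) false y0).2.2 hy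
    change cnt (T.a) d t = _ at k1
    change cnt (T.a) d t ≤ 2 ∧ _ at k2
    change cnt T.a false y0 = 1 at k3
    change cnt T.a true Q.1 = 0 at cQ0
    change cnt T.a false y0' = 0 at cy0
    cases d
    · simp only [co_false, hP2] at *
      by_cases t1 : t = y0
      · subst t1
        simp [yy.symm] at *
        omega
      · by_cases t2 : t = y0'
        · subst t2
          simp [yy, yE] at *
          omega
        · simp [Ne.symm t1, Ne.symm t2, t1] at *
          simp [← k1, k2]
    · simp only [co_true] at *
      by_cases t1 : t = Q.1
      · subst t1
        simp [PQ] at *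
        omega
      · simp [Ne.symm t1, t1] at *
        by_cases t2 : P.1 = t
        · simp [t2] at *
          rw [k1] at k2
          refine ⟨by omega, ?_⟩
          rw [← k2.2]; omega
        · simp [t2] at *
          rw [← k1]; exact k2
  have gi : Good (T'.pt i) (E' E y0 Q.1) := by
    intro d t
    rw [mE, hi]
    have k1 := cnt_erase hQ d t
    have k2 := good0 i i3 d t
    have k3 := (good0 i i3 false y0).2.2 hy
    have k4 : 0 < cnt (T.pt i) true Q.1 := cnt_pos.2 ⟨Q, hQ, rfl⟩
    have k5 := good0 i i3 true Q.1
    cases d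
    · simp only [co_false, hQ2] at *
      by_cases t1 : t = y0
      · subst t1
        simp at *
        omega
      · simp [Ne.symm t1, t1] at *
        rw [← k1]; exact k2
    · simp only [co_true] at *
      by_cases t1 : t = Q.1
      · subst t1
        simp [hQE] at *
        omega
      · simp [Ne.symm t1, t1] at *
        rw [← k1]; exact k2
  have gj : Good (T'.pt j) (E' E y0 Q.1) := by
    intro d t
    rw [mE, hj, cnt_insert Qj]
    have k2 := good0 j j3 d t
    have k3 := (good0 j j3 false y0).2.2 hy
    cases d
    · simp only [co_false, hQ2] at *
      by_cases t1 : t = y0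
      · subst t1
        simp at *
        omega
      · simp [Ne.symm t1, t1] at *
        exact k2
    · simp only [co_true] at *
      by_cases t1 : t = Q.1
      · subst t1
        simp at *
        omega
      · simp [Ne.symm t1, t1] at *
        exact k2
  have gd : Good (T'.pt 3) ∅ := by
    rw [hd]; have := h.good 3; rwa [EE, if_pos rfl] at this
  have na : NoSub (T'.pt 0) := by
    intro S hS hdS
    rw [ha] at hS
    have q1 : (Q.1, y0') ∉ S := by
      apply diag_notmem (d := true) hdS
      refine (cnt_mono hS _ _).trans ?_
      rw [← ha]
      have := (ga true Q.1).2.2 ((mE _ _).2 (Or.inl ⟨rfl, rfl⟩))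
      exact this.le
    have hS2 := (Finset.subset_insert_iff_of_notMem q1).1 hS
    have q2 : (P.1, y0') ∉ S := by
      apply diag_notmem (d := false) hdS
      refine (cnt_mono hS2 _ _).trans ?_
      rw [cnt_insert A1n]
      have k1 := cnt_mono (Finset.erase_subset P T.a) false y0'
      change cnt T.a false y0' = 0 at cy0
      simp only [co_false, if_true]
      omega
    have hS3 := (Finset.subset_insert_iff_of_notMem q2).1 hS2
    exact h.nosub 0 (by decide) S (hS3.trans (Finset.erase_subset _ _)) hdS
  have ni : NoSub (T'.pt i) := by
    intro S hS hdS
    rw [hi] at hS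
    exact h.nosub i i3 S (hS.trans (Finset.erase_subset _ _)) hdS
  have nj : NoSub (T'.pt j) := by
    intro S hS hdS
    have q1 : Q ∉ S := by
      apply diag_notmem (d := true) hdS
      refine (cnt_mono hS _ _).trans ?_
      have := (gj true Q.1).2.2 ((mE _ _).2 (Or.inl ⟨rfl, rfl⟩))
      exact this.le
    rw [hj] at hS
    exact h.nosub j j3 S ((Finset.subset_insert_iff_of_notMem q1).1 hS) hdS
  -- crosses
  have caR : ∀ p ∈ T'.pt 0, ∀ k, k ≠ 0 → ∀ q ∈ T.pt k, p ≠ q ∧ ∀ d, co d p = co d q →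
      (d, co d p) ∈ E' E y0 Q.1 ∧ k ≠ 3 := by
    intro p hp k hk q hq
    have qU := pt_sub_U T k hq
    rw [ha, Finset.mem_insert, Finset.mem_insert, Finset.mem_erase] at hp
    rcases hp with rfl | rfl | ⟨hp1, hp2⟩
    · refine ⟨fun e => hf q qU (by rw [← e]), ?_⟩
      intro d e
      cases d
      · exact absurd e.symm (hf q qU)
      · refine ⟨(mE _ _).2 (Or.inl ⟨rfl, rfl⟩), ?_⟩
        rintro rfl
        exact col 3 i3.symm q hq e.symm
    · refine ⟨fun e => hf q qU (by rw [← e]), ?_⟩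
      intro d e
      cases d
      · exact absurd e.symm (hf q qU)
      · have := h.cross 0 k hk.symm P hP0 q hq true e
        refine ⟨(mE _ _).2 (Or.inr ⟨this.1, by simp⟩), this.2.2⟩
    · refine ⟨fun e => h.disj 0 k hk.symm p hp2 (e ▸ hq), ?_⟩
      intro d e
      have := h.cross 0 k hk.symm p hp2 q hq d e
      refine ⟨(mE _ _).2 (Or.inr ⟨this.1, ?_⟩), this.2.2⟩
      rintro ⟨rfl, e2⟩
      exact hp1 (uP p hp2 e2)
  have c0i : CC T' (E' E y0 Q.1) 0 i := by
    intro p hp q hq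
    rw [hi] at hq
    have := caR p hp i i0.symm q (Finset.mem_of_mem_erase hq)
    exact ⟨this.1, fun d e => ⟨(this.2 d e).1, by decide, (this.2 d e).2⟩⟩
  have c0j : CC T' (E' E y0 Q.1) 0 j := by
    intro p hp q hq
    rw [hj, Finset.mem_insert] at hq
    rcases hq with rfl | hq
    · have := caR p hp i i0.symm q hQ
      exact ⟨this.1, fun d e => ⟨(this.2 d e).1, by decide, j3⟩⟩
    · have := caR p hp j j0.symm q hq
      exact ⟨this.1, fun d e => ⟨(this.2 d e).1, by decide, (this.2 d e).2⟩⟩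
  have c03 : CC T' (E' E y0 Q.1) 0 3 := by
    intro p hp q hq
    rw [hd] at hq
    have := caR p hp 3 (by decide) q hq
    exact ⟨this.1, fun d e => ⟨(this.2 d e).1, by decide, (this.2 d e).2⟩⟩
  have cij : CC T' (E' E y0 Q.1) i j := by
    intro p hp q hq
    rw [hi, Finset.mem_erase] at hp
    rw [hj, Finset.mem_insert] at hq
    rcases hq with rfl | hq
    · refine ⟨hp.1, fun d e => ⟨?_, i3, j3⟩⟩
      cases d
      · exact absurd (uQ p hp.2 (e.trans hQ2)) hp.1
      · exact (mE _ _).2 (Or.inl ⟨rfl, e⟩)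
    · refine ⟨fun e => h.disj i j ij p hp.2 (e ▸ hq), fun d e => ⟨?_, i3, j3⟩⟩
      refine (mE _ _).2 (Or.inr ⟨(h.cross i j ij p hp.2 q hq d e).1, ?_⟩)
      rintro ⟨rfl, e2⟩
      exact hp.1 (uQ p hp.2 e2)
  have ci3 : CC T' (E' E y0 Q.1) i 3 := by
    intro p hp q hq
    rw [hi, Finset.mem_erase] at hp
    rw [hd] at hq
    exact ⟨fun e => h.disj i 3 i3 p hp.2 (e ▸ hq), fun d e =>
      absurd rfl (h.cross i 3 i3 p hp.2 q hq d e).2.2⟩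
  have cj3 : CC T' (E' E y0 Q.1) j 3 := by
    intro p hp q hq
    rw [hj, Finset.mem_insert] at hp
    rw [hd] at hq
    rcases hp with rfl | hp
    · exact ⟨fun e => h.disj i 3 i3 p hQ (e ▸ hq), fun d e =>
        absurd rfl (h.cross i 3 i3 p hQ q hq d e).2.2⟩
    · exact ⟨fun e => h.disj j 3 j3 p hp (e ▸ hq), fun d e =>
        absurd rfl (h.cross j 3 j3 p hp q hq d e).2.2⟩
  have hends : ∃ e1 e2, e1 ≠ e2 ∧ E' E y0 Q.1 = {e1, e2} := by
    obtain ⟨e1, e2, hne, he⟩ := h.ends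
    rw [he] at hy hQE
    simp only [Set.mem_insert_iff, Set.mem_singleton_iff, not_or] at hy hQE
    rcases hy with hy | hy
    · refine ⟨(true, Q.1), e2, hQE.2, ?_⟩
      ext l
      simp only [E', he, hy, Set.mem_ofPred_eq, Set.mem_insert_iff, Set.mem_singleton_iff]
      rw [← hy] at hne
      constructor
      · tauto
      · rintro (rfl | rfl)
        · exact Or.inl rfl
        · exact Or.inr ⟨Or.inr rfl, fun e => hne (by rw [e, hy])⟩
    · refine ⟨(true, Q.1), e1, hQE.1, ?_⟩
      ext l
      simp only [E', he, hy, Set.mem_ofPred_eq, Set.mem_insert_iff, Set.mem_singleton_iff]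
      constructor
      · tauto
      · rintro (rfl | rfl)
        · exact Or.inl rfl
        · exact Or.inr ⟨Or.inl rfl, fun e => hne e⟩
  rcases hij with ⟨rfl, rfl⟩ | ⟨rfl, rfl⟩
  · refine ok2_mk hends ?_ ?_ c0i c0j c03 cij ci3 cj3
    · intro k
      fin_cases k
      exacts [ga, gi, gj, gd]
    · intro k hk
      fin_cases k
      exacts [na, ni, nj, absurd rfl hk]
  · refine ok2_mk hends ?_ ?_ c0j c0i c03 cij.symm cj3 ci3
    · intro k
      fin_cases k
      exacts [ga, gj, gi, gd]
    · intro k hk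
      fin_cases k
      exacts [na, nj, ni, absurd rfl hk]


theorem exEps (U : Finset Pt) : ∃ ε : ℝ, 0 < ε ∧ ∀ p ∈ U, ∀ q ∈ U, p.2 ≠ q.2 → ε < |p.2 - q.2| := by
  classical
  have key : ∀ S : Finset (Pt × Pt), (∀ r ∈ S, r.1.2 ≠ r.2.2) → ∃ ε : ℝ, 0 < ε ∧ ∀ r ∈ S, ε < |r.1.2 - r.2.2| := by
    intro S
    induction S using Finset.induction_on with
    | empty => intro _; exact ⟨1, one_pos, by simp⟩
    | insert a s _ ih =>
      intro hs
      obtain ⟨e, he, h⟩ := ih (fun r hr => hs r (Finset.mem_insert_of_mem hr))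
      have ha : 0 < |a.1.2 - a.2.2| := abs_pos.2 (sub_ne_zero.2 (hs a (Finset.mem_insert_self _ _)))
      refine ⟨min e (|a.1.2 - a.2.2| / 2), by positivity, ?_⟩
      intro r hr
      rcases Finset.mem_insert.1 hr with rfl | hr
      · exact (min_le_right _ _).trans_lt (by linarith)
      · exact (min_le_left _ _).trans_lt (h r hr)
  obtain ⟨e, he, h⟩ := key ((U ×ˢ U).filter (fun r => r.1.2 ≠ r.2.2)) (fun r hr => (Finset.mem_filter.1 hr).2)
  exact ⟨e, he, fun p hp q hq hne => h (p, q) (Finset.mem_filter.2 ⟨Finset.mem_product.2 ⟨hp, hq⟩, hne⟩)⟩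

theorem upd1 {C : Finset Pt} {P1 P2 P3 r1 r2 r3} (h1 : P1 ∈ C) :
    updPath C P1 P2 P3 r1 r2 r3 = C.erase P1 ∪ r1 := by simp [updPath, h1]
theorem upd2 {C : Finset Pt} {P1 P2 P3 r1 r2 r3} (h1 : P1 ∉ C) (h2 : P2 ∈ C) :
    updPath C P1 P2 P3 r1 r2 r3 = C.erase P2 ∪ r2 := by simp [updPath, h1, h2]
theorem upd3 {C : Finset Pt} {P1 P2 P3 r1 r2 r3} (h1 : P1 ∉ C) (h2 : P2 ∉ C) :
    updPath C P1 P2 P3 r1 r2 r3 = C.erase P3 ∪ r3 := by simp [updPath, h1, h2]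

theorem ins_a {C : Finset Pt} {P A1 A2 : Pt} : insert A2 (insert A1 (C.erase P)) = C.erase P ∪ {A1, A2} := by
  ext q; simp; tauto
theorem ins_a' {C : Finset Pt} {P A1 A2 : Pt} : insert A2 (insert A1 (C.erase P)) = C.erase P ∪ {A2, A1} := by
  ext q; simp
theorem ins_j {C : Finset Pt} {Q S : Pt} (h : S ∈ C) : insert Q C = C.erase S ∪ {Q, S} := by
  ext q; simp; by_cases e : q = S
  · subst e; simp [h]
  · simp [e]
theorem ins_j' {C : Finset Pt} {Q S : Pt} (h : S ∈ C) : insert Q C = C.erase S ∪ {S, Q} := by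
  rw [ins_j h, Finset.pair_comm]

theorem er_un {B C : Finset Pt} {Q : Pt} (h : Q ∈ B) : B.erase Q ∪ insert Q C = B ∪ C := by
  ext q
  by_cases e : q = Q
  · subst e; simp [h]
  · simp [e]
theorem er_un' {B C : Finset Pt} {Q : Pt} (h : Q ∈ B) : insert Q C ∪ B.erase Q = C ∪ B := by
  rw [Finset.union_comm, er_un h, Finset.union_comm]

set_option maxHeartbeats 1000000 in
/-- slide, core -/
theorem slide0 {T E i j y0 P Q S} (h : OK2 T E) (hij : (i = 1 ∧ j = 2) ∨ (i = 2 ∧ j = 1))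
    (hy : (false, y0) ∈ E) (hP : P ∈ T.pt 0) (hP2 : P.2 = y0) (hQ : Q ∈ T.pt i) (hQ2 : Q.2 = y0)
    (hS : S ∈ T.pt j) (hS2 : S.2 = y0)
    (hQE : (true, Q.1) ∉ E) :
    ∃ T', ThMove T T' ∧ OK2 T' (E' E y0 Q.1) ∧ T'.b ∪ T'.c = T.b ∪ T.c ∧ T'.d = T.d := by
  have i0 : (0 : Fin 4) ≠ i := by rcases hij with h | h <;> rw [h.1] <;> decide
  have j0 : (0 : Fin 4) ≠ j := by rcases hij with h | h <;> rw [h.2] <;> decide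
  have i3 : i ≠ 3 := by rcases hij with h | h <;> rw [h.1] <;> decide
  have j3 : j ≠ 3 := by rcases hij with h | h <;> rw [h.2] <;> decide
  have ij : i ≠ j := by rcases hij with h | h <;> rw [h.1, h.2] <;> decide
  obtain ⟨ε, he, hε⟩ := exEps T.U
  have PU := pt_sub_U T 0 hP
  have uu : ∀ k, k ≠ 3 → ∀ p ∈ T.pt k, ∀ q ∈ T.pt k, p.2 = y0 → q.2 = y0 → p = q := by
    intro k hk p hp q hq e1 e2
    obtain ⟨r, -, -, h3⟩ := h.uniq (i := k) hk hy
    rw [h3 p hp e1, h3 q hq e2]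
  have PQ : P ≠ Q := fun e => h.disj 0 i i0 P hP (e ▸ hQ)
  have PS : P ≠ S := fun e => h.disj 0 j j0 P hP (e ▸ hS)
  have QS : Q ≠ S := fun e => h.disj i j ij Q hQ (e ▸ hS)
  have PQ1 : P.1 ≠ Q.1 := fun e => PQ (Prod.ext e (hP2.trans hQ2.symm))
  have PS1 : P.1 ≠ S.1 := fun e => PS (Prod.ext e (hP2.trans hS2.symm))
  have QS1 : Q.1 ≠ S.1 := fun e => QS (Prod.ext e (hQ2.trans hS2.symm))
  have Pi : P ∉ T.pt i := h.disj 0 i i0 P hP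
  have Pj : P ∉ T.pt j := h.disj 0 j j0 P hP
  have Q0 : Q ∉ T.pt 0 := h.disj i 0 i0.symm Q hQ
  have Qj : Q ∉ T.pt j := h.disj i j ij Q hQ
  have S0 : S ∉ T.pt 0 := h.disj j 0 j0.symm S hS
  have Si : S ∉ T.pt i := h.disj j i ij.symm S hS
  have hfilt : ∀ p, p ∈ (T.a ∪ T.b ∪ T.c).filter (fun p => p.2 = y0) ↔ p = P ∨ p = Q ∨ p = S := by
    intro p
    have e : p ∈ T.a ∪ T.b ∪ T.c ↔ p ∈ T.pt 0 ∨ p ∈ T.pt i ∨ p ∈ T.pt j := by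
      rcases hij with ⟨rfl, rfl⟩ | ⟨rfl, rfl⟩ <;> simp
      clear * -; tauto
    rw [Finset.mem_filter, e]
    constructor
    · rintro ⟨h1 | h1 | h1, h2⟩
      · exact Or.inl (uu 0 (by decide) p h1 P hP h2 hP2)
      · exact Or.inr (Or.inl (uu i i3 p h1 Q hQ h2 hQ2))
      · exact Or.inr (Or.inr (uu j j3 p h1 S hS h2 hS2))
    · rintro (rfl | rfl | rfl)
      exacts [⟨Or.inl hP, hP2⟩, ⟨Or.inr (Or.inl hQ), hQ2⟩, ⟨Or.inr (Or.inr hS), hS2⟩]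
  have hpath : pathOf T Q ≠ {Q} := by
    have e : pathOf T Q = T.pt i := by
      change Q ∉ T.a at Q0
      rcases hij with ⟨rfl, rfl⟩ | ⟨rfl, rfl⟩
      · change Q ∈ T.b at hQ
        simp [pathOf, Q0, hQ]
      · change Q ∉ T.b at Qj
        simp [pathOf, Q0, Qj]
    rw [e]; intro e2
    apply hQE
    have := (h.good i true Q.1).2
    rw [EE, if_neg i3] at this
    rw [← this, e2]
    rw [cnt, Finset.filter_true_of_mem (by simp), Finset.card_singleton]
  have hfu : ∀ p ∈ T.U, p.2 ≠ y0 + ε := by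
    intro p hp e
    have := hε p hp P PU (by rw [e, hP2]; intro h; linarith)
    rw [e, hP2, show y0 + ε - y0 = ε by ring, abs_of_pos he] at this
    exact lt_irrefl _ this
  have hfd : ∀ p ∈ T.U, p.2 ≠ y0 - ε := by
    intro p hp e
    have := hε p hp P PU (by rw [e, hP2]; intro h; linarith)
    rw [e, hP2, show y0 - ε - y0 = -ε by ring, abs_neg, abs_of_pos he] at this
    exact lt_irrefl _ this
  have mk : ∀ y0', (∀ p ∈ T.U, p.2 ≠ y0') → ∃ T' : Theta,
      T'.pt 0 = insert (Q.1, y0') (insert (P.1, y0') ((T.pt 0).erase P)) ∧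
      T'.pt i = (T.pt i).erase Q ∧ T'.pt j = insert Q (T.pt j) ∧ T'.d = T.d ∧
      OK2 T' (E' E y0 Q.1) ∧ T'.b ∪ T'.c = T.b ∪ T.c := by
    intro y0' hf
    rcases hij with ⟨rfl, rfl⟩ | ⟨rfl, rfl⟩
    · refine ⟨⟨_, _, _, _⟩, rfl, rfl, rfl, rfl, ?_, ?_⟩
      · exact slide_ok h (Or.inl ⟨rfl, rfl⟩) hy hP hP2 hQ hQ2 hQE hf rfl rfl rfl rfl
      · change Q ∈ T.b at hQ
        exact er_un hQ
    · refine ⟨⟨_, _, _, _⟩, rfl, rfl, rfl, rfl, ?_, ?_⟩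
      · exact slide_ok h (Or.inr ⟨rfl, rfl⟩) hy hP hP2 hQ hQ2 hQE hf rfl rfl rfl rfl
      · change Q ∈ T.c at hQ
        exact er_un' hQ
  have bc : ∀ (T' : Theta) (F : Finset Pt → Finset Pt), T'.pt i = F (T.pt i) → T'.pt j = F (T.pt j) →
      T'.b = F T.b ∧ T'.c = F T.c := by
    intro T' F h1 h2
    rcases hij with ⟨rfl, rfl⟩ | ⟨rfl, rfl⟩
    exacts [⟨h1, h2⟩, ⟨h2, h1⟩]
  have fin : ∀ (T' : Theta) P1 P2 P3 (r1 r2 r3 : Finset Pt), OK2 T' (E' E y0 Q.1) → T'.d = T.d →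
      P1.2 = y0 → P2.2 = y0 → P3.2 = y0 → P1.1 < P2.1 → P2.1 < P3.1 → 
      (∀ p, (p = P ∨ p = Q ∨ p = S) ↔ (p = P1 ∨ p = P2 ∨ p = P3)) →
      ((r1 = {ptUp ε P1, ptUp ε P2} ∧ r2 = ∅ ∧ r3 = {P2, P3} ∧ pathOf T P2 ≠ {P2}) ∨
       (r1 = {ptDn ε P1, ptDn ε P3} ∧ r2 = {P2, P3} ∧ r3 = ∅ ∧ pathOf T P3 ≠ {P3}) ∨
       (r1 = {P1, P3} ∧ r2 = {ptUp ε P2, ptUp ε P3} ∧ r3 = ∅ ∧ pathOf T P3 ≠ {P3}) ∨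
       (r1 = ∅ ∧ r2 = {ptDn ε P2, ptDn ε P1} ∧ r3 = {P1, P3} ∧ pathOf T P1 ≠ {P1}) ∨
       (r1 = ∅ ∧ r2 = {P1, P2} ∧ r3 = {ptUp ε P3, ptUp ε P1} ∧ pathOf T P1 ≠ {P1}) ∨
       (r1 = {P1, P2} ∧ r2 = ∅ ∧ r3 = {ptDn ε P3, ptDn ε P2} ∧ pathOf T P2 ≠ {P2})) →
      T'.pt 0 = updPath (T.pt 0) P1 P2 P3 r1 r2 r3 →
      T'.pt i = updPath (T.pt i) P1 P2 P3 r1 r2 r3 →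
      T'.pt j = updPath (T.pt j) P1 P2 P3 r1 r2 r3 → ThMove T T' := by
    intro T' P1 P2 P3 r1 r2 r3 hok hd h1 h2 h3 h12 h23 hp hr ha hi hj
    refine Or.inr (Or.inr (Or.inr (Or.inr (Or.inl ⟨h.ok, hok.ok, y0, P1, P2, P3, ε, he, hε, h1, h2, h3, h12, h23, ?_, hd,
      r1, r2, r3, hr, ha, ?_⟩))))
    · ext p; rw [hfilt, hp]; simp
    · exact bc T' (fun C => updPath C P1 P2 P3 r1 r2 r3) hi hj
  have up : ∀ W : Pt, W.2 = y0 → ((W.1, y0 + ε) : Pt) = ptUp ε W := by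
    intro W e; rw [ptUp, e]
  have dn : ∀ W : Pt, W.2 = y0 → ((W.1, y0 - ε) : Pt) = ptDn ε W := by
    intro W e; rw [ptDn, e]
  obtain ⟨T1, a1, b1, c1, d1, o1, u1⟩ := mk _ hfu
  obtain ⟨T2, a2, b2, c2, d2, o2, u2⟩ := mk _ hfd
  rw [up Q hQ2, up P hP2] at a1
  rw [dn Q hQ2, dn P hP2] at a2
  have b1' : T1.pt i = (T.pt i).erase Q ∪ ∅ := by rw [b1, Finset.union_empty]
  have b2' : T2.pt i = (T.pt i).erase Q ∪ ∅ := by rw [b2, Finset.union_empty]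
  rcases lt_or_gt_of_ne PQ1 with l1 | l1 <;> rcases lt_or_gt_of_ne PS1 with l2 | l2 <;>
    rcases lt_or_gt_of_ne QS1 with l3 | l3
  · -- P Q S
    refine ⟨T1, fin T1 P Q S _ _ _ o1 d1 hP2 hQ2 hS2 l1 l3 (fun p => Iff.rfl)
      (Or.inl ⟨rfl, rfl, rfl, hpath⟩) ?_ ?_ ?_, o1, u1, d1⟩
    · rw [upd1 hP, a1, ins_a]
    · rw [upd2 Pi hQ, b1']
    · rw [upd3 Pj Qj, c1, ins_j hS]
  · -- P S Q
    refine ⟨T2, fin T2 P S Q _ _ _ o2 d2 hP2 hS2 hQ2 l2 l3 (fun p => by clear * -; tauto)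
      (Or.inr (Or.inl ⟨rfl, rfl, rfl, hpath⟩)) ?_ ?_ ?_, o2, u2, d2⟩
    · rw [upd1 hP, a2, ins_a]
    · rw [upd3 Pi Si, b2']
    · rw [upd2 Pj hS, c2, ins_j' hS]
  · exact absurd (l1.trans l3) (not_lt.2 l2.le)
  · -- S P Q
    refine ⟨T1, fin T1 S P Q _ _ _ o1 d1 hS2 hP2 hQ2 l2 l1 (fun p => by clear * -; tauto)
      (Or.inr (Or.inr (Or.inl ⟨rfl, rfl, rfl, hpath⟩))) ?_ ?_ ?_, o1, u1, d1⟩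
    · rw [upd2 S0 hP, a1, ins_a]
    · rw [upd3 Si Pi, b1']
    · rw [upd1 hS, c1, ins_j' hS]
  · -- Q P S
    refine ⟨T2, fin T2 Q P S _ _ _ o2 d2 hQ2 hP2 hS2 l1 l2 (fun p => by clear * -; tauto)
      (Or.inr (Or.inr (Or.inr (Or.inl ⟨rfl, rfl, rfl, hpath⟩)))) ?_ ?_ ?_, o2, u2, d2⟩
    · rw [upd2 Q0 hP, a2, ins_a]
    · rw [upd1 hQ, b2']
    · rw [upd3 Qj Pj, c2, ins_j hS]
  · exact absurd (l2.trans l3) (not_lt.2 l1.le)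
  · -- Q S P
    refine ⟨T1, fin T1 Q S P _ _ _ o1 d1 hQ2 hS2 hP2 l3 l2 (fun p => by clear * -; tauto)
      (Or.inr (Or.inr (Or.inr (Or.inr (Or.inl ⟨rfl, rfl, rfl, hpath⟩))))) ?_ ?_ ?_, o1, u1, d1⟩
    · rw [upd3 Q0 S0, a1, ins_a]
    · rw [upd1 hQ, b1']
    · rw [upd2 Qj hS, c1, ins_j hS]
  · -- S Q P
    refine ⟨T2, fin T2 S Q P _ _ _ o2 d2 hS2 hQ2 hP2 l3 l1 (fun p => by clear * -; tauto)
      (Or.inr (Or.inr (Or.inr (Or.inr (Or.inr ⟨rfl, rfl, rfl, hpath⟩))))) ?_ ?_ ?_, o2, u2, d2⟩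
    · rw [upd3 S0 Q0, a2, ins_a]
    · rw [upd2 Si hQ, b2']
    · rw [upd1 hS, c2, ins_j' hS]

theorem mem_RR_bc {T : Theta} {p : Pt} : p ∈ RR T ↔ p ∈ T.b ∨ p ∈ T.c ∨ p ∈ T.d := by
  simp [RR]

theorem slideH {T E y0 Q} (h : OK2 T E) (hy : (false, y0) ∈ E) (hQ : Q ∈ RR T) (hQ2 : Q.2 = y0)
    (hQE : (true, Q.1) ∉ E) :
    ∃ T', ThetaEquiv T T' ∧ OK2 T' (E' E y0 Q.1) ∧ RR T' = RR T := by
  obtain ⟨P, hP, hP2, -⟩ := h.uniq (i := 0) (by decide) hy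
  have key : ∀ i j : Fin 4, ((i = 1 ∧ j = 2) ∨ (i = 2 ∧ j = 1)) → j ≠ 3 → Q ∈ T.pt i →
      ∃ T', ThetaEquiv T T' ∧ OK2 T' (E' E y0 Q.1) ∧ RR T' = RR T := by
    intro i j hij hj hQ
    obtain ⟨S, hS, hS2, -⟩ := h.uniq (i := j) hj hy
    obtain ⟨T', h1, h2, h3, h4⟩ := slide0 h hij hy hP hP2 hQ hQ2 hS hS2 hQE
    exact ⟨T', Relation.ReflTransGen.single h1, h2, by unfold RR; rw [h3, h4]⟩
  rcases mem_RR_bc.1 hQ with hq | hq | hq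
  · exact key 1 2 (Or.inl ⟨rfl, rfl⟩) (by decide) hq
  · exact key 2 1 (Or.inr ⟨rfl, rfl⟩) (by decide) hq
  · exact absurd rfl (h.cross 0 3 (by decide) P hP Q hq false (hP2.trans hQ2.symm)).2.2

theorem RR_tr (T : Theta) : RR T.tr = (RR T).image tau := by rw [tr_def, RR_map]

theorem lt_lt (E : Set (Bool × ℝ)) : lt '' (lt '' E) = E := by
  ext ⟨d, t⟩; rw [mem_lt, mem_lt, Bool.not_not]

theorem E'_pair {y x : ℝ} {e} (hne : (false, y) ≠ e) : E' {(false, y), e} y x = {(true, x), e} := by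
  ext l
  simp only [E', Set.mem_ofPred_eq, Set.mem_insert_iff, Set.mem_singleton_iff]
  constructor
  · tauto
  · rintro (h | rfl)
    · exact Or.inl h
    · exact Or.inr ⟨Or.inr rfl, hne.symm⟩

theorem slide {T d t e Q} (h : OK2 T {(d, t), e}) (hne : (d, t) ≠ e) (hQ : Q ∈ RR T) (hQt : co d Q = t)
    (hQE : (!d, co (!d) Q) ≠ e) :
    ∃ T', ThetaEquiv T T' ∧ OK2 T' {(!d, co (!d) Q), e} ∧ RR T' = RR T := by
  have main : ∀ {T : Theta} {t e Q}, OK2 T {(false, t), e} → (false, t) ≠ e → Q ∈ RR T → Q.2 = t →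
      (true, Q.1) ≠ e → ∃ T', ThetaEquiv T T' ∧ OK2 T' {(true, Q.1), e} ∧ RR T' = RR T := by
    intro T t e Q h hne hQ hQt hQE
    have := slideH h (by simp) hQ hQt (by simpa using hQE)
    rwa [E'_pair hne] at this
  cases d
  · exact main h hne hQ hQt hQE
  · have h' := h.tr
    have hl : ∀ a b : Bool × ℝ, lt '' {a, b} = {lt a, lt b} := fun a b => Set.image_pair lt a b
    have linj : ∀ a b, lt a = lt b → a = b := by
      rintro ⟨a, s⟩ ⟨b, u⟩ h; simp [lt] at h; simp [h]
    rw [hl] at h'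
    obtain ⟨T', h1, h2, h3⟩ := main (T := T.tr) (t := t) (e := lt e) (Q := tau Q) h'
      (fun e' => hne (linj _ _ e'))
      (by rw [RR_tr]; exact Finset.mem_image_of_mem _ hQ) hQt (fun e' => hQE (linj _ _ e'))
    refine ⟨T'.tr, ?_, ?_, ?_⟩
    · have := h1.tr; rwa [tr_tr] at this
    · have := h2.tr
      rw [hl] at this
      have e2 : lt (lt e) = e := by cases e; simp [lt]
      rw [e2] at this; exact this
    · rw [RR_tr, h3, RR_tr, image_tau_tau]

theorem hor1 {T x e} (h : OK2 T {(true, x), e}) (hne : (true, x) ≠ e) :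
    ∃ T' q, ThetaEquiv T T' ∧ OK2 T' {(false, q), e} ∧ (false, q) ≠ e ∧ RR T' = RR T := by
  obtain ⟨P, hP, hP2, -⟩ := h.uniq (i := 1) (by decide) (d := true) (t := x) (by simp)
  obtain ⟨Q, hQ, hQ2, -⟩ := h.uniq (i := 2) (by decide) (d := true) (t := x) (by simp)
  have PR : P ∈ RR T := mem_RR.2 ⟨1, by decide, hP⟩
  have QR : Q ∈ RR T := mem_RR.2 ⟨2, by decide, hQ⟩
  by_cases h1 : (false, P.2) = e
  · have h2 : (false, Q.2) ≠ e := by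
      intro h2
      rw [← h1] at h2
      simp only [Prod.mk.injEq, true_and] at h2
      have : P = Q := Prod.ext (hP2.trans hQ2.symm) h2.symm
      exact h.disj 1 2 (by decide) P hP (this ▸ hQ)
    obtain ⟨T', a, b, c⟩ := slide h hne QR hQ2 h2
    exact ⟨T', _, a, b, h2, c⟩
  · obtain ⟨T', a, b, c⟩ := slide h hne PR hP2 h1
    exact ⟨T', _, a, b, h1, c⟩

theorem hor {T} (h : ThetaOK T) :
    ∃ T' q r, ThetaEquiv T T' ∧ OK2 T' {(false, q), (false, r)} ∧ q ≠ r ∧ RR T' = RR T := by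
  have h2 := ok2_of h
  obtain ⟨e1, e2, hne, he⟩ := h2.ends
  rw [he] at h2
  have st1 : ∃ T' q, ThetaEquiv T T' ∧ OK2 T' {(false, q), e2} ∧ (false, q) ≠ e2 ∧ RR T' = RR T := by
    obtain ⟨d, t⟩ := e1
    cases d
    · exact ⟨T, t, Relation.ReflTransGen.refl, h2, hne, rfl⟩
    · exact hor1 h2 hne
  obtain ⟨T1, q, a1, b1, c1, d1⟩ := st1
  obtain ⟨d, t⟩ := e2
  cases d
  · exact ⟨T1, q, t, a1, b1, fun e => c1 (by rw [e]), d1⟩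
  · rw [Set.pair_comm] at b1
    obtain ⟨T2, r, a2, b2, c2, d2⟩ := hor1 b1 c1.symm
    exact ⟨T2, r, q, a1.trans a2, b2, fun e => c2 (by rw [e]), d2.trans d1⟩

theorem avoid1 {T q r x y x' y'} (h : OK2 T {(false, q), (false, r)}) (hqr : q ≠ r) (hy : y ≠ y')
    (hD : IsDiagram (RR T)) (h1 : (x', y) ∈ RR T) (h2 : (x, y') ∈ RR T) (h3 : (x', y') ∈ RR T)
    (h4 : (x, y) ∉ RR T) (hq : q = y') :
    ∃ T' q r, ThetaEquiv T T' ∧ OK2 T' {(false, q), (false, r)} ∧ q ≠ r ∧ RR T' = RR T ∧ q ≠ y' ∧ r ≠ y' := by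
  subst hq
  have hne : ((false, q) : Bool × ℝ) ≠ (false, r) := fun e => hqr (by simpa using e)
  by_cases hr : r = y
  · obtain ⟨T1, a1, b1, c1⟩ := slide h hne h2 rfl (by simp)
    simp only [Bool.not_false, co_true] at b1
    have c2 : cnt (RR T) true x = 2 := by
      have : 0 < cnt (RR T) true x := cnt_pos.2 ⟨_, h2, rfl⟩
      rcases diag_cnt.1 hD true x with h | h
      · omega
      · exact h
    obtain ⟨w, hw, hwq⟩ := Finset.exists_mem_ne (by rw [← cnt, c2]; norm_num : 1 < ((RR T).filter (co true · = x)).card) (x, q)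
    obtain ⟨hwR, hwx⟩ := Finset.mem_filter.1 hw
    change w.1 = x at hwx
    have wr : w.2 ≠ r := fun e => h4 (by rw [← hr, ← hwx, ← e]; exact hwR)
    have wq : w.2 ≠ q := fun e => hwq (Prod.ext hwx e)
    obtain ⟨T2, a2, b2, c2⟩ := slide b1 (by simp) (c1 ▸ hwR) hwx
      (fun e => wr (by simpa using e))
    exact ⟨T2, w.2, r, a1.trans a2, b2, wr, c2.trans c1, wq, hqr.symm⟩
  · obtain ⟨T1, a1, b1, c1⟩ := slide h hne h3 rfl (by simp)
    simp only [Bool.not_false, co_true] at b1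
    obtain ⟨T2, a2, b2, c2⟩ := slide b1 (by simp) (c1 ▸ h1) rfl
      (fun e => hr (by simpa using e.symm))
    exact ⟨T2, y, r, a1.trans a2, b2, Ne.symm hr, c2.trans c1, hy, hqr.symm⟩

theorem avoid {T x y x' y'} (h : ThetaOK T) (hy : y ≠ y')
    (hD : IsDiagram (RR T)) (h1 : (x', y) ∈ RR T) (h2 : (x, y') ∈ RR T) (h3 : (x', y') ∈ RR T)
    (h4 : (x, y) ∉ RR T) :
    ∃ T' q r, ThetaEquiv T T' ∧ OK2 T' {(false, q), (false, r)} ∧ q ≠ r ∧ RR T' = RR T ∧ q ≠ y' ∧ r ≠ y' := by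
  obtain ⟨T1, q, r, a, b, c, d⟩ := hor h
  rw [← d] at hD h1 h2 h3 h4
  by_cases hq : q = y'
  · obtain ⟨T2, q', r', e1, e2, e3, e4, e5⟩ := avoid1 b c hy hD h1 h2 h3 h4 hq
    exact ⟨T2, q', r', a.trans e1, e2, e3, e4.trans d, e5⟩
  by_cases hr : r = y'
  · rw [Set.pair_comm] at b
    obtain ⟨T2, q', r', e1, e2, e3, e4, e5⟩ := avoid1 b c.symm hy hD h1 h2 h3 h4 hr
    exact ⟨T2, q', r', a.trans e1, e2, e3, e4.trans d, e5⟩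
  exact ⟨T1, q, r, a, b, c, d, hq, hr⟩


def Res (T : Theta) (R' : Finset Pt) : Prop := ∃ T', ThetaOK T' ∧ ThetaEquiv T T' ∧ RR T' = R'

theorem Res.tr {T R'} (h : Res T.tr (R'.image tau)) : Res T R' := by
  obtain ⟨T', h1, h2, h3⟩ := h
  refine ⟨T'.tr, ok_tr h1, ?_, ?_⟩
  · have := h2.tr; rwa [tr_tr] at this
  · rw [RR_tr, h3, image_tau_tau]

theorem RU {T : Theta} {p} (h : p ∈ RR T) : p ∈ T.U := U_RR.2 (Or.inr h)

theorem cycV {T x0 x1} (hT : ThetaOK T) (hx0 : ∃ p ∈ RR T, p.1 = x0)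
    (h : ((∀ p ∈ RR T, x0 ≤ p.1) ∧ ∀ p ∈ RR T, p.1 ≠ x0 → p.1 < x1) ∨
      ((∀ p ∈ RR T, p.1 ≤ x0) ∧ ∀ p ∈ RR T, p.1 ≠ x0 → x1 < p.1)) :
    Res T ((RR T).image (vmap x0 x1)) := by
  obtain ⟨M, hM⟩ : ∃ M : ℝ, ∀ p ∈ T.U, |p.1| < M := by
    obtain ⟨M, hM⟩ := (T.U.image (fun p => |p.1|)).finite_toSet.bddAbove
    refine ⟨M + 1, fun p hp => ?_⟩
    have := hM (Finset.mem_coe.2 (Finset.mem_image_of_mem (fun p : Pt => |p.1|) hp))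
    linarith
  obtain ⟨p0, hp0, rfl⟩ := hx0
  have m0 := abs_lt.1 (hM p0 (RU hp0))
  rcases h with ⟨h1, h2⟩ | ⟨h1, h2⟩
  · have e1 := rot _ T p0.1 (fun s => s + 2 * M) rfl hT
      (by intro p hp _; have := abs_lt.1 (hM p hp); linarith)
      (by intro p hp q hq _; have := abs_lt.1 (hM p hp); have := abs_lt.1 (hM q hq); linarith)
      (by intro p hp q hq _ _ h; linarith)
    set f : ℝ → ℝ := fun s => if s ≤ p0.1 then s + 2 * M else s with hf
    obtain ⟨ψ, e2, e3⟩ := isoR (e1.ok hT) ((RR T).image (hx f)) (φ := fun s => if s = p0.1 + 2 * M then x1 else s) (by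
      simp only [Finset.forall_mem_image, hx_1, hf]
      intro p hp q hq
      have ap := abs_lt.1 (hM p (RU hp))
      have aq := abs_lt.1 (hM q (RU hq))
      have bp := h1 p hp
      have bq := h1 q hq
      have cp := h2 p hp
      have cq := h2 q hq
      grind)
    refine ⟨_, e2.ok (e1.ok hT), Eq0.equiv (e1.trans e2), ?_⟩
    rw [RR_map, RR_map, Finset.image_image]
    apply Finset.image_congr
    intro p hp
    have hp : p ∈ RR T := hp
    have ap := abs_lt.1 (hM p (RU hp))
    have bp := h1 p hp
    have := e3 _ (Finset.mem_image_of_mem _ hp)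
    simp only [hx_1] at this
    simp only [Function.comp, vmap_hx]
    unfold hx
    simp only [Prod.mk.injEq, and_true]
    rw [this]; simp only [hf]
    grind
  · have e1 := rotL T p0.1 (fun s => s - 2 * M) hT
      (by intro p hp _; have := abs_lt.1 (hM p hp); linarith)
      (by intro p hp q hq _; have := abs_lt.1 (hM p hp); have := abs_lt.1 (hM q hq); linarith)
      (by intro p hp q hq _ _ h; linarith)
    set f : ℝ → ℝ := fun s => if p0.1 ≤ s then s - 2 * M else s with hf
    obtain ⟨ψ, e2, e3⟩ := isoR (e1.ok hT) ((RR T).image (hx f)) (φ := fun s => if s = p0.1 - 2 * M then x1 else s) (by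
      simp only [Finset.forall_mem_image, hx_1, hf]
      intro p hp q hq
      have ap := abs_lt.1 (hM p (RU hp))
      have aq := abs_lt.1 (hM q (RU hq))
      have bp := h1 p hp
      have bq := h1 q hq
      have cp := h2 p hp
      have cq := h2 q hq
      grind)
    refine ⟨_, e2.ok (e1.ok hT), Eq0.equiv (e1.trans e2), ?_⟩
    rw [RR_map, RR_map, Finset.image_image]
    apply Finset.image_congr
    intro p hp
    have hp : p ∈ RR T := hp
    have ap := abs_lt.1 (hM p (RU hp))
    have bp := h1 p hp
    have := e3 _ (Finset.mem_image_of_mem _ hp)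
    simp only [hx_1] at this
    simp only [Function.comp, vmap_hx]
    unfold hx
    simp only [Prod.mk.injEq, and_true]
    rw [this]; simp only [hf]
    grind

theorem col2 {R : Finset Pt} {x} (hR : IsDiagram R) (h : ∃ p ∈ R, p.1 = x) :
    ∃ a b, a < b ∧ (x, a) ∈ R ∧ (x, b) ∈ R ∧ ∀ p ∈ R, p.1 = x → p.2 = a ∨ p.2 = b := by
  obtain ⟨p, hp, rfl⟩ := h
  obtain ⟨u, v, huv, e⟩ := Finset.card_eq_two.1 (hR p hp).1
  have hm : ∀ q, (q ∈ R ∧ q.1 = p.1) ↔ q = u ∨ q = v := by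
    intro q
    have : q ∈ R.filter (fun q => q.1 = p.1) ↔ q = u ∨ q = v := by rw [e]; simp
    rwa [Finset.mem_filter] at this
  have hu := (hm u).2 (Or.inl rfl)
  have hv := (hm v).2 (Or.inr rfl)
  have u1 : (p.1, u.2) ∈ R := by rw [← hu.2]; exact hu.1
  have v1 : (p.1, v.2) ∈ R := by rw [← hv.2]; exact hv.1
  have ne : u.2 ≠ v.2 := fun h => huv (Prod.ext (hu.2.trans hv.2.symm) h)
  rcases lt_or_gt_of_ne ne with h | h
  · refine ⟨u.2, v.2, h, u1, v1, fun q hq e => ?_⟩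
    rcases (hm q).1 ⟨hq, e⟩ with rfl | rfl <;> simp
  · refine ⟨v.2, u.2, h, v1, u1, fun q hq e => ?_⟩
    rcases (hm q).1 ⟨hq, e⟩ with rfl | rfl <;> simp

theorem comV0 {T x1 x2} (hT : ThetaOK T) (hD : IsDiagram (RR T)) (hlt : x1 < x2)
    (r1 : ∃ p ∈ RR T, p.1 = x1) (r2 : ∃ p ∈ RR T, p.1 = x2)
    (hb : ∀ p ∈ RR T, ¬ (x1 < p.1 ∧ p.1 < x2))
    (hni : NI (RR T) x1 x2) : Res T ((RR T).image (swapv x1 x2)) := by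
  obtain ⟨T1, q, r, t1, o1, -, s1⟩ := hor hT
  rw [← s1] at hD r1 r2 hb hni ⊢
  have nE : ∀ x, (true, x) ∉ ({(false, q), (false, r)} : Set (Bool × ℝ)) := by intro x; simp
  obtain ⟨a1, b1, l1, ma1, mb1, u1⟩ := col2 hD r1
  obtain ⟨a2, b2, l2, ma2, mb2, u2⟩ := col2 hD r2
  have n1 := hni a1 b1 a2 b2 ma1 mb1 ma2 mb2
  have n2 := hni b1 a1 b2 a2 mb1 ma1 mb2 ma2
  have n3 := hni a1 b1 b2 a2 ma1 mb1 mb2 ma2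
  have n4 := hni b1 a1 a2 b2 mb1 ma1 ma2 mb2
  have st : ∃ T', Eq0 T1 T' ∧ Same T1 T' ∧ OK2 T' {(false, q), (false, r)} ∧ ∀ p ∈ T'.U, ¬ Bw x1 x2 p.1 := by
    by_cases hc : (a2 ≤ a1 ∧ a1 < b2) ∨ (a2 ≤ b1 ∧ b1 < b2)
    · refine strip' o1 hlt (nE _) (nE _) r1 r2 hb l1 u1 ?_ ?_
      · intro p hp e h
        rcases u2 p hp e with h' | h' <;> grind
      · intro h; exact absurd rfl (hni a1 a1 a1 a1 ma1 ma1 h h).1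
    · refine strip ⟨o1, hlt, nE _, nE _, r1, r2, hb, l2, u2, ?_, ?_⟩
      · intro p hp e h
        rcases u1 p hp e with h' | h' <;> grind
      · intro h; exact absurd rfl (hni b2 b2 b2 b2 h h mb2 mb2).1
  obtain ⟨T2, e2, s2, o2, hb2⟩ := st
  rw [← s2.RR] at r1 r2 hni ⊢
  have onR : ∀ p ∈ T2.U, ∀ x, (∃ p ∈ RR T2, p.1 = x) → p.1 = x → p ∈ RR T2 := by
    rintro p hp x ⟨q, hq, e⟩ e'
    rcases U_RR.1 hp with h | h
    · exact absurd (o2.aR h hq (d := true) (e'.trans e.symm)) (nE _)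
    · exact h
  have e3 := commV o2.ok hlt.ne (by obtain ⟨p, hp, h⟩ := r1; exact ⟨p, RU hp, h⟩)
    (by obtain ⟨p, hp, h⟩ := r2; exact ⟨p, RU hp, h⟩) hb2 (by
      intro y y' z z' h1 h2 h3 h4
      exact hni y y' z z' (onR _ h1 _ r1 rfl) (onR _ h2 _ r1 rfl) (onR _ h3 _ r2 rfl) (onR _ h4 _ r2 rfl))
  exact ⟨_, e3.ok o2.ok, t1.trans (Eq0.equiv (e2.trans e3)), RR_map _ _⟩

theorem comV {T x1 x2} (hT : ThetaOK T) (hD : IsDiagram (RR T)) (hne : x1 ≠ x2)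
    (r1 : ∃ p ∈ RR T, p.1 = x1) (r2 : ∃ p ∈ RR T, p.1 = x2)
    (hb : ∀ p ∈ RR T, ¬ (min x1 x2 < p.1 ∧ p.1 < max x1 x2))
    (hd : ∀ p ∈ RR T, ∀ q ∈ RR T, p.1 = x1 → q.1 = x2 → p.2 ≠ q.2)
    (hni : NoInterleaveV (RR T) x1 x2) : Res T ((RR T).image (swapv x1 x2)) := by
  have ni : NI (RR T) x1 x2 := by
    intro y y' z z' h1 h2 h3 h4
    have := hni _ h1 _ h2 _ h3 _ h4 rfl rfl rfl rfl
    rw [not_or] at this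
    exact ⟨hd _ h1 _ h3 rfl rfl, this⟩
  rcases lt_or_gt_of_ne hne with h | h
  · rw [min_eq_left h.le, max_eq_right h.le] at hb
    exact comV0 hT hD h r1 r2 hb ni
  · rw [min_eq_right h.le, max_eq_left h.le] at hb
    have e : swapv x1 x2 = swapv x2 x1 := by
      funext p; unfold swapv; split_ifs <;> simp_all
    rw [e]
    refine comV0 hT hD h r2 r1 hb ?_
    intro y y' z z' h1 h2 h3 h4
    have := ni z z' y y' h3 h4 h1 h2
    exact ⟨this.1.symm, this.2.2, this.2.1⟩

theorem near (F : Finset ℝ) {x x' : ℝ} (h : x ≠ x') : ∃ s, Bw x x' s ∧ ∀ f ∈ F, ¬ Bw x s f ∧ f ≠ s := by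
  rcases lt_or_gt_of_ne h with h | h
  · obtain ⟨s, h1, h2, h3⟩ := exNearR F h
    refine ⟨s, Or.inl ⟨h1, h2⟩, fun f hf => ⟨?_, ?_⟩⟩
    · rintro (h | h)
      · exact h3 f hf ⟨h.2.le, h.1⟩
      · linarith
    · rintro rfl; exact h3 f hf ⟨le_rfl, h1⟩
  · obtain ⟨s, h1, h2, h3⟩ := exNear F h
    refine ⟨s, Or.inr ⟨h1, h2⟩, fun f hf => ⟨?_, ?_⟩⟩
    · rintro (h | h)
      · linarith
      · exact h3 f hf ⟨h.1.le, h.2⟩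
    · rintro rfl; exact h3 f hf ⟨le_rfl, h2⟩

theorem near_mono {x x' s u v : ℝ} (hs : Bw x x' s) (hu : u = s ∨ (u ≠ x' ∧ ¬ Bw x x' u)) (hv : v = s ∨ (v ≠ x' ∧ ¬ Bw x x' v))
    (huv : u < v) : (if u = s then x' else u) < (if v = s then x' else v) := by
  unfold Bw at *
  grind

theorem stabR {T R' x y x' y'} (hT : ThetaOK T) (h : StabData x y x' y' (RR T) R')
    (hI : 0 < (x - x') * (y - y')) : Res T R' := by
  obtain ⟨hxy, hx', hy', fx, fy, bx, byy, rfl⟩ := h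
  obtain ⟨i, i0, hi⟩ := mem_RR.1 hxy
  obtain ⟨s, s1, s2⟩ := near (T.U.image Prod.fst) hx'
  obtain ⟨t, t1, t2⟩ := near (T.U.image Prod.snd) hy'
  replace s2 : ∀ p ∈ T.U, ¬ Bw x s p.1 ∧ p.1 ≠ s := fun p hp => s2 _ (Finset.mem_image_of_mem _ hp)
  replace t2 : ∀ p ∈ T.U, ¬ Bw y t p.2 ∧ p.2 ≠ t := fun p hp => t2 _ (Finset.mem_image_of_mem _ hp)
  have xs : x ≠ s := by rintro rfl; exact absurd rfl (s2 _ (RU hxy)).2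
  have yt : y ≠ t := by rintro rfl; exact absurd rfl (t2 _ (RU hxy)).2
  have hI' : 0 < (x - s) * (y - t) := by
    unfold Bw at s1 t1
    rcases mul_pos_iff.1 hI with h | h
    · exact mul_pos (by rcases s1 with k | k <;> linarith) (by rcases t1 with k | k <;> linarith)
    · exact mul_pos_of_neg_of_neg (by rcases s1 with k | k <;> linarith) (by rcases t1 with k | k <;> linarith)
  obtain ⟨T1, hu⟩ := upd_ex s t hi
  have m1 : Eq0 T T1 := .single (Or.inr (Or.inr (Or.inl (stab_step hT hu
    ⟨fun p hp => (s2 p hp).2, fun p hp => (t2 p hp).2⟩ (fun p hp => (s2 p hp).1) (fun p hp => (t2 p hp).1) hI'))))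
  have RR1 : RR T1 = stabSet x y s t (RR T) := by
    ext p
    rw [mem_RR]
    have n : ∀ j, j ≠ i → (x, y) ∉ T.pt j := fun j hj => (ok2_of hT).disj i j hj.symm _ hi
    simp only [stabSet, Finset.mem_insert, Finset.mem_erase, mem_RR]
    constructor
    · rintro ⟨j, j0, hj⟩
      by_cases e : j = i
      · subst e
        rw [hu.2.1] at hj
        simp only [stabSet, Finset.mem_insert, Finset.mem_erase] at hj
        rcases hj with h | h | h | h
        · exact Or.inl h
        · exact Or.inr (Or.inl h)
        · exact Or.inr (Or.inr (Or.inl h))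
        · exact Or.inr (Or.inr (Or.inr ⟨h.1, j, j0, h.2⟩))
      · rw [hu.2.2 j e] at hj
        exact Or.inr (Or.inr (Or.inr ⟨fun h => n j e (h ▸ hj), j, j0, hj⟩))
    · have k : ∀ p, p ∈ stabSet x y s t (T.pt i) → ∃ j, j ≠ 0 ∧ p ∈ T1.pt j :=
        fun p hp => ⟨i, i0, by rw [hu.2.1]; exact hp⟩
      rintro (h | h | h | ⟨h, j, j0, hj⟩)
      · exact k p (by simp [stabSet, h])
      · exact k p (by simp [stabSet, h])
      · exact k p (by simp [stabSet, h])
      · by_cases e : j = i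
        · subst e; exact k p (by simp [stabSet, h, hj])
        · exact ⟨j, j0, by rw [hu.2.2 j e]; exact hj⟩
  have c1 : ∀ p ∈ RR T1, p.1 = s ∨ (p.1 ≠ x' ∧ ¬ Bw x x' p.1) := by
    intro p hp
    have k : ∀ p ∈ RR T, p.1 ≠ x' ∧ ¬ Bw x x' p.1 := fun p hp => ⟨fx p hp, fun h => bx p hp (bw_iff.2 h)⟩
    rw [RR1] at hp
    simp only [stabSet, Finset.mem_insert, Finset.mem_erase] at hp
    rcases hp with rfl | rfl | rfl | h
    · exact Or.inl rfl
    · exact Or.inr (k (x, y) hxy)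
    · exact Or.inl rfl
    · exact Or.inr (k _ h.2)
  have c2 : ∀ p ∈ RR T1, p.2 = t ∨ (p.2 ≠ y' ∧ ¬ Bw y y' p.2) := by
    intro p hp
    have k : ∀ p ∈ RR T, p.2 ≠ y' ∧ ¬ Bw y y' p.2 := fun p hp => ⟨fy p hp, fun h => byy p hp (bw_iff.2 h)⟩
    rw [RR1] at hp
    simp only [stabSet, Finset.mem_insert, Finset.mem_erase] at hp
    rcases hp with rfl | rfl | rfl | h
    · exact Or.inr (k (x, y) hxy)
    · exact Or.inl rfl
    · exact Or.inl rfl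
    · exact Or.inr (k _ h.2)
  obtain ⟨ψ, e2, g2⟩ := isoR (m1.ok hT) (RR T1) (φ := fun u => if u = s then x' else u)
    (fun p hp q hq h => near_mono s1 (c1 p hp) (c1 q hq) h)
  have ok2 := e2.ok (m1.ok hT)
  obtain ⟨χ, e3, g3⟩ := isoR_h ok2 (RR (mapTheta (hx ψ) T1)) (φ := fun u => if u = t then y' else u) (by
    rw [RR_map]
    simp only [Finset.forall_mem_image, hx_2]
    exact fun p hp q hq h => near_mono t1 (c2 p hp) (c2 q hq) h)
  refine ⟨_, e3.ok ok2, Eq0.equiv (m1.trans (e2.trans e3)), ?_⟩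
  have val : ∀ p ∈ RR T1, hy χ (hx ψ p) = (if p.1 = s then x' else p.1, if p.2 = t then y' else p.2) := by
    intro p hp
    have := g3 (hx ψ p) (by rw [RR_map]; exact Finset.mem_image_of_mem _ hp)
    unfold hy
    rw [this, hx_1, g2 p hp, hx_2]
  have im : RR (mapTheta (hy χ) (mapTheta (hx ψ) T1)) = (RR T1).image
      (fun p => (if p.1 = s then x' else p.1, if p.2 = t then y' else p.2)) := by
    rw [RR_map, RR_map, Finset.image_image]
    exact Finset.image_congr (fun p hp => val p hp)
  rw [im, RR1]
  unfold stabSet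
  rw [Finset.image_insert, Finset.image_insert, Finset.image_insert]
  have id' : ((RR T).erase (x, y)).image (fun p => ((if p.1 = s then x' else p.1, if p.2 = t then y' else p.2) : Pt)) =
      (RR T).erase (x, y) := by
    conv_rhs => rw [← Finset.image_id (s := (RR T).erase (x, y))]
    apply Finset.image_congr
    intro p hp
    have hp : p ∈ (RR T).erase (x, y) := hp
    have hp := RU (Finset.mem_of_mem_erase hp)
    simp [(s2 p hp).2, (t2 p hp).2]
  rw [id']
  simp [xs, yt]

def mkT (f : Fin 4 → Finset Pt) : Theta := ⟨f 0, f 1, f 2, f 3⟩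
theorem mkT_pt (f : Fin 4 → Finset Pt) (i) : (mkT f).pt i = f i := by
  fin_cases i <;> rfl

theorem Bw.symm {s t v} (h : Bw s t v) : Bw t s v := Or.symm h

theorem destabR {T R' x y x' y'} (hT : ThetaOK T) (hD : IsDiagram (RR T))
    (h : StabData x y x' y' R' (RR T)) (hI : 0 < (x - x') * (y - y')) : Res T R' := by
  obtain ⟨hxy, hx', hy', fx, fy, bx, byy, hR⟩ := h
  replace bx : ∀ p ∈ R', ¬ Bw x x' p.1 := fun p hp h => bx p hp (bw_iff.2 h)
  replace byy : ∀ p ∈ R', ¬ Bw y y' p.2 := fun p hp h => byy p hp (bw_iff.2 h)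
  have mR : ∀ p, p ∈ RR T ↔ p = (x', y) ∨ p = (x, y') ∨ p = (x', y') ∨ (p ≠ (x, y) ∧ p ∈ R') := by
    intro p; rw [hR, mem_stab]
  have h1 : (x', y) ∈ RR T := (mR _).2 (Or.inl rfl)
  have h2 : (x, y') ∈ RR T := (mR _).2 (Or.inr (Or.inl rfl))
  have h3 : (x', y') ∈ RR T := (mR _).2 (Or.inr (Or.inr (Or.inl rfl)))
  have h4 : (x, y) ∉ RR T := by
    rw [mR]; simp [hx', hy']
  obtain ⟨T1, q, r, t1, o1, -, s1, q1, r1⟩ := avoid hT hy' hD h1 h2 h3 h4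
  clear hD hR
  rw [← s1] at h1 h2 h3 h4 mR
  have nE : ∀ x, (true, x) ∉ ({(false, q), (false, r)} : Set (Bool × ℝ)) := by intro x; simp
  have nE' : (false, y') ∉ ({(false, q), (false, r)} : Set (Bool × ℝ)) := by simp [q1.symm, r1.symm]
  generalize ({(false, q), (false, r)} : Set (Bool × ℝ)) = E at o1 nE nE'
  have cx' : ∀ p ∈ RR T1, p.1 = x' → p.2 = y ∨ p.2 = y' := by
    intro p hp e
    rcases (mR p).1 hp with rfl | rfl | rfl | ⟨-, h⟩
    · exact Or.inl rfl
    · exact absurd e hx'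
    · exact Or.inr rfl
    · exact absurd e (fx p h)
  have cy' : ∀ p ∈ RR T1, p.2 = y' → p.1 = x ∨ p.1 = x' := by
    intro p hp e
    rcases (mR p).1 hp with rfl | rfl | rfl | ⟨-, h⟩
    · exact absurd e hy'
    · exact Or.inl rfl
    · exact Or.inr rfl
    · exact absurd e (fy p h)
  have cx : ∀ p ∈ RR T1, p.1 = x → p.2 ≠ y ∧ ¬ Bw y y' p.2 := by
    intro p hp e
    rcases (mR p).1 hp with rfl | rfl | rfl | ⟨h0, h⟩
    · exact absurd e.symm hx'
    · refine ⟨hy'.symm, ?_⟩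
      rintro (h | h)
      · exact absurd h.2 (lt_irrefl _)
      · exact absurd h.1 (lt_irrefl _)
    · exact absurd e.symm hx'
    · exact ⟨fun h' => h0 (Prod.ext e h'), byy p h⟩
  have bR : ∀ p ∈ RR T1, ¬ Bw x x' p.1 := by
    intro p hp
    have b1 : ¬ Bw x x' x' := by rintro (h | h) <;> linarith [h.1, h.2]
    rcases (mR p).1 hp with rfl | rfl | rfl | ⟨h0, h⟩
    · exact b1
    · exact bx (x, y) hxy
    · exact b1
    · exact bx p h
  have bR2 : ∀ p ∈ RR T1, ¬ Bw y y' p.2 := by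
    intro p hp
    have b1 : ¬ Bw y y' y' := by rintro (h | h) <;> linarith [h.1, h.2]
    rcases (mR p).1 hp with rfl | rfl | rfl | ⟨h0, h⟩
    · exact byy (x, y) hxy
    · exact b1
    · exact b1
    · exact byy p h
  have st : ∃ T', Eq0 T1 T' ∧ Same T1 T' ∧ OK2 T' E ∧ ∀ p ∈ T'.U, ¬ Bw x x' p.1 := by
    rcases mul_pos_iff.1 hI with h | h
    · obtain ⟨T', k1, k2, k3, k4⟩ := strip' o1 (show x' < x by linarith) (nE _) (nE _) ⟨_, h1, rfl⟩ ⟨_, h2, rfl⟩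
        (fun p hp h' => bR p hp (Or.inr h')) (show y' < y by linarith)
        (fun p hp e => (cx' p hp e).symm)
        (fun p hp e hh => (cx p hp e).2 (Or.inr ⟨hh.1, lt_of_le_of_ne hh.2 (cx p hp e).1⟩))
        (fun _ => nE')
      exact ⟨T', k1, k2, k3, fun p hp h => k4 p hp h.symm⟩
    · exact strip ⟨o1, by linarith, nE _, nE _, ⟨_, h2, rfl⟩, ⟨_, h1, rfl⟩,
        fun p hp h' => bR p hp (Or.inl h'), show y < y' by linarith, cx',
        fun p hp e hh => (cx p hp e).2 (Or.inl ⟨lt_of_le_of_ne hh.1 (cx p hp e).1.symm, hh.2⟩),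
        fun _ => nE'⟩
  obtain ⟨T2, e2, s2, o2, b2⟩ := st
  rw [← s2.RR] at h1 h2 h3 h4 mR cx' cy' cx bR2
  clear bR
  -- points of `a` avoid the lines x, x', y'
  have ax : ∀ p ∈ T2.a, p.1 ≠ x := fun p hp e => nE _ (o2.aR hp h2 (d := true) e)
  have ax' : ∀ p ∈ T2.a, p.1 ≠ x' := fun p hp e => nE _ (o2.aR hp h1 (d := true) e)
  have ay' : ∀ p ∈ T2.a, p.2 ≠ y' := fun p hp e => nE' (by
    have := o2.aR hp h2 (d := false) e
    rw [show co false p = y' from e] at this; exact this)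
  -- common part
  obtain ⟨i, i0, hi⟩ := mem_RR.1 h3
  have same : ∀ w d, w ∈ RR T2 → co d w = co d ((x', y') : Pt) → (d, co d ((x', y') : Pt)) ∉ E → w ∈ T2.pt i := by
    intro w d hw e hE
    obtain ⟨j, j0, hj⟩ := mem_RR.1 hw
    by_cases e' : i = j
    · rw [e']; exact hj
    · exact absurd (o2.cross i j e' _ hi w hj d e.symm).1 hE
  have i1 : (x', y) ∈ T2.pt i := same _ true h1 rfl (nE _)
  have i2 : (x, y') ∈ T2.pt i := same _ false h2 rfl nE'
  let X : Finset Pt := insert (x, y) ((((T2.pt i).erase (x', y)).erase (x, y')).erase (x', y'))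
  let T4 : Theta := mkT (Function.update T2.pt i X)
  have p4i : T4.pt i = X := by rw [mkT_pt, Function.update_self]
  have p4j : ∀ j, j ≠ i → T4.pt j = T2.pt j := by
    intro j hj; rw [mkT_pt, Function.update_of_ne hj]
  have mX : ∀ p, p ∈ X ↔ p = (x, y) ∨ (p ≠ (x', y') ∧ p ≠ (x, y') ∧ p ≠ (x', y) ∧ p ∈ T2.pt i) := by
    intro p; simp only [X, Finset.mem_insert, Finset.mem_erase]
  have a4 : T4.a = T2.a := p4j 0 i0.symm
  have xyi : (x, y) ∉ T2.pt i := fun h => h4 (mem_RR.2 ⟨i, i0, h⟩)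
  have hu : Upd T4 T2 i x y x' y' := by
    refine ⟨by rw [p4i, mX]; exact Or.inl rfl, ?_, fun j hj => (p4j j hj).symm⟩
    ext p
    rw [mem_stab, p4i, mX]
    constructor
    · intro hp
      by_cases k1 : p = (x', y)
      · exact Or.inl k1
      by_cases k2 : p = (x, y')
      · exact Or.inr (Or.inl k2)
      by_cases k3 : p = (x', y')
      · exact Or.inr (Or.inr (Or.inl k3))
      · exact Or.inr (Or.inr (Or.inr ⟨fun e => xyi (e ▸ hp), Or.inr ⟨k3, k2, k1, hp⟩⟩))
    · rintro (rfl | rfl | rfl | ⟨k, k' | k'⟩)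
      · exact i1
      · exact i2
      · exact hi
      · exact absurd k' k
      · exact k'.2.2.2
  have R4 : RR T4 = R' := by
    have n' : (x', y) ∉ R' ∧ (x, y') ∉ R' ∧ (x', y') ∉ R' :=
      ⟨fun h => fx _ h rfl, fun h => fy _ h rfl, fun h => fy _ h rfl⟩
    ext p
    rw [mem_RR]
    constructor
    · rintro ⟨j, j0, hj⟩
      by_cases e : j = i
      · subst e
        rw [p4i, mX] at hj
        rcases hj with rfl | ⟨k1, k2, k3, k4⟩
        · exact hxy
        · rcases (mR p).1 (mem_RR.2 ⟨_, j0, k4⟩) with h | h | h | h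
          · exact absurd h k3
          · exact absurd h k2
          · exact absurd h k1
          · exact h.2
      · rw [p4j j e] at hj
        rcases (mR p).1 (mem_RR.2 ⟨_, j0, hj⟩) with h | h | h | h
        · rw [h] at hj; exact absurd hj (o2.disj i j (Ne.symm e) _ i1)
        · rw [h] at hj; exact absurd hj (o2.disj i j (Ne.symm e) _ i2)
        · rw [h] at hj; exact absurd hj (o2.disj i j (Ne.symm e) _ hi)
        · exact h.2
    · intro hp
      by_cases e : p = (x, y)
      · exact ⟨i, i0, by rw [p4i, mX]; exact Or.inl e⟩
      · obtain ⟨j, j0, hj⟩ := mem_RR.1 ((mR p).2 (Or.inr (Or.inr (Or.inr ⟨e, hp⟩))))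
        by_cases e' : j = i
        · subst e'
          refine ⟨j, j0, ?_⟩
          rw [p4i, mX]
          exact Or.inr ⟨fun h => n'.2.2 (h ▸ hp), fun h => n'.2.1 (h ▸ hp), fun h => n'.1 (h ▸ hp), hj⟩
        · exact ⟨j, j0, by rw [p4j j e']; exact hj⟩
  have mU4 : ∀ p ∈ T4.U, p ∈ T2.a ∨ p ∈ R' := by
    intro p hp
    rw [U_RR, R4, a4] at hp; exact hp
  have fr1 : ∀ p ∈ T4.U, p.1 ≠ x' := fun p hp => (mU4 p hp).elim (ax' p) (fx p)
  have fr2 : ∀ p ∈ T4.U, p.2 ≠ y' := fun p hp => (mU4 p hp).elim (ay' p) (fy p)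
  have o4 : OK2 T4 E := by
    refine o2.unstab hu ⟨fr1, fr2⟩ ?_
    intro j hj hh
    rw [p4j j hj] at hh
    by_cases j0 : j = 0
    · subst j0; exact ax _ hh rfl
    · exact h4 (mem_RR.2 ⟨j, j0, hh⟩)
  obtain ⟨t, t1', t2⟩ := near ((T2.U ∪ T4.U).image Prod.snd) hy'
  replace t2 : ∀ p ∈ T2.U ∪ T4.U, ¬ Bw y t p.2 ∧ p.2 ≠ t := fun p hp => t2 _ (Finset.mem_image_of_mem _ hp)
  have ty' : y' ≠ t := by
    rintro rfl
    exact absurd rfl (t2 _ (Finset.mem_union_left _ (RU h2))).2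
  have e3 : Eq0 T2 (mapTheta (hmap y' t) T2) := by
    apply hm o2.ok ty' (fun p hp => (t2 p (Finset.mem_union_left _ hp)).2)
    intro p hp hb u u' z z' hu1 hu2 hz1 hz2
    have hb' : Bw y y' p.2 := by unfold Bw at hb t1' ⊢; grind
    have row : ∀ u, (u, y') ∈ T2.U → u = x ∨ u = x' := by
      intro u hu
      rcases U_RR.1 hu with h | h
      · exact absurd rfl (ay' _ h)
      · exact cy' _ h rfl
    have row2 : ∀ z, (z, p.2) ∈ T2.U → z ≠ x ∧ z ≠ x' := by
      intro z hz
      rcases U_RR.1 hz with h | h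
      · exact ⟨ax _ h, ax' _ h⟩
      · exact absurd hb' (bR2 (z, p.2) h)
    have b3 : ∀ z, (z, p.2) ∈ T2.U → ¬ Bw x x' z := fun z hz => b2 _ hz
    have k1 := row _ hu1
    have k2 := row _ hu2
    have k3 := row2 _ hz1
    have k4 := row2 _ hz2
    have k5 := b3 _ hz1
    have k6 := b3 _ hz2
    clear * - k1 k2 k3 k4 k5 k6
    unfold Bw at k5 k6
    grind
  have hu3 := upd_hmap (m := t) hu hy' fr2
  have hI' : 0 < (x - x') * (y - t) := by
    unfold Bw at t1'
    rcases mul_pos_iff.1 hI with h | h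
    · exact mul_pos h.1 (by rcases t1' with k | k <;> linarith)
    · exact mul_pos_of_neg_of_neg h.1 (by rcases t1' with k | k <;> linarith)
  have e4 := stab_step o4.ok hu3 ⟨fr1, fun p hp => (t2 p (Finset.mem_union_right _ hp)).2⟩
    (by
      intro p hp
      rcases mU4 p hp with h | h
      · exact b2 p (U_RR.2 (Or.inl h))
      · exact bx p h)
    (fun p hp => (t2 p (Finset.mem_union_right _ hp)).1) hI'
  have e5 : Eq0 (mapTheta (hmap y' t) T2) T4 := .single (Or.inr (Or.inr (Or.inr e4)))
  exact ⟨T4, o4.ok, t1.trans (Eq0.equiv (e2.trans (e3.trans e5))), R4⟩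

theorem move {T R'} (hT : ThetaOK T) (h : LegMove StabType.I (RR T) R') : Res T R' := by
  have tc : ∀ (f g : Pt → Pt) (P : Finset Pt), (∀ p, g (tau p) = tau (f p)) →
      (P.image tau).image g = (P.image f).image tau := by
    intro f g P h
    rw [Finset.image_image, Finset.image_image]
    exact Finset.image_congr (fun p _ => h p)
  rcases h with ⟨-, -, f, hf, rfl⟩ | ⟨hD, -, f, hf, rfl⟩ | ⟨v, -, -, x', y', hs, hI⟩ | ⟨v, -, hD, x', y', hs, hI⟩
  · rcases hf with ⟨x0, x1, h1, h2, rfl⟩ | ⟨y0, y1, h1, h2, rfl⟩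
    · exact cycV hT h1 h2
    · apply Res.tr
      have := cycV (T := T.tr) (x0 := y0) (x1 := y1) (ok_tr hT)
        (by rw [RR_tr]; simpa only [Finset.exists_mem_image, tau_1] using h1)
        (by rw [RR_tr]; simpa only [Finset.forall_mem_image, tau_1] using h2)
      rw [RR_tr, tc (hmap y0 y1)] at this
      · exact this
      · intro p; unfold vmap hmap tau; simp only; split_ifs <;> rfl
  · rcases hf with ⟨x1, x2, h1, h2, h3, h4, h5, h6, rfl⟩ | ⟨x1, x2, h1, h2, h3, h4, h5, h6, rfl⟩
    · exact comV hT hD h1 h2 h3 h4 h5 h6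
    · apply Res.tr
      have := comV (T := T.tr) (x1 := x1) (x2 := x2) (ok_tr hT) (by rw [RR_tr]; exact diag_tau hD) h1
        (by rw [RR_tr]; simpa only [Finset.exists_mem_image, tau_1] using h2)
        (by rw [RR_tr]; simpa only [Finset.exists_mem_image, tau_1] using h3)
        (by rw [RR_tr]; simpa only [Finset.forall_mem_image, tau_1] using h4)
        (by rw [RR_tr]; simpa only [Finset.forall_mem_image, tau_1, tau_2] using h5)
        (by rw [RR_tr]; unfold NoInterleaveV; unfold NoInterleaveH at h6; simpa only [Finset.forall_mem_image, tau_1, tau_2] using h6)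
      rw [RR_tr, tc (swaph x1 x2)] at this
      · exact this
      · intro p; unfold swapv swaph tau; simp only; split_ifs <;> rfl
  · exact stabR hT hs (hI.1 rfl)
  · exact destabR hT hD hs (hI.1 rfl)

theorem main {T R R'} (h : LegEquiv R R') (hT : ThetaOK T) (hR : RR T = R) : Res T R' := by
  induction h with
  | refl => exact ⟨T, hT, .refl, hR⟩
  | tail _ hm ih =>
    obtain ⟨T1, a, b, rfl⟩ := ih
    obtain ⟨T2, c, d, e⟩ := move a hm
    exact ⟨T2, c, b.trans d, e⟩

/-- **Proposition.**  If `R` and `R'` are Legendrian equivalent rectangular diagrams and `α` is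
a rectangular path whose ends lie on edges of `R`, with `R = β ∪ γ ∪ δ` the corresponding
decomposition (`β`, `γ` the two paths into which the ends of `α` divide the component of `R`
containing those edges, `δ` the remaining components), then there are a rectangular path `α'`
with ends on edges of `R'` and a decomposition `R' = β' ∪ γ' ∪ δ'` such that the rectangular
Θ-diagrams `(α, β, γ, δ)` and `(α', β', γ', δ')` are Legendrian equivalent. -/
theorem path_transfers_along_legendrian_equivalence (R R' : Finset Pt)
    (hRR' : LegEquiv R R') (α β γ δ : Finset Pt)
    (hθ : ThetaOK ⟨α, β, γ, δ⟩)
    (hdec : R = β ∪ γ ∪ δ)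
    (hbg : Disjoint β γ) (hbd : Disjoint β δ) (hgd : Disjoint γ δ)
    (hcomp : IsComponent R (β ∪ γ)) :
    ∃ α' β' γ' δ' : Finset Pt, ThetaOK ⟨α', β', γ', δ'⟩ ∧ R' = β' ∪ γ' ∪ δ' ∧
      ThetaEquiv ⟨α, β, γ, δ⟩ ⟨α', β', γ', δ'⟩ := by
  obtain ⟨T', h1, h2, h3⟩ := main (T := ⟨α, β, γ, δ⟩) hRR' hθ (by rw [hdec]; rfl)
  exact ⟨T'.a, T'.b, T'.c, T'.d, h1, h3.symm, h2⟩
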